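/- Let S be a level-2 collapsible pushdown system whose input alphabet Γ contains the symbol ε, let G be its configuration graph and G/ε its ε-contraction, and let L₁,…,L_n be regular languages over Γ. Then the expansion of G/ε by the relations Reach_{L₁},…,Reach_{L_n} is a tree-automatic structure. -/

import Mathlib

namespace CPG

/-! ## Level-2 collapsible pushdown stacks -/

/-- Stack letters: `Sum.inl σ` is a letter with a level-1 link,
`Sum.inr (σ, k)` is a letter with a level-2 link to the substack of width `k`. -/
abbrev Letter (A : Type) := A ⊕ (A × ℕ)

def symOf {A : Type} : Letter A → A
  | Sum.inl a => a
  | Sum.inr (a, _) => a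

def lvlOf {A : Type} : Letter A → ℕ
  | Sum.inl _ => 1
  | Sum.inr _ => 2

abbrev Word (A : Type) := List (Letter A)

/-- A 2-word: a list of words; the last word is the topmost one. -/
abbrev Stack2 (A : Type) := List (Word A)

/-- The initial level-2 stack `⊥₂`. -/
def bottom2 {A : Type} (bot : A) : Stack2 A := [[Sum.inl bot]]

def top2 {A : Type} (s : Stack2 A) : Option (Word A) := s.getLast?

def top1 {A : Type} (s : Stack2 A) : Option (Letter A) := s.getLast?.bind List.getLast?

def symS {A : Type} (s : Stack2 A) : Option A := (top1 s).map symOf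

def lvlS {A : Type} (s : Stack2 A) : Option ℕ := (top1 s).map lvlOf

def lnkS {A : Type} (s : Stack2 A) : Option ℕ :=
  match top1 s, top2 s with
  | some (Sum.inr (_, j)), _ => some j
  | some (Sum.inl _), some w => some (w.length - 1)
  | _, _ => none

def clone2 {A : Type} (s : Stack2 A) : Option (Stack2 A) :=
  (top2 s).map fun w => s ++ [w]

def push1 {A : Type} [DecidableEq A] (bot a : A) (s : Stack2 A) : Option (Stack2 A) :=
  if a = bot then none else (top2 s).map fun w => s.dropLast ++ [w ++ [Sum.inl a]]

def push2 {A : Type} [DecidableEq A] (bot a : A) (s : Stack2 A) : Option (Stack2 A) :=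
  if a = bot then none else
    (top2 s).map fun w => s.dropLast ++ [w ++ [Sum.inr (a, s.length - 1)]]

def pop2 {A : Type} (s : Stack2 A) : Option (Stack2 A) :=
  if 1 < s.length then some s.dropLast else none

def pop1 {A : Type} (s : Stack2 A) : Option (Stack2 A) :=
  match s.getLast? with
  | some w => if 1 < w.length then some (s.dropLast ++ [w.dropLast]) else none
  | none => none

def collapse {A : Type} (s : Stack2 A) : Option (Stack2 A) :=
  match top1 s with
  | some (Sum.inr (_, k)) => if 0 < k then some (s.take k) else none
  | some (Sum.inl _) => pop1 s
  | none => none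

/-- The level-2 stack operations. -/
inductive Op (A : Type) where
  | clone2 | pop1 | pop2 | collapse
  | push1 (a : A) | push2 (a : A)

def applyOp {A : Type} [DecidableEq A] (bot : A) : Op A → Stack2 A → Option (Stack2 A)
  | .clone2 => clone2
  | .pop1 => pop1
  | .pop2 => pop2
  | .collapse => collapse
  | .push1 a => push1 bot a
  | .push2 a => push2 bot a

/-- `Stacks(Σ)` : the smallest set containing `⊥₂` and closed under the operations. -/
inductive IsStack {A : Type} [DecidableEq A] (bot : A) : Stack2 A → Prop where
  | base : IsStack bot (bottom2 bot)
  | step {s t : Stack2 A} (op : Op A) : IsStack bot s → applyOp bot op s = some t →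
      IsStack bot t

/-- Iterated application of a partial stack operation. -/
def iter {A : Type} (f : Stack2 A → Option (Stack2 A)) : ℕ → Stack2 A → Option (Stack2 A)
  | 0, s => some s
  | n + 1, s => (f s).bind (iter f n)

/-- `t` is a substack of `s`: `t = Pop₁ⁿ(Pop₂ᵐ(s))`. -/
def Substack {A : Type} (t s : Stack2 A) : Prop :=
  ∃ n m, (iter pop2 m s).bind (iter pop1 n) = some t

def ProperSubstack {A : Type} (t s : Stack2 A) : Prop := Substack t s ∧ t ≠ s

/-- `s` is a prefix of `t` (`s ⊑ t`). -/
def StackPrefix {A : Type} (s t : Stack2 A) : Prop :=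
  s ≠ [] ∧ s.length ≤ t.length ∧ s.dropLast <+: t ∧
    ∀ j, s.length - 1 ≤ j → j < t.length → s.getLastD [] <+: t.getD j []

/-- `t[s/u]` : the stack obtained from `t` by replacing the prefix `s` by `u`. -/
def substPrefix {A : Type} (t s u : Stack2 A) : Stack2 A :=
  u.dropLast ++
    (t.drop (s.length - 1)).map fun v => u.getLastD [] ++ v.drop (s.getLastD []).length

/-! ## Collapsible pushdown systems and runs -/

/-- A level-2 collapsible pushdown system. -/
structure CPS (Q A Γ : Type) where
  bot : A
  q0 : Q
  Δ : Set (Q × A × Γ × Q × Op A)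

variable {Q A Γ : Type} [DecidableEq A]

/-- A `γ`-labelled transition realized by the operation `op`. -/
def TransOp (S : CPS Q A Γ) (γ : Γ) (op : Op A) (c c' : Q × Stack2 A) : Prop :=
  ∃ σ : A, symS c.2 = some σ ∧ (c.1, σ, γ, c'.1, op) ∈ S.Δ ∧
    applyOp S.bot op c.2 = some c'.2

def Trans (S : CPS Q A Γ) (γ : Γ) (c c' : Q × Stack2 A) : Prop :=
  ∃ op, TransOp S γ op c c'

/-- A run of a collapsible pushdown system (recording configurations, labels and
operations of each step). -/
structure Run (S : CPS Q A Γ) where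
  len : ℕ
  cfg : ℕ → Q × Stack2 A
  lab : ℕ → Γ
  op : ℕ → Op A
  ok : ∀ i, i < len → TransOp S (lab i) (op i) (cfg i) (cfg (i + 1))

def Run.stk {S : CPS Q A Γ} (ρ : Run S) (i : ℕ) : Stack2 A := (ρ.cfg i).2

/-- The word of labels along a run. -/
def Run.labels {S : CPS Q A Γ} (ρ : Run S) : List Γ :=
  List.ofFn fun i : Fin ρ.len => ρ.lab i

/-- `Reach_L`-reachability: a run from `c` to `c'` labelled by a word in `L`. -/
def ReachL (S : CPS Q A Γ) (L : Language Γ) (c c' : Q × Stack2 A) : Prop :=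
  ∃ ρ : Run S, ρ.cfg 0 = c ∧ ρ.cfg ρ.len = c' ∧ ρ.labels ∈ L

/-- Plain reachability. -/
def Reach (S : CPS Q A Γ) (c c' : Q × Stack2 A) : Prop :=
  ∃ ρ : Run S, ρ.cfg 0 = c ∧ ρ.cfg ρ.len = c'

/-! ## ε-contraction -/

def oneLetterLang (γ : Γ) : Language Γ := {[γ]}

def nonEpsLang (eps : Γ) : Language Γ := {w | ∃ γ : Γ, γ ≠ eps ∧ w = [γ]}

/-- The language `{ε}*`. -/
def epsStar (eps : Γ) : Language Γ := KStar.kstar (oneLetterLang eps)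

/-- The language `({ε}*(Γ∖{ε}))*`. -/
def domLang (eps : Γ) : Language Γ :=
  KStar.kstar (epsStar eps * nonEpsLang eps)

/-- The language `{ε}*γ`. -/
def edgeLang (eps γ : Γ) : Language Γ := epsStar eps * oneLetterLang γ

/-- The vertex set of the ε-contraction `G/ε`. -/
def EpsDomain (S : CPS Q A Γ) (eps : Γ) : Set (Q × Stack2 A) :=
  {c | ReachL S (domLang eps) (S.q0, bottom2 S.bot) c}

/-! ## (Generalised) milestones and the order ≪ -/

/-- `wordAt bot s i` is the word `wᵢ` of `s`, with the convention `w₀ = ⊥`. -/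
def wordAt {A : Type} (bot : A) (s : Stack2 A) (i : ℕ) : Word A :=
  if i = 0 then [Sum.inl bot] else s.getD (i - 1) []

/-- Longest common prefix of two words. -/
def lcp {α : Type} [DecidableEq α] : List α → List α → List α
  | a :: s, b :: t => if a = b then a :: lcp s t else []
  | _, _ => []

/-- `m` is a generalised milestone of `s`. -/
def GenMilestone (bot : A) (s m : Stack2 A) : Prop :=
  ∃ i v, i < s.length ∧ m = s.take i ++ [v] ∧
    lcp (wordAt bot s i) (wordAt bot s (i + 1)) <+: v ∧
    (v <+: wordAt bot s i ∨ v <+: wordAt bot s (i + 1))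

/-- `m` is a milestone of `s`. -/
def Milestone (bot : A) (s m : Stack2 A) : Prop :=
  ∃ i v, i < s.length ∧ m = s.take i ++ [v] ∧
    lcp (wordAt bot s i) (wordAt bot s (i + 1)) <+: v ∧
    v <+: wordAt bot s (i + 1)

def genMilestones (bot : A) (s : Stack2 A) : Set (Stack2 A) := {m | GenMilestone bot s m}

def milestones (bot : A) (s : Stack2 A) : Set (Stack2 A) := {m | Milestone bot s m}

/-- The base cases of the partial order `≪`. -/
def llBase (bot : A) (s t : Stack2 A) : Prop :=
  s.length < t.length ∨
    (s ≠ [] ∧ s.length = t.length ∧ s.dropLast = t.dropLast ∧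
      ((t.getLastD [] <+: s.getLastD [] ∧ t.getLastD [] ≠ s.getLastD [] ∧
          s.getLastD [] <+: wordAt bot s (s.length - 1)) ∨
        (s.getLastD [] <+: t.getLastD [] ∧ s.getLastD [] ≠ t.getLastD [] ∧
          ¬ t.getLastD [] <+: wordAt bot s (s.length - 1))))

/-- The order `≪`: the smallest reflexive transitive relation containing `llBase`. -/
def ll (bot : A) : Stack2 A → Stack2 A → Prop := Relation.ReflTransGen (llBase bot)

/-- `m'` is the ≪-successor of `m` within `genMilestones bot s`. -/
def LlSuccessor (bot : A) (s m m' : Stack2 A) : Prop :=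
  GenMilestone bot s m ∧ GenMilestone bot s m' ∧ m ≠ m' ∧ ll bot m m' ∧
    ∀ m'', GenMilestone bot s m'' → ll bot m m'' → m'' ≠ m → ll bot m' m''

/-! ## Loops, returns and 1-loops -/

/-- The segment `[i,j]` of `ρ` is a loop (of its initial stack). -/
def LoopSeg {S : CPS Q A Γ} (ρ : Run S) (i j : ℕ) : Prop :=
  i ≤ j ∧ j ≤ ρ.len ∧ ρ.stk j = ρ.stk i ∧
    (∀ k, i ≤ k → k ≤ j → ∀ t, pop2 (ρ.stk i) = some t → ¬ Substack (ρ.stk k) t) ∧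
    (∀ k, i ≤ k → k ≤ j → ∀ m, 0 < m → ∀ t, iter pop1 m (ρ.stk i) = some t →
      ρ.stk k = t → ∀ m', m' < m → ∃ t', iter pop1 m' (ρ.stk i) = some t' ∧
        lvlS t' = some 1)

/-- A high loop: a loop that never visits `Pop₁` of its stack. -/
def HighLoopSeg {S : CPS Q A Γ} (ρ : Run S) (i j : ℕ) : Prop :=
  LoopSeg ρ i j ∧ ∀ k, i ≤ k → k ≤ j → ∀ t, pop1 (ρ.stk i) = some t → ρ.stk k ≠ t

/-- A low loop: a loop whose second and second-to-last stacks are `Pop₁` of its stack. -/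
def LowLoopSeg {S : CPS Q A Γ} (ρ : Run S) (i j : ℕ) : Prop :=
  LoopSeg ρ i j ∧ i < j ∧
    ∃ t, pop1 (ρ.stk i) = some t ∧ ρ.stk (i + 1) = t ∧ ρ.stk (j - 1) = t

/-- The common part of the definition of a return on the segment `[i,j]`:
it leads from its initial stack `t` to `Pop₂(t)` and never visits a substack
of `Pop₂(t)` before its final configuration. -/
def RetShell {S : CPS Q A Γ} (ρ : Run S) (i j : ℕ) : Prop :=
  i < j ∧ j ≤ ρ.len ∧ pop2 (ρ.stk i) = some (ρ.stk j) ∧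
    ∀ k, i ≤ k → k < j → ¬ Substack (ρ.stk k) (ρ.stk j)

/-- The segment `[i,j]` of `ρ` is a return (from its initial stack `t` to `Pop₂(t)`). -/
inductive RetSeg {S : CPS Q A Γ} (ρ : Run S) : ℕ → ℕ → Prop where
  | pop2 {i j : ℕ} (h : RetShell ρ i j) (hop : ρ.op (j - 1) = Op.pop2) : RetSeg ρ i j
  | collapse {i j : ℕ} (h : RetShell ρ i j) (hop : ρ.op (j - 1) = Op.collapse)
      (hpre : ∃ w w', top2 (ρ.stk i) = some w ∧ top2 (ρ.stk (j - 1)) = some w' ∧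
        w <+: w' ∧ w ≠ w') : RetSeg ρ i j
  | sub {i k j : ℕ} (h : RetShell ρ i j) (hik : i < k) (hkj : k ≤ j)
      (hpop : pop1 (ρ.stk i) = some (ρ.stk k)) (hret : RetSeg ρ k j) : RetSeg ρ i j

/-- The segment `[i,j]` of `ρ` is a level-1-loop. -/
def OneLoopSeg {S : CPS Q A Γ} (ρ : Run S) (i j : ℕ) : Prop :=
  i ≤ j ∧ j ≤ ρ.len ∧
    ∃ (s : Stack2 A) (w : Word A) (s' : Stack2 A),
      ρ.stk i = s ++ [w] ∧ ρ.stk j = s ++ s' ++ [w] ∧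
      (∀ k, i ≤ k → k ≤ j → s.length < (ρ.stk k).length) ∧
      (∀ k, i ≤ k → k ≤ j → 1 < w.length → top2 (ρ.stk k) = some w.dropLast →
        ∃ m, k < m ∧ m ≤ j ∧ RetSeg ρ k m)

/-! ## ExRet, ExLoop, ... -/

/-- `w↓₀` : replace every level-2 link by `0`. -/
def down0 {A : Type} : Word A → Word A :=
  List.map fun a => match a with
    | Sum.inl x => Sum.inl x
    | Sum.inr (x, _) => Sum.inr (x, 0)

def ExRet (S : CPS Q A Γ) (w : Word A) : Set (Q × Q) :=
  {p | ∃ ρ : Run S, ρ.cfg 0 = (p.1, [down0 w, down0 w]) ∧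
    ρ.cfg ρ.len = (p.2, [down0 w]) ∧ RetSeg ρ 0 ρ.len}

def ExLoop (S : CPS Q A Γ) (w : Word A) : Set (Q × Q) :=
  {p | ∃ ρ : Run S, ρ.cfg 0 = (p.1, [down0 w]) ∧ ρ.cfg ρ.len = (p.2, [down0 w]) ∧
    LoopSeg ρ 0 ρ.len}

def ExHLoop (S : CPS Q A Γ) (w : Word A) : Set (Q × Q) :=
  {p | ∃ ρ : Run S, ρ.cfg 0 = (p.1, [down0 w]) ∧ ρ.cfg ρ.len = (p.2, [down0 w]) ∧
    HighLoopSeg ρ 0 ρ.len}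

def ExLLoop (S : CPS Q A Γ) (w : Word A) : Set (Q × Q) :=
  {p | ∃ ρ : Run S, ρ.cfg 0 = (p.1, [down0 w]) ∧ ρ.cfg ρ.len = (p.2, [down0 w]) ∧
    LowLoopSeg ρ 0 ρ.len}

def ExOneLoop (S : CPS Q A Γ) (w : Word A) : Set (Q × Q) :=
  {p | ∃ (ρ : Run S) (s' : Stack2 A), ρ.cfg 0 = (p.1, [down0 w]) ∧
    ρ.cfg ρ.len = (p.2, s' ++ [down0 w]) ∧ OneLoopSeg ρ 0 ρ.len}

/-! ## Finite binary trees -/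

/-- Finite binary trees with labels in `α` and optional left/right children. -/
inductive PTree (α : Type) where
  | node (a : α) (l r : Option (PTree α)) : PTree α

/-- The label of the node at address `d` (`false` = left/0, `true` = right/1). -/
def PTree.labelAt {α : Type} : PTree α → List Bool → Option α
  | .node a _ _, [] => some a
  | .node _ (some t) _, false :: d => t.labelAt d
  | .node _ none _, false :: _ => none
  | .node _ _ (some t), true :: d => t.labelAt d
  | .node _ _ none, true :: _ => none

def PTree.map {α β : Type} (f : α → β) : PTree α → PTree β
  | .node a l r =>
    .node (f a)
      (match l with | none => none | some t => some (t.map f))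
      (match r with | none => none | some t => some (t.map f))

/-- Convolution of two trees, with `none` as padding symbol `□`. -/
def PTree.conv {α β : Type} : PTree α → PTree β → PTree (Option α × Option β)
  | .node a l r, .node b l' r' =>
    .node (some a, some b)
      (match l, l' with
        | none, none => none
        | some t, none => some (t.map fun x => (some x, none))
        | none, some u => some (u.map fun x => (none, some x))
        | some t, some u => some (PTree.conv t u))
      (match r, r' with
        | none, none => none
        | some t, none => some (t.map fun x => (some x, none))
        | none, some u => some (u.map fun x => (none, some x))
        | some t, some u => some (PTree.conv t u))

/-- A (bottom-up nondeterministic) finite tree automaton. -/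
structure TreeAut (α : Type) where
  St : Type
  fin : Finite St
  qI : St
  F : Set St
  Δ : Set (St × α × St × St)

/-- Acceptance of a finite tree by a tree automaton. -/
def TreeAut.Accepts {α : Type} (M : TreeAut α) (t : PTree α) : Prop :=
  ∃ ρ : List Bool → M.St,
    (∀ d, t.labelAt d = none → ρ d = M.qI) ∧
    (∀ d a, t.labelAt d = some a → (ρ d, a, ρ (d ++ [false]), ρ (d ++ [true])) ∈ M.Δ) ∧
    ρ [] ∈ M.F

/-- A family of binary relations on `B` is tree-automatic. -/
def IsTreeAutomatic {B : Type} {I : Type} (E : I → B → B → Prop) : Prop :=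
  ∃ (α : Type) (_ : Finite α) (AB : TreeAut α) (AE : I → TreeAut (Option α × Option α))
    (f : {t : PTree α // AB.Accepts t} → B),
    Function.Bijective f ∧
      ∀ (i : I) (t₁ t₂ : {t : PTree α // AB.Accepts t}),
        (AE i).Accepts (PTree.conv t₁.1 t₂.1) ↔ E i (f t₁) (f t₂)

/-! ## The encoding of configurations as trees -/

/-- Labels of encoding trees: a state, a pair (symbol, link level), or `ε`. -/
abbrev EncLabel (Q A : Type) := Q ⊕ ((A × ℕ) ⊕ Unit)

def epsLab {Q A : Type} : EncLabel Q A := Sum.inr (Sum.inr ())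

def symLab {Q A : Type} (τ : Letter A) : EncLabel Q A := Sum.inr (Sum.inl (symOf τ, lvlOf τ))

/-- Encoding of blocklines as trees (with a fuel parameter driving the recursion;
the fuel used in `encStack` is large enough so that it never runs out on actual
blocklines). The left subtree encodes the blockline induced by the first maximal
block, the right subtree the remaining blocks. -/
def encBL (Q : Type) {A : Type} [DecidableEq A] :
    ℕ → EncLabel Q A → List (Word A) → PTree (EncLabel Q A)
  | 0, σ, _ => .node σ none none
  | _ + 1, σ, [] => .node σ none none
  | fuel + 1, σ, w :: rest =>
    if w.length ≤ 1 then
      match rest with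
      | [] => .node σ none none
      | _ :: _ => .node σ none (some (encBL Q fuel epsLab rest))
    else
      let p : Word A → Bool := fun v => decide (v.take 2 = w.take 2)
      let blk := (w :: rest).takeWhile p
      let restBlk := (w :: rest).dropWhile p
      .node σ
        (some (encBL Q fuel
          (match w[1]? with | some τ' => symLab τ' | none => epsLab)
          (blk.map List.tail)))
        (match restBlk with
          | [] => none
          | _ :: _ => some (encBL Q fuel epsLab restBlk))

/-- The total number of letters of a 2-word. -/
def size2 {A : Type} (s : Stack2 A) : ℕ := (s.map List.length).sum

/-- The encoding `Enc(s) = Enc(s, (⊥,1))` of a stack. -/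
def encStack (Q : Type) {A : Type} [DecidableEq A] (bot : A) (s : Stack2 A) :
    PTree (EncLabel Q A) :=
  encBL Q (size2 s + 1) (Sum.inr (Sum.inl (bot, 1))) s

/-- The encoding of a configuration: the state at the root, `Enc(s)` as left subtree. -/
def Enc {Q A : Type} [DecidableEq A] (bot : A) (c : Q × Stack2 A) : PTree (EncLabel Q A) :=
  .node (Sum.inl c.1) (some (encStack Q bot c.2)) none

/-- The class `EncTrees` of encoding trees. -/
def EncTrees (Q A : Type) (bot : A) : Set (PTree (EncLabel Q A)) :=
  {T | (∃ q : Q, T.labelAt [] = some (Sum.inl q)) ∧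
    T.labelAt [true] = none ∧ T.labelAt [false] ≠ none ∧
    T.labelAt [false] = some (Sum.inr (Sum.inl (bot, 1))) ∧
    (∀ (d : List Bool) (x : EncLabel Q A),
      T.labelAt (false :: (d ++ [false])) = some x →
        ∃ (σ : A) (l : ℕ), σ ≠ bot ∧ (l = 1 ∨ l = 2) ∧ x = Sum.inr (Sum.inl (σ, l))) ∧
    (∀ (d : List Bool) (x : EncLabel Q A), T.labelAt (d ++ [true]) = some x → x = epsLab) ∧
    (∀ (d : List Bool) (σ : A), ¬ (T.labelAt (d ++ [false]) = some (Sum.inr (Sum.inl (σ, 1))) ∧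
      T.labelAt (d ++ [true, false]) = some (Sum.inr (Sum.inl (σ, 1)))))}

/-- Restriction of a tree to the nodes lexicographically ≤ `d`. -/
def restrictLex {α : Type} : PTree α → List Bool → PTree α
  | .node a _ _, [] => .node a none none
  | .node a l _, false :: d =>
      .node a (match l with | none => none | some t => some (restrictLex t d)) none
  | .node a l r, true :: d =>
      .node a l (match r with | none => none | some t => some (restrictLex t d))

/-- The lexicographic order on tree addresses. -/
def lexLe (d e : List Bool) : Prop :=
  d <+: e ∨ ∃ (c x y : List Bool), d = c ++ false :: x ∧ e = c ++ true :: y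

/-! ## Deterministic finite automata with output (Moore machines) -/

structure Moore (α ω : Type) where
  St : Type
  fin : Finite St
  init : St
  step : St → α → St
  out : St → ω

def Moore.output {α ω : Type} (M : Moore α ω) (w : List α) : ω :=
  M.out (w.foldl M.step M.init)

/-!
What a run can do with the topmost word `w` of a stack, without looking below it, is captured by a
finite amount of data: the top symbol of `w`, the pairs of states connected by a run that returns to
`w`, and those connected by a run that leaves `w` for a lower stack. As such a run can leave by
following a link, every link of `w` is tagged by whether it points to the stack to be reached. This
type of `w` is determined by its top letter and the type of the rest of `w`.

Grouping consecutive words that share their next letter presents a reachable stack as a forest, and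
each of them by exactly one canonical forest. A run between two stacks splits into pieces that climb
to a subforest, descend from one, or pass through the part common to both. For each subforest the
possible pieces form a relation on states that depends only on the type of the word at its root, and
this finite object is computed from the children. A bottom-up tree automaton can therefore decide
reachability, and regular languages of labels are handled by the product of the system with a
deterministic automaton.
-/

/-! ## Exits from a level, on words whose links are abstracted to tags -/

section Exit

variable {P B : Type} (bot : B) (δ : P → B → Op B → P → Prop)

/-- A stack letter with its link abstracted to a tag: `none` is a level-1 link and `some m` a
level-2 link, with `m = true` (a marked link) iff it points to the substack that a run is
currently trying to reach. -/
abbrev TaggedLetter (B : Type) := B × Option Bool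

/-- Turns a marked link into an unmarked one. -/
def unmark (x : TaggedLetter B) : TaggedLetter B := (x.1, x.2.map fun _ => false)

/-- Letterwise `unmark`: the tags of a freshly cloned word, whose links all point strictly below
the word that it was cloned from. -/
def unmarkWord (w : List (TaggedLetter B)) : List (TaggedLetter B) := w.map unmark

theorem unmark_unmark (x : TaggedLetter B) : unmark (unmark x) = unmark x := by
  rcases x with ⟨a, _ | m⟩ <;> rfl

theorem unmarkWord_unmarkWord (w : List (TaggedLetter B)) :
    unmarkWord (unmarkWord w) = unmarkWord w := by
  simp only [unmarkWord, List.map_map, Function.comp_def, unmark_unmark]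

theorem unmarkWord_append (u w : List (TaggedLetter B)) :
    unmarkWord (u ++ w) = unmarkWord u ++ unmarkWord w :=
  List.map_append

/-- `Exit bot δ b w q q'`: starting in state `q` with topmost word `w` (top letter first), the
transitions `δ` allow a run that stays on the current level and above until it reaches, in state
`q'`, the substack that the marked links of `w` point to. The flag `b` tells whether this target
is the substack obtained by `pop2`; if not, it lies further down. -/
inductive Exit : Bool → List (TaggedLetter B) → P → P → Prop
  | pop2 {a w q q'} : δ q a.1 .pop2 q' → Exit true (a :: w) q q'
  | collapse {b a w q q'} : a.2 = some true → δ q a.1 .collapse q' → Exit b (a :: w) q q'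
  | push1 {b a w q p q' x} : x ≠ bot → δ q a.1 (.push1 x) p →
      Exit b ((x, none) :: a :: w) p q' → Exit b (a :: w) q q'
  | push2 {b a w q p q' x} : x ≠ bot → δ q a.1 (.push2 x) p →
      Exit b ((x, some b) :: a :: w) p q' → Exit b (a :: w) q q'
  | pop1 {b a w q p q'} : δ q a.1 .pop1 p → Exit b w p q' → Exit b (a :: w) q q'
  | collapse1 {b a w q p q'} : a.2 = none → δ q a.1 .collapse p → Exit b w p q' →
      Exit b (a :: w) q q'
  | cloneExit {b a w q p q'} : δ q a.1 .clone2 p → Exit false (a :: w) p q' → Exit b (a :: w) q q'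
  | cloneReturn {b a w q p p' q'} : δ q a.1 .clone2 p → Exit true (unmarkWord (a :: w)) p p' →
      Exit b (a :: w) p' q' → Exit b (a :: w) q q'

variable {bot δ}

theorem Exit.ne_nil {b : Bool} {w : List (TaggedLetter B)} {q q' : P} (h : Exit bot δ b w q q') :
    w ≠ [] := by
  cases h <;> exact List.cons_ne_nil _ _

theorem Exit.eq_true_or_exists_marked {b : Bool} {w : List (TaggedLetter B)} {q q' : P}
    (h : Exit bot δ b w q q') : b = true ∨ ∃ a ∈ w, a.2 = some true := by
  induction h <;> grind

theorem Exit.not_false_unmarkWord {w : List (TaggedLetter B)} {q q' : P} :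
    ¬ Exit bot δ false (unmarkWord w) q q' := by
  intro h
  obtain h | ⟨a, ha, h⟩ := h.eq_true_or_exists_marked
  · exact Bool.false_ne_true h
  · obtain ⟨⟨x, _ | m⟩, _, rfl⟩ := List.mem_map.1 ha <;> simp [unmark] at h

/-- A suffix of the topmost word matters only through its exits and those of its unmarked copy,
the latter being what a clone of the word sees. -/
theorem Exit.mono_suffix {b : Bool} {u v w : List (TaggedLetter B)} {q q' : P}
    (hvw : ∀ b q q', Exit bot δ b v q q' → Exit bot δ b w q q')
    (hvw' : ∀ b q q', Exit bot δ b (unmarkWord v) q q' → Exit bot δ b (unmarkWord w) q q')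
    (h : Exit bot δ b (u ++ v) q q') : Exit bot δ b (u ++ w) q q' := by
  generalize hx : u ++ v = x at h
  induction h generalizing u v w with
  | pop2 h =>
    obtain ⟨rfl, rfl⟩ | ⟨u, rfl, rfl⟩ := List.append_eq_cons_iff.1 hx
    exacts [hvw _ _ _ (.pop2 h), .pop2 h]
  | collapse ha h =>
    obtain ⟨rfl, rfl⟩ | ⟨u, rfl, rfl⟩ := List.append_eq_cons_iff.1 hx
    exacts [hvw _ _ _ (.collapse ha h), .collapse ha h]
  | push1 hne h hE ih =>
    obtain ⟨rfl, rfl⟩ | ⟨u, rfl, rfl⟩ := List.append_eq_cons_iff.1 hx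
    exacts [hvw _ _ _ (.push1 hne h hE), .push1 hne h (ih (u := _ :: _ :: u) hvw hvw' rfl)]
  | push2 hne h hE ih =>
    obtain ⟨rfl, rfl⟩ | ⟨u, rfl, rfl⟩ := List.append_eq_cons_iff.1 hx
    exacts [hvw _ _ _ (.push2 hne h hE), .push2 hne h (ih (u := _ :: _ :: u) hvw hvw' rfl)]
  | pop1 h hE ih =>
    obtain ⟨rfl, rfl⟩ | ⟨u, rfl, rfl⟩ := List.append_eq_cons_iff.1 hx
    exacts [hvw _ _ _ (.pop1 h hE), .pop1 h (ih hvw hvw' rfl)]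
  | collapse1 ha h hE ih =>
    obtain ⟨rfl, rfl⟩ | ⟨u, rfl, rfl⟩ := List.append_eq_cons_iff.1 hx
    exacts [hvw _ _ _ (.collapse1 ha h hE), .collapse1 ha h (ih hvw hvw' rfl)]
  | cloneExit h hE ih =>
    obtain ⟨rfl, rfl⟩ | ⟨u, rfl, rfl⟩ := List.append_eq_cons_iff.1 hx
    exacts [hvw _ _ _ (.cloneExit h hE), .cloneExit h (ih (u := _ :: u) hvw hvw' rfl)]
  | cloneReturn h hR hE ihR ihE =>
    obtain ⟨rfl, rfl⟩ | ⟨u, rfl, rfl⟩ := List.append_eq_cons_iff.1 hx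
    · exact hvw _ _ _ (.cloneReturn h hR hE)
    · refine .cloneReturn h ?_ (ihE (u := _ :: u) hvw hvw' rfl)
      have := ihR (u := unmarkWord (_ :: u)) hvw' (by simpa only [unmarkWord_unmarkWord] using hvw')
        (unmarkWord_append _ _).symm
      rwa [← unmarkWord_append] at this

end Exit

/-! ## Runs on a fixed level -/

section LevelRun

variable {P B X : Type} (bot : B) (δ : P → B → Op B → P → Prop) (tag : X → TaggedLetter B)
  (letter1 letter2 : B → X)

/-- One step on the topmost word of a fixed level, whose letters live in `X` and have tags given
by `tag`: a level-1 push or pop, or a clone followed by a return. The letters pushed with a level-1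
or level-2 link are given by `letter1` and `letter2`. The empty word is never reached. -/
inductive LevelStep : P × List X → P × List X → Prop
  | push1 {a w q p x} : x ≠ bot → δ q (tag a).1 (.push1 x) p →
      LevelStep (q, a :: w) (p, letter1 x :: a :: w)
  | push2 {a w q p x} : x ≠ bot → δ q (tag a).1 (.push2 x) p →
      LevelStep (q, a :: w) (p, letter2 x :: a :: w)
  | pop1 {a w q p} : w ≠ [] → δ q (tag a).1 .pop1 p → LevelStep (q, a :: w) (p, w)
  | collapse1 {a w q p} : w ≠ [] → (tag a).2 = none → δ q (tag a).1 .collapse p →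
      LevelStep (q, a :: w) (p, w)
  | loop {a w q p q'} : δ q (tag a).1 .clone2 p →
      Exit bot δ true (unmarkWord ((a :: w).map tag)) p q' → LevelStep (q, a :: w) (q', a :: w)

/-- Runs on a fixed level. -/
abbrev LevelRun : P × List X → P × List X → Prop :=
  Relation.ReflTransGen (LevelStep bot δ tag letter1 letter2)

variable {bot δ tag letter1 letter2}

theorem LevelStep.eq_or_eq_cons {c c' : P × List X}
    (h : LevelStep bot δ tag letter1 letter2 c c') :
    c.2 = c'.2 ∨ (∃ a, c'.2 = a :: c.2) ∨ ∃ a, c.2 = a :: c'.2 := by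
  cases h <;> simp

theorem LevelStep.enter {c c' : P × List X} {w : List X}
    (h : LevelStep bot δ tag letter1 letter2 c c') (hc : ¬ w <:+ c.2) (hc' : w <:+ c'.2) :
    c'.2 = w ∧ ∃ a, w = a :: c.2 := by
  rcases h.eq_or_eq_cons with h | ⟨x, h⟩ | ⟨x, h⟩
  · exact absurd (h ▸ hc') hc
  · rw [h, List.suffix_cons_iff] at hc'
    obtain rfl | hc' := hc'
    exacts [⟨h, x, rfl⟩, absurd hc' hc]
  · exact absurd (h ▸ hc'.trans (List.suffix_cons _ _)) hc

theorem LevelStep.leave {c c' : P × List X} {w : List X}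
    (h : LevelStep bot δ tag letter1 letter2 c c') (hc : w <:+ c.2) (hc' : ¬ w <:+ c'.2) :
    c.2 = w ∧ ∃ a, w = a :: c'.2 := by
  rcases h.eq_or_eq_cons with h | ⟨x, h⟩ | ⟨x, h⟩
  · exact absurd (h ▸ hc) hc'
  · exact absurd (h ▸ hc.trans (List.suffix_cons _ _)) hc'
  · rw [h, List.suffix_cons_iff] at hc
    obtain rfl | hc := hc
    exacts [⟨h, x, rfl⟩, absurd hc hc']

theorem LevelRun.exists_enter {c c' : P × List X} {a : X} {v : List X}
    (h : LevelRun bot δ tag letter1 letter2 c c') (hc : ¬ (a :: v) <:+ c.2)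
    (hc' : (a :: v) <:+ c'.2) :
    ∃ r r', LevelRun bot δ tag letter1 letter2 c (r, v) ∧
      LevelStep bot δ tag letter1 letter2 (r, v) (r', a :: v) ∧
      LevelRun bot δ tag letter1 letter2 (r', a :: v) c' := by
  induction h with
  | refl => exact absurd hc' hc
  | @tail d e hcd hde ih =>
    by_cases hd : (a :: v) <:+ d.2
    · obtain ⟨r, r', hcr, hrr', hr'd⟩ := ih hd
      exact ⟨r, r', hcr, hrr', hr'd.tail hde⟩
    · obtain ⟨he, x, hx⟩ := hde.enter hd hc'
      obtain ⟨rfl, rfl⟩ := List.cons_eq_cons.1 hx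
      obtain ⟨q, l⟩ := e
      subst he
      exact ⟨d.1, q, hcd, hde, .refl⟩

theorem LevelRun.exists_leave {c c' : P × List X} {a : X} {v : List X}
    (h : LevelRun bot δ tag letter1 letter2 c c') (hc : (a :: v) <:+ c.2)
    (hc' : ¬ (a :: v) <:+ c'.2) :
    ∃ r r', LevelRun bot δ tag letter1 letter2 c (r, a :: v) ∧
      LevelStep bot δ tag letter1 letter2 (r, a :: v) (r', v) ∧
      LevelRun bot δ tag letter1 letter2 (r', v) c' := by
  induction h with
  | refl => exact absurd hc hc'
  | @tail d e hcd hde ih =>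
    by_cases hd : (a :: v) <:+ d.2
    · obtain ⟨hd', x, hx⟩ := hde.leave hd hc'
      obtain ⟨rfl, rfl⟩ := List.cons_eq_cons.1 hx
      obtain ⟨q, l⟩ := d
      subst hd'
      exact ⟨q, e.1, hcd, hde, .refl⟩
    · obtain ⟨r, r', hcr, hrr', hr'd⟩ := ih hd
      exact ⟨r, r', hcr, hrr', hr'd.tail hde⟩

end LevelRun

/-! ## The finite type of a word, and its compositionality -/

section WordType

variable {P B : Type} (bot : B) (δ : P → B → Op B → P → Prop)

/-- Level steps on tagged words; a letter pushed with a level-2 link is marked. -/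
abbrev AbstractStep : P × List (TaggedLetter B) → P × List (TaggedLetter B) → Prop :=
  LevelStep bot δ id (fun x => (x, none)) (fun x => (x, some true))

/-- Level runs on tagged words. -/
abbrev AbstractRun : P × List (TaggedLetter B) → P × List (TaggedLetter B) → Prop :=
  Relation.ReflTransGen (AbstractStep bot δ)

/-- `AbstractLoop bot δ w p q`: some level run leads from `(p, w)` back to the word `w` in
state `q`. -/
def AbstractLoop (w : List (TaggedLetter B)) (p q : P) : Prop := AbstractRun bot δ (p, w) (q, w)

/-- The finite data describing how a run can use a tagged word without looking below it: its top
symbol, its exits and its loops. -/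
@[ext]
structure Behaviour (P B : Type) where
  topSymbol : Option B
  exit : Bool → P → P → Prop
  loop : P → P → Prop

/-- The behaviour of a tagged word. -/
def behaviour (w : List (TaggedLetter B)) : Behaviour P B where
  topSymbol := w.head?.map Prod.fst
  exit b := Exit bot δ b w
  loop := AbstractLoop bot δ w

/-- The behaviours of a tagged word and of its unmarked copy; cloning a word replaces the former
by the latter. -/
@[ext]
structure WordType (P B : Type) where
  marked : Behaviour P B
  unmarked : Behaviour P B

/-- The type of a tagged word. -/
def wordType (w : List (TaggedLetter B)) : WordType P B where
  marked := behaviour bot δ w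
  unmarked := behaviour bot δ (unmarkWord w)

/-- The type of the unmarked copy of a word, computed from the type of the word. -/
def WordType.unmark (t : WordType P B) : WordType P B := ⟨t.unmarked, t.unmarked⟩

instance [Finite P] [Finite B] : Finite (Behaviour P B) :=
  .of_injective (fun t => (t.topSymbol, t.exit, t.loop)) fun s t h => by
    simp only [Prod.mk.injEq] at h
    exact Behaviour.ext h.1 h.2.1 h.2.2

instance [Finite P] [Finite B] : Finite (WordType P B) :=
  .of_injective (fun t => (t.marked, t.unmarked)) fun s t h => by
    simp only [Prod.mk.injEq] at h
    exact WordType.ext h.1 h.2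

theorem wordType_unmarkWord (w : List (TaggedLetter B)) :
    wordType bot δ (unmarkWord w) = (wordType bot δ w).unmark := by
  simp only [wordType, WordType.unmark, unmarkWord_unmarkWord]

/-- A step of a run on the part of a word above a fixed suffix `w`: a level step, or an arbitrary
excursion into `w` and back. -/
inductive RelativeStep (w : List (TaggedLetter B)) :
    P × List (TaggedLetter B) → P × List (TaggedLetter B) → Prop
  | step {c c'} : AbstractStep bot δ (c.1, c.2 ++ w) (c'.1, c'.2 ++ w) → RelativeStep w c c'
  | loop {q q'} : AbstractLoop bot δ w q q' → RelativeStep w (q, []) (q', [])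

variable {bot δ}

theorem AbstractRun.to_relative {w u' : List (TaggedLetter B)} {q' : P}
    {c : P × List (TaggedLetter B)} (h : AbstractRun bot δ c (q', u' ++ w)) :
    (∀ u, c.2 = u ++ w → Relation.ReflTransGen (RelativeStep bot δ w) (c.1, u) (q', u')) ∧
    (¬ w <:+ c.2 → ∃ r, AbstractRun bot δ c (r, w) ∧
      Relation.ReflTransGen (RelativeStep bot δ w) (r, []) (q', u')) := by
  induction h using Relation.ReflTransGen.head_induction_on with
  | refl =>
    refine ⟨fun u hu => ?_, fun h => absurd (List.suffix_append _ _) h⟩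
    rw [List.append_cancel_right hu]
  | @head c d hcd hd ih =>
    obtain ⟨p, l⟩ := c
    obtain ⟨r, l'⟩ := d
    by_cases hl' : w <:+ l'
    · obtain ⟨v, rfl⟩ := hl'
      refine ⟨?_, fun hl => ?_⟩
      · rintro u rfl
        exact .head (.step hcd) (ih.1 v rfl)
      · have hv : v = [] := List.append_left_eq_self.1 (hcd.enter hl (List.suffix_append _ _)).1
        subst hv
        exact ⟨r, .single hcd, ih.1 [] rfl⟩
    · obtain ⟨s, hds, hs⟩ := ih.2 hl'
      refine ⟨?_, fun _ => ⟨s, .head hcd hds, hs⟩⟩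
      rintro u rfl
      have hu : u = [] := List.append_left_eq_self.1 (hcd.leave (List.suffix_append _ _) hl').1
      subst hu
      exact .head (.loop (.head hcd hds)) hs

theorem AbstractRun.of_relative {w : List (TaggedLetter B)} {c c' : P × List (TaggedLetter B)}
    (h : Relation.ReflTransGen (RelativeStep bot δ w) c c') :
    AbstractRun bot δ (c.1, c.2 ++ w) (c'.1, c'.2 ++ w) := by
  induction h with
  | refl => exact .refl
  | tail _ h ih =>
    cases h with
    | step h => exact ih.tail h
    | loop h => exact ih.trans h

section Congruence

variable {v w : List (TaggedLetter B)}

theorem loop_iff_of_wordType_eq (h : wordType bot δ v = wordType bot δ w) {q q' : P} :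
    AbstractLoop bot δ v q q' ↔ AbstractLoop bot δ w q q' :=
  iff_of_eq (congrArg (fun t => t.marked.loop q q') h)

theorem topSymbol_eq_of_wordType_eq (h : wordType bot δ v = wordType bot δ w) :
    v.head?.map Prod.fst = w.head?.map Prod.fst :=
  congrArg (fun t => t.marked.topSymbol) h

theorem nil_iff_of_wordType_eq (h : wordType bot δ v = wordType bot δ w) :
    v = [] ↔ w = [] := by
  simpa using congrArg (· = none) (topSymbol_eq_of_wordType_eq h)

theorem wordType_unmarkWord_congr (h : wordType bot δ v = wordType bot δ w) :
    wordType bot δ (unmarkWord v) = wordType bot δ (unmarkWord w) := by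
  rw [wordType_unmarkWord, wordType_unmarkWord, h]

theorem Exit.congr_suffix (h : wordType bot δ v = wordType bot δ w)
    {u : List (TaggedLetter B)} {b : Bool} {q q' : P}
    (hE : Exit bot δ b (u ++ v) q q') : Exit bot δ b (u ++ w) q q' :=
  hE.mono_suffix (fun b q q' => (iff_of_eq (congrArg (fun t => t.marked.exit b q q') h)).1)
    fun b q q' => (iff_of_eq (congrArg (fun t => t.unmarked.exit b q q') h)).1

theorem Exit.congr_suffix_unmarkWord (h : wordType bot δ v = wordType bot δ w)
    {u : List (TaggedLetter B)} {b : Bool} {q q' : P}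
    (hE : Exit bot δ b (unmarkWord (u ++ v)) q q') : Exit bot δ b (unmarkWord (u ++ w)) q q' := by
  rw [unmarkWord_append] at hE ⊢
  exact hE.congr_suffix (wordType_unmarkWord_congr h)

theorem AbstractStep.congr_suffix (h : wordType bot δ v = wordType bot δ w)
    {a : TaggedLetter B} {u u' : List (TaggedLetter B)} {q q' : P}
    (hs : AbstractStep bot δ (q, a :: u ++ v) (q', u' ++ v)) :
    AbstractStep bot δ (q, a :: u ++ w) (q', u' ++ w) := by
  have ne_nil : u ++ v ≠ [] → u ++ w ≠ [] := by
    simpa only [ne_eq, List.append_eq_nil_iff, nil_iff_of_wordType_eq h] using id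
  generalize hx : u' ++ v = x at hs
  cases hs with
  | push1 hne hδ =>
    obtain rfl : u' = _ :: a :: u := List.append_cancel_right hx
    exact .push1 hne hδ
  | push2 hne hδ =>
    obtain rfl : u' = _ :: a :: u := List.append_cancel_right hx
    exact .push2 hne hδ
  | pop1 hne hδ =>
    obtain rfl : u' = u := List.append_cancel_right hx
    exact .pop1 (ne_nil hne) hδ
  | collapse1 hne ha hδ =>
    obtain rfl : u' = u := List.append_cancel_right hx
    exact .collapse1 (ne_nil hne) ha hδ
  | loop hδ hE =>
    obtain rfl : u' = a :: u := List.append_cancel_right hx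
    rw [List.map_id] at hE
    exact .loop hδ (by rw [List.map_id]; exact Exit.congr_suffix_unmarkWord h (u := a :: u) hE)

theorem AbstractStep.relativeStep_congr (h : wordType bot δ v = wordType bot δ w)
    {u' : List (TaggedLetter B)} {q q' : P}
    (hs : AbstractStep bot δ (q, v) (q', u' ++ v)) : RelativeStep bot δ w (q, []) (q', u') := by
  rcases u' with _ | ⟨y, u'⟩
  · exact .loop ((loop_iff_of_wordType_eq h).1 (.single hs))
  have htop := topSymbol_eq_of_wordType_eq h
  generalize hx : y :: u' ++ v = x at hs
  have hlen := congrArg List.length hx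
  rcases w with _ | ⟨a', w⟩
  · cases hs <;> simp at htop
  refine .step ?_
  cases hs with
  | push1 hne hδ =>
    obtain ⟨rfl, rfl⟩ := List.cons_eq_cons.1 (List.append_cancel_right (cs := [_]) hx)
    exact .push1 hne (Option.some_inj.1 htop ▸ hδ)
  | push2 hne hδ =>
    obtain ⟨rfl, rfl⟩ := List.cons_eq_cons.1 (List.append_cancel_right (cs := [_]) hx)
    exact .push2 hne (Option.some_inj.1 htop ▸ hδ)
  | pop1 | collapse1 | loop => simp at hlen; omega

theorem RelativeStep.congr (h : wordType bot δ v = wordType bot δ w)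
    {c c' : P × List (TaggedLetter B)} (hs : RelativeStep bot δ v c c') :
    RelativeStep bot δ w c c' := by
  cases hs with
  | loop hs => exact .loop ((loop_iff_of_wordType_eq h).1 hs)
  | step hs =>
    obtain ⟨q, _ | ⟨a, u⟩⟩ := c
    · exact hs.relativeStep_congr h
    · exact .step (hs.congr_suffix h)

theorem AbstractLoop.congr_suffix (h : wordType bot δ v = wordType bot δ w)
    {u : List (TaggedLetter B)} {q q' : P}
    (hL : AbstractLoop bot δ (u ++ v) q q') : AbstractLoop bot δ (u ++ w) q q' :=
  .of_relative <| Relation.ReflTransGen.mono (fun _ _ hs => RelativeStep.congr h hs) _ _ <|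
    (AbstractRun.to_relative hL).1 u rfl

theorem behaviour_cons_congr (h : wordType bot δ v = wordType bot δ w)
    (a : TaggedLetter B) :
    behaviour bot δ (a :: v) = behaviour bot δ (a :: w) := by
  ext1
  · rfl
  · funext b q q'
    exact propext ⟨Exit.congr_suffix h (u := [a]), Exit.congr_suffix h.symm (u := [a])⟩
  · funext q q'
    exact propext ⟨AbstractLoop.congr_suffix h (u := [a]),
      AbstractLoop.congr_suffix h.symm (u := [a])⟩

theorem wordType_cons_congr (h : wordType bot δ v = wordType bot δ w)
    (a : TaggedLetter B) :
    wordType bot δ (a :: v) = wordType bot δ (a :: w) :=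
  WordType.ext (behaviour_cons_congr h a)
    (behaviour_cons_congr (wordType_unmarkWord_congr h) (unmark a))

end Congruence

variable (bot δ) in
/-- The type of `a :: w` as a function of the type of `w`, computed on an arbitrary word of the
given type; by `wordType_cons_congr` the choice does not matter. -/
noncomputable def WordType.cons (a : TaggedLetter B) (t : WordType P B) : WordType P B :=
  wordType bot δ (a :: Function.invFun (wordType bot δ) t)

theorem WordType.cons_wordType (a : TaggedLetter B) (w : List (TaggedLetter B)) :
    WordType.cons bot δ a (wordType bot δ w) = wordType bot δ (a :: w) :=
  wordType_cons_congr (Function.invFun_eq ⟨w, rfl⟩) a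

end WordType

/-! ## Runs on reversed stacks -/

section RevRun

variable {P B : Type}

/-- Level-2 stacks read from the top: the topmost word comes first, and in each word the topmost
letter comes first. -/
abbrev RevStack (B : Type) := List (List (Letter B))

/-- Configurations with a reversed stack. -/
abbrev RevConfig (P B : Type) := P × RevStack B

variable (bot : B) (δ : P → B → Op B → P → Prop)

/-- Unlabelled transitions on reversed stacks. The premises `w ≠ []` and `s ≠ []` say that the
operation is defined. -/
inductive RevStep : RevConfig P B → RevConfig P B → Prop
  | clone {a w s q p} : δ q (symOf a) .clone2 p →
      RevStep (q, (a :: w) :: s) (p, (a :: w) :: (a :: w) :: s)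
  | push1 {a w s q p x} : x ≠ bot → δ q (symOf a) (.push1 x) p →
      RevStep (q, (a :: w) :: s) (p, (Sum.inl x :: a :: w) :: s)
  | push2 {a w s q p x} : x ≠ bot → δ q (symOf a) (.push2 x) p →
      RevStep (q, (a :: w) :: s) (p, (Sum.inr (x, s.length) :: a :: w) :: s)
  | pop2 {a w s q p} : s ≠ [] → δ q (symOf a) .pop2 p → RevStep (q, (a :: w) :: s) (p, s)
  | pop1 {a w s q p} : w ≠ [] → δ q (symOf a) .pop1 p → RevStep (q, (a :: w) :: s) (p, w :: s)
  | collapse1 {x w s q p} : w ≠ [] → δ q x .collapse p →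
      RevStep (q, (Sum.inl x :: w) :: s) (p, w :: s)
  | collapse2 {x w s q p t} : t ≠ [] → t <:+ s → δ q x .collapse p →
      RevStep (q, (Sum.inr (x, t.length) :: w) :: s) (p, t)

/-- The tagged letter of a letter, for a run that is heading for a substack of width `k`. -/
def tagFor (k : ℕ) : Letter B → TaggedLetter B
  | Sum.inl a => (a, none)
  | Sum.inr (a, j) => (a, some (decide (j = k)))

theorem tagFor_fst (k : ℕ) (a : Letter B) : (tagFor k a).1 = symOf a := by
  rcases a with a | ⟨a, j⟩ <;> rfl

theorem unmark_tagFor (k l : ℕ) (a : Letter B) : unmark (tagFor k a) = unmark (tagFor l a) := by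
  rcases a with a | ⟨a, j⟩ <;> rfl

theorem unmarkWord_map_tagFor (k l : ℕ) (w : List (Letter B)) :
    unmarkWord (w.map (tagFor k)) = unmarkWord (w.map (tagFor l)) := by
  simp only [unmarkWord, List.map_map, Function.comp_def, unmark_tagFor k l]

/-- All level-2 links of `w` point to substacks of width at most `n`. -/
def LinksLE (n : ℕ) (w : List (Letter B)) : Prop := ∀ x k, Sum.inr (x, k) ∈ w → k ≤ n

theorem LinksLE.mono {n m : ℕ} {w : List (Letter B)} (h : LinksLE n w) (hm : n ≤ m) :
    LinksLE m w :=
  fun x k hk => (h x k hk).trans hm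

theorem LinksLE.of_suffix {n : ℕ} {u w : List (Letter B)} (h : LinksLE n w) (hs : u <:+ w) :
    LinksLE n u :=
  fun x k hk => h x k (hs.subset hk)

theorem LinksLE.tail {n : ℕ} {a : Letter B} {w : List (Letter B)} (h : LinksLE n (a :: w)) :
    LinksLE n w :=
  h.of_suffix (List.suffix_cons _ _)

theorem LinksLE.cons_inl {n : ℕ} {a : B} {w : List (Letter B)} (h : LinksLE n w) :
    LinksLE n (Sum.inl a :: w) := by
  intro x k hk
  exact h x k ((List.mem_cons.1 hk).resolve_left Sum.inr_ne_inl)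

theorem LinksLE.cons_inr {n m : ℕ} {a : B} {w : List (Letter B)} (h : LinksLE n w)
    (hm : m ≤ n) : LinksLE n (Sum.inr (a, m) :: w) := by
  intro x k hk
  obtain hk | hk := List.mem_cons.1 hk
  · cases hk
    exact hm
  · exact h x k hk

theorem LinksLE.map_tagFor {n k l : ℕ} {w : List (Letter B)} (h : LinksLE n w) (hk : n < k) :
    w.map (tagFor k) = unmarkWord (w.map (tagFor l)) := by
  rw [unmarkWord, List.map_map]
  refine List.map_congr_left fun a ha => ?_
  rcases a with a | ⟨a, j⟩
  · rfl
  · have hj : j ≠ k := ((h a j ha).trans_lt hk).ne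
    simp [tagFor, unmark, hj]

/-- Every level-2 link of a stack points strictly below the word that contains it. -/
def ValidLinks : RevStack B → Prop
  | [] => True
  | w :: s => LinksLE s.length w ∧ ValidLinks s

theorem ValidLinks.of_suffix {s t : RevStack B} (h : ValidLinks s) (ht : t <:+ s) :
    ValidLinks t := by
  induction s with
  | nil => rwa [List.suffix_nil.1 ht]
  | cons w s ih =>
    obtain rfl | ht := List.suffix_cons_iff.1 ht
    exacts [h, ih h.2 ht]

variable {bot δ}

theorem RevStep.validLinks {c c' : RevConfig P B} (h : RevStep bot δ c c')
    (hv : ValidLinks c.2) : ValidLinks c'.2 := by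
  cases h with
  | clone => exact ⟨hv.1.mono (Nat.le_succ _), hv⟩
  | push1 => exact ⟨hv.1.cons_inl, hv.2⟩
  | push2 => exact ⟨hv.1.cons_inr le_rfl, hv.2⟩
  | pop2 => exact hv.2
  | pop1 => exact ⟨hv.1.tail, hv.2⟩
  | collapse1 => exact ⟨hv.1.tail, hv.2⟩
  | collapse2 _ ht => exact hv.2.of_suffix ht

variable (bot δ)

/-- Level steps on the topmost word of a stack of width `n + 1`. -/
abbrev ConcreteStep (n : ℕ) : P × List (Letter B) → P × List (Letter B) → Prop :=
  LevelStep bot δ (tagFor n) Sum.inl (fun x => Sum.inr (x, n))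

/-- Level runs on the topmost word of a stack of width `n + 1`. -/
abbrev ConcreteRun (n : ℕ) : P × List (Letter B) → P × List (Letter B) → Prop :=
  Relation.ReflTransGen (ConcreteStep bot δ n)

/-- `ExitTo bot δ c d`: the stack of `d` lies strictly below the topmost word of `c`, and `Exit`
provides a run from `c` to `d` on which every earlier stack is at least as wide as that of `c`. -/
inductive ExitTo : RevConfig P B → RevConfig P B → Prop
  | intro {q p w s t} : t <:+ s → t ≠ [] →
      Exit bot δ (decide (t.length = s.length)) (w.map (tagFor t.length)) q p →
      ExitTo (q, w :: s) (p, t)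

/-- Sequences of exits down to the first configuration of width at most `m`. -/
inductive ExitChain (m : ℕ) : RevConfig P B → RevConfig P B → Prop
  | done {c} : c.2.length ≤ m → ExitChain m c c
  | step {c c₁ c₂} : m < c.2.length → ExitTo bot δ c c₁ → ExitChain m c₁ c₂ → ExitChain m c c₂

/-- Runs on which all stacks have width greater than `m`. -/
def RunAbove (m : ℕ) (c c' : RevConfig P B) : Prop :=
  m < c.2.length ∧ Relation.ReflTransGen (fun c c' => RevStep bot δ c c' ∧ m < c'.2.length) c c'

variable {bot δ}

theorem RunAbove.refl {m : ℕ} {c : RevConfig P B} (h : m < c.2.length) :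
    RunAbove bot δ m c c := ⟨h, .refl⟩

theorem RunAbove.trans {m : ℕ} {c d e : RevConfig P B} (h : RunAbove bot δ m c d)
    (h' : RunAbove bot δ m d e) : RunAbove bot δ m c e := ⟨h.1, h.2.trans h'.2⟩

theorem RunAbove.head {m : ℕ} {c d e : RevConfig P B} (hc : m < c.2.length)
    (hs : RevStep bot δ c d) (h : RunAbove bot δ m d e) : RunAbove bot δ m c e :=
  ⟨hc, .head ⟨hs, h.1⟩ h.2⟩

theorem RunAbove.single {m : ℕ} {c d : RevConfig P B} (hc : m < c.2.length)
    (hs : RevStep bot δ c d) (hd : m < d.2.length) : RunAbove bot δ m c d :=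
  .head hc hs (.refl hd)

theorem RunAbove.lt_length_right {m : ℕ} {c d : RevConfig P B} (h : RunAbove bot δ m c d) :
    m < d.2.length := by
  obtain ⟨hc, h⟩ := h
  cases h with
  | refl => exact hc
  | tail _ h => exact h.2

theorem RunAbove.mono {m n : ℕ} {c d : RevConfig P B} (h : RunAbove bot δ m c d) (hn : n ≤ m) :
    RunAbove bot δ n c d :=
  ⟨hn.trans_lt h.1, Relation.ReflTransGen.mono (fun _ _ hr => ⟨hr.1, hn.trans_lt hr.2⟩) _ _ h.2⟩

theorem RunAbove.validLinks {m : ℕ} {c d : RevConfig P B} (h : RunAbove bot δ m c d)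
    (hv : ValidLinks c.2) : ValidLinks d.2 := by
  obtain ⟨-, h⟩ := h
  induction h with
  | refl => exact hv
  | tail _ h ih => exact h.1.validLinks ih

@[elab_as_elim]
theorem RunAbove.head_induction_on {m : ℕ} {d : RevConfig P B}
    {motive : ∀ c, RunAbove bot δ m c d → Prop} {c : RevConfig P B} (h : RunAbove bot δ m c d)
    (refl : ∀ h, motive d h)
    (head : ∀ c c₁ (hc : m < c.2.length) (hs : RevStep bot δ c c₁) (h : RunAbove bot δ m c₁ d),
      motive c₁ h → motive c (h.head hc hs)) : motive c h := by
  obtain ⟨hc, h⟩ := h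
  induction h using Relation.ReflTransGen.head_induction_on with
  | refl => exact refl _
  | head hs h ih => exact head _ _ hc hs.1 ⟨hs.2, h⟩ (ih hs.2)

/-! ### Exits on reversed stacks -/

theorem ExitTo.suffix {c c' : RevConfig P B} (h : ExitTo bot δ c c') : c'.2 <:+ c.2 := by
  cases h with
  | intro ht => exact ht.trans (List.suffix_cons _ _)

theorem ExitTo.length_lt {c c' : RevConfig P B} (h : ExitTo bot δ c c') :
    c'.2.length < c.2.length := by
  cases h with
  | intro ht => exact Nat.lt_succ_of_le ht.length_le

theorem RevStep.level_or_clone_or_exit {q : P} {w : List (Letter B)} {s : RevStack B}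
    {c' : RevConfig P B} (h : RevStep bot δ (q, w :: s) c') :
    (∃ w', c'.2 = w' :: s ∧ ConcreteStep bot δ s.length (q, w) (c'.1, w')) ∨
    (c'.2 = w :: w :: s ∧ ∃ a u, w = a :: u ∧ δ q (symOf a) .clone2 c'.1) ∨
    ExitTo bot δ (q, w :: s) c' := by
  cases h with
  | clone hδ => exact .inr (.inl ⟨rfl, _, _, rfl, hδ⟩)
  | push1 hne hδ => exact .inl ⟨_, rfl, .push1 hne (by rwa [tagFor_fst])⟩
  | push2 hne hδ => exact .inl ⟨_, rfl, .push2 hne (by rwa [tagFor_fst])⟩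
  | pop2 hs hδ =>
    refine .inr (.inr (.intro (List.suffix_refl _) hs ?_))
    rw [decide_eq_true rfl]
    exact .pop2 (by rwa [tagFor_fst])
  | pop1 hw hδ => exact .inl ⟨_, rfl, .pop1 hw (by rwa [tagFor_fst])⟩
  | collapse1 hw hδ => exact .inl ⟨_, rfl, .collapse1 hw rfl (by rwa [tagFor_fst])⟩
  | collapse2 ht hts hδ => exact .inr (.inr (.intro hts ht (.collapse (by simp [tagFor]) hδ)))

theorem ConcreteStep.exitTo {q p : P} {w w' : List (Letter B)} {s : RevStack B}
    {c : RevConfig P B} (h : ConcreteStep bot δ s.length (q, w) (p, w'))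
    (he : ExitTo bot δ (p, w' :: s) c) : ExitTo bot δ (q, w :: s) c := by
  obtain ⟨r, t⟩ := c
  obtain ⟨ht, hne, hE⟩ := he
  refine .intro ht hne ?_
  cases h with
  | push1 hx hδ => exact .push1 hx (by rwa [tagFor_fst] at hδ ⊢) hE
  | push2 hx hδ =>
    refine .push2 hx (by rwa [tagFor_fst] at hδ ⊢) ?_
    simpa only [List.map_cons, tagFor, eq_comm] using hE
  | pop1 hw hδ => exact .pop1 (by rwa [tagFor_fst] at hδ ⊢) hE
  | @collapse1 a _ _ _ hw ha hδ =>
    rcases a with a | a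
    · exact .collapse1 rfl hδ hE
    · simp [tagFor] at ha
  | loop hδ hR =>
    rw [unmarkWord_map_tagFor _ t.length] at hR
    exact .cloneReturn (by rwa [tagFor_fst] at hδ ⊢) hR hE

theorem ExitTo.loop_or_exitTo_of_clone {q p : P} {a : Letter B} {u : List (Letter B)}
    {s : RevStack B} {c : RevConfig P B} (hδ : δ q (symOf a) .clone2 p)
    (hl : LinksLE s.length (a :: u)) (he : ExitTo bot δ (p, (a :: u) :: (a :: u) :: s) c) :
    (c.2 = (a :: u) :: s ∧ ConcreteStep bot δ s.length (q, a :: u) (c.1, a :: u)) ∨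
    ExitTo bot δ (q, (a :: u) :: s) c := by
  obtain ⟨r, t⟩ := c
  obtain ⟨ht, hne, hE⟩ := he
  obtain rfl | hts := List.suffix_cons_iff.1 ht
  · rw [hl.map_tagFor (k := ((a :: u) :: s).length) (l := s.length) (Nat.lt_succ_self _),
      decide_eq_true rfl] at hE
    exact .inl ⟨rfl, .loop (by rwa [tagFor_fst]) hE⟩
  · have hlt : t.length < ((a :: u) :: s).length := Nat.lt_succ_of_le hts.length_le
    rw [decide_eq_false hlt.ne] at hE
    exact .inr (.intro hts hne (.cloneExit (by rwa [tagFor_fst]) hE))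

theorem ExitChain.length_le {m : ℕ} {c c' : RevConfig P B} (h : ExitChain bot δ m c c') :
    c'.2.length ≤ m := by
  induction h with
  | done h => exact h
  | step _ _ _ ih => exact ih

theorem ExitChain.eq_of_le {m : ℕ} {c c' : RevConfig P B} (h : ExitChain bot δ m c c')
    (hm : c.2.length ≤ m) : c = c' := by
  cases h with
  | done => rfl
  | step hc => exact absurd hm hc.not_ge

theorem ExitChain.suffix {m : ℕ} {c c' : RevConfig P B} (h : ExitChain bot δ m c c') :
    c'.2 <:+ c.2 := by
  induction h with
  | done => exact List.suffix_refl _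
  | step _ h _ ih => exact ih.trans h.suffix

theorem ExitChain.of_concreteStep {m : ℕ} {q p : P} {w w' : List (Letter B)} {s : RevStack B}
    {c : RevConfig P B} (hm : m < (w :: s).length)
    (hM : ConcreteStep bot δ s.length (q, w) (p, w')) (h : ExitChain bot δ m (p, w' :: s) c) :
    ExitChain bot δ m (q, w :: s) c := by
  cases h with
  | done h => exact absurd h hm.not_ge
  | step _ hE hC => exact .step hm (hM.exitTo hE) hC

theorem ExitChain.prepend {m : ℕ} {c c₁ c₂ : RevConfig P B} (hv : ValidLinks c.2)
    (hm : m < c.2.length) (hs : RevStep bot δ c c₁) (h : ExitChain bot δ m c₁ c₂) :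
    ExitChain bot δ m c c₂ := by
  obtain ⟨q, _ | ⟨w, s⟩⟩ := c
  · cases hs
  obtain ⟨p, x⟩ := c₁
  obtain ⟨w', rfl, hM⟩ | ⟨rfl, a, u, rfl, hδ⟩ | hE := hs.level_or_clone_or_exit
  · exact h.of_concreteStep hm hM
  · cases h with
    | done h => exact absurd h (Nat.lt_succ_of_lt hm).not_ge
    | @step _ d _ _ hE hC =>
      obtain ⟨d₁, d₂⟩ := d
      obtain ⟨rfl, hM⟩ | hE := hE.loop_or_exitTo_of_clone hδ hv.1
      exacts [hC.of_concreteStep hm hM, .step hm hE hC]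
  · exact .step hm hE h

theorem ExitChain.iff_exists {m m' : ℕ} (hm : m ≤ m') {c c₂ : RevConfig P B} :
    ExitChain bot δ m c c₂ ↔ ∃ c₁, ExitChain bot δ m' c c₁ ∧ ExitChain bot δ m c₁ c₂ := by
  constructor
  · intro h
    induction h with
    | done h => exact ⟨_, .done (h.trans hm), .done h⟩
    | @step c d c₂ hc hE hC ih =>
      by_cases hc' : m' < c.2.length
      · obtain ⟨c₁, hd, hc₁⟩ := ih
        exact ⟨c₁, .step hc' hE hd, hc₁⟩
      · exact ⟨c, .done (not_lt.1 hc'), .step hc hE hC⟩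
  · rintro ⟨c₁, h₁, h₂⟩
    induction h₁ with
    | done _ => exact h₂
    | step hc hE _ ih => exact .step (hm.trans_lt hc) hE (ih h₂)

/-! ### Soundness of exits and of level runs -/

theorem Exit.runAbove {b : Bool} {W : List (TaggedLetter B)} {q p : P} (h : Exit bot δ b W q p)
    {m : ℕ} {w : List (Letter B)} {s t : RevStack B} (hl : LinksLE s.length w) (ht : t <:+ s)
    (hm : m < t.length) (hb : b = decide (t.length = s.length))
    (hW : W = w.map (tagFor t.length)) : RunAbove bot δ m (q, w :: s) (p, t) := by
  have hms {s : RevStack B} {w} (ht : t <:+ s) : m < (w :: s).length :=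
    hm.trans_le (ht.length_le.trans (Nat.le_succ _))
  have hne : t ≠ [] := List.ne_nil_of_length_pos (Nat.zero_lt_of_lt hm)
  induction h generalizing m w s t with
      obtain ⟨a, w, rfl, rfl, rfl⟩ := List.map_eq_cons_iff.1 hW.symm
  | pop2 hδ =>
    rw [tagFor_fst] at hδ
    obtain rfl : t = s := ht.eq_of_length (of_decide_eq_true hb.symm)
    exact .single (hms ht) (.pop2 hne hδ) hm
  | collapse ha hδ =>
    rcases a with a | ⟨a, j⟩
    · simp [tagFor] at ha
    · obtain rfl : j = t.length := by simpa [tagFor] using ha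
      exact .single (hms ht) (.collapse2 hne ht hδ) hm
  | push1 hx hδ hE ih =>
    rw [tagFor_fst] at hδ
    exact .head (hms ht) (.push1 hx hδ) (ih hl.cons_inl ht hm hb rfl hms hne)
  | push2 hx hδ hE ih =>
    rw [tagFor_fst] at hδ
    refine .head (hms ht) (.push2 hx hδ) (ih (hl.cons_inr le_rfl) ht hm hb ?_ hms hne)
    simp only [List.map_cons, tagFor, hb, eq_comm]
  | pop1 hδ hE ih =>
    rw [tagFor_fst] at hδ
    exact .head (hms ht) (.pop1 (List.map_eq_nil_iff.not.1 hE.ne_nil) hδ)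
      (ih hl.tail ht hm hb rfl hms hne)
  | collapse1 ha hδ hE ih =>
    rcases a with a | ⟨a, j⟩
    · exact .head (hms ht) (.collapse1 (List.map_eq_nil_iff.not.1 hE.ne_nil) hδ)
        (ih hl.tail ht hm hb rfl hms hne)
    · simp [tagFor] at ha
  | cloneExit hδ hE ih =>
    rw [tagFor_fst] at hδ
    refine .head (hms ht) (.clone hδ) (ih (w := a :: w) (hl.mono (Nat.le_succ _))
      (ht.trans (List.suffix_cons _ _)) hm ?_ rfl hms hne)
    exact (decide_eq_false (Nat.lt_succ_of_le ht.length_le).ne).symm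
  | cloneReturn hδ hR hE ihR ihE =>
    rw [tagFor_fst] at hδ
    refine .head (hms ht) (.clone hδ) (.trans (ihR (w := a :: w) (hl.mono (Nat.le_succ _))
      (List.suffix_refl _) (hms ht) (decide_eq_true rfl).symm ?_ ?_ (List.cons_ne_nil _ _))
      (ihE (w := a :: w) hl ht hm hb rfl hms hne))
    · exact (hl.map_tagFor (Nat.lt_succ_self _)).symm
    · exact fun h => (hms ht).trans_le (h.length_le.trans (Nat.le_succ _))

theorem ExitTo.runAbove {m : ℕ} {c d : RevConfig P B} (h : ExitTo bot δ c d)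
    (hv : ValidLinks c.2) (hm : m < d.2.length) : RunAbove bot δ m c d := by
  obtain ⟨ht, -, hE⟩ := h
  exact hE.runAbove hv.1 ht hm rfl rfl

theorem ExitChain.runAbove {m m' : ℕ} {c d : RevConfig P B} (h : ExitChain bot δ m' c d)
    (hv : ValidLinks c.2) (hm : m < d.2.length) : RunAbove bot δ m c d := by
  induction h with
  | done _ => exact .refl hm
  | step _ hE hC ih =>
    exact (hE.runAbove hv (hm.trans_le hC.suffix.length_le)).trans (ih (hv.of_suffix hE.suffix) hm)

theorem ConcreteStep.runAbove {q p : P} {w w' : List (Letter B)} {s : RevStack B}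
    (h : ConcreteStep bot δ s.length (q, w) (p, w')) (hl : LinksLE s.length w) :
    RunAbove bot δ s.length (q, w :: s) (p, w' :: s) := by
  have hlt {w : List (Letter B)} : s.length < (w :: s).length := Nat.lt_succ_self _
  cases h with
  | push1 hx hδ => exact .single hlt (.push1 hx (by rwa [tagFor_fst] at hδ)) hlt
  | push2 hx hδ => exact .single hlt (.push2 hx (by rwa [tagFor_fst] at hδ)) hlt
  | pop1 hw hδ => exact .single hlt (.pop1 hw (by rwa [tagFor_fst] at hδ)) hlt
  | @collapse1 a _ _ _ hw ha hδ =>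
    rcases a with a | a
    · exact .single hlt (.collapse1 hw hδ) hlt
    · simp [tagFor] at ha
  | loop hδ hR =>
    refine .head hlt (.clone (by rwa [tagFor_fst] at hδ)) (hR.runAbove
      (hl.mono (Nat.le_succ _)) (List.suffix_refl _) hlt (decide_eq_true rfl).symm ?_)
    exact (hl.map_tagFor hlt).symm

theorem ConcreteRun.runAbove {c d : P × List (Letter B)} {s : RevStack B}
    (h : ConcreteRun bot δ s.length c d) (hv : ValidLinks (c.2 :: s)) :
    RunAbove bot δ s.length (c.1, c.2 :: s) (d.1, d.2 :: s) := by
  induction h with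
  | refl => exact .refl (Nat.lt_succ_self _)
  | tail _ h ih => exact ih.trans (h.runAbove (ih.validLinks hv).1)

/-! ### Decomposition of runs -/

theorem RunAbove.iff_or_exists_exitChain {m m' : ℕ} (hm : m ≤ m') {c c' : RevConfig P B}
    (hv : ValidLinks c.2) :
    RunAbove bot δ m c c' ↔
      RunAbove bot δ m' c c' ∨ ∃ c₁, ExitChain bot δ m' c c₁ ∧ RunAbove bot δ m c₁ c' := by
  constructor
  · intro h
    induction h using RunAbove.head_induction_on with
    | refl h =>
      by_cases hc : m' < c'.2.length
      · exact .inl (.refl hc)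
      · exact .inr ⟨c', .done (not_lt.1 hc), .refl h.lt_length_right⟩
    | head c c₁ hc hs hg ih =>
      by_cases hc' : m' < c.2.length
      · obtain hg | ⟨d, hC, hg⟩ := ih (hs.validLinks hv)
        exacts [.inl (.head hc' hs hg), .inr ⟨d, hC.prepend hv hc' hs, hg⟩]
      · exact .inr ⟨c, .done (not_lt.1 hc'), .head hc hs hg⟩
  · rintro (h | ⟨c₁, hC, h⟩)
    exacts [h.mono hm, (hC.runAbove hv h.1).trans h]

theorem RevStep.suffix {c c' : RevConfig P B} (h : RevStep bot δ c c') {t : RevStack B}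
    (ht : t.length < c'.2.length) (hs : t <:+ c'.2) : t <:+ c.2 := by
  obtain ⟨q, _ | ⟨w, s⟩⟩ := c
  · cases h
  have of_cons {v : List (Letter B)} {r : RevStack B} (hc' : c'.2 = v :: r) : t <:+ r := by
    rw [hc'] at ht hs
    obtain rfl | hs := List.suffix_cons_iff.1 hs
    exacts [absurd ht (lt_irrefl _), hs]
  obtain ⟨w', hc', -⟩ | ⟨hc', -⟩ | hE := h.level_or_clone_or_exit
  · exact (of_cons hc').trans (List.suffix_cons _ _)
  · exact of_cons hc'
  · exact hs.trans hE.suffix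

theorem RunAbove.suffix {c c' : RevConfig P B} {t : RevStack B}
    (h : RunAbove bot δ t.length c c') (ht : t <:+ c'.2) : t <:+ c.2 := by
  induction h using RunAbove.head_induction_on with
  | refl => exact ht
  | head c c₁ _ hs hg ih => exact hs.suffix hg.1 ih

/-- How a run above width `m` arrives, for the last time, at the level of a word on top of `Y`: by
descending from a wider stack, or by cloning the topmost word of `Y`. The arrival is in state `p`
with topmost word `w`. -/
inductive LevelOrigin (bot : B) (δ : P → B → Op B → P → Prop) (m : ℕ) (c : RevConfig P B)
    (p : P) : List (Letter B) → RevStack B → Prop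
  | chain {w Y} : ExitChain bot δ (Y.length + 1) c (p, w :: Y) → LevelOrigin bot δ m c p w Y
  | clone {p₀ a u Y} : RunAbove bot δ m c (p₀, (a :: u) :: Y) → δ p₀ (symOf a) .clone2 p →
      LevelOrigin bot δ m c p (a :: u) ((a :: u) :: Y)

/-- `FinalClimb bot δ p w Y q z`: a run from `(p, w :: Y)` to `(q, z ++ w :: Y)` that never
revisits the level of `w`. -/
inductive FinalClimb (bot : B) (δ : P → B → Op B → P → Prop) :
    P → List (Letter B) → RevStack B → P → RevStack B → Prop
  | stay {p w Y} : FinalClimb bot δ p w Y p []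
  | climb {p p' a u Y q z} : δ p (symOf a) .clone2 p' →
      RunAbove bot δ (Y.length + 1) (p', (a :: u) :: (a :: u) :: Y) (q, z ++ (a :: u) :: Y) →
      FinalClimb bot δ p (a :: u) Y q z

theorem FinalClimb.runAbove {p : P} {w : List (Letter B)} {Y : RevStack B} {q : P}
    {z : RevStack B} (h : FinalClimb bot δ p w Y q z) :
    RunAbove bot δ Y.length (p, w :: Y) (q, z ++ w :: Y) := by
  cases h with
  | stay => exact .refl (Nat.lt_succ_self _)
  | climb hδ hg => exact .head (Nat.lt_succ_self _) (.clone hδ) (hg.mono (Nat.le_succ _))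

theorem LevelOrigin.prepend {m : ℕ} {c c₁ : RevConfig P B} {p₁ : P} {w₁ : List (Letter B)}
    {Y : RevStack B} (hv : ValidLinks c.2) (hm : m < c.2.length) (hs : RevStep bot δ c c₁)
    (h : LevelOrigin bot δ m c₁ p₁ w₁ Y) :
    ∃ p w, LevelOrigin bot δ m c p w Y ∧ ConcreteRun bot δ Y.length (p, w) (p₁, w₁) := by
  cases h with
  | clone hg hδ => exact ⟨_, _, .clone (hg.head hm hs) hδ, .refl⟩
  | chain hC =>
    obtain ⟨q, _ | ⟨w, s⟩⟩ := c
    · cases hs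
    by_cases hlt : Y.length + 1 < (w :: s).length
    · exact ⟨_, _, .chain (hC.prepend hv hlt hs), .refl⟩
    have hs_le : s.length ≤ Y.length := Nat.le_of_succ_le_succ (not_lt.1 hlt)
    obtain ⟨p, x⟩ := c₁
    obtain ⟨w', rfl, hM⟩ | ⟨rfl, a, u, rfl, hδ⟩ | hE := hs.level_or_clone_or_exit
    · cases hC.eq_of_le (not_lt.1 hlt)
      exact ⟨q, w, .chain (.done le_rfl), .single hM⟩
    · cases hC with
      | done => exact ⟨_, _, .clone (.refl hm) hδ, .refl⟩
      | step hlt' hE hC =>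
        have hd_lt := hE.length_lt
        obtain rfl := hC.eq_of_le (by simp only [List.length_cons] at hd_lt hs_le ⊢; omega)
        obtain ⟨heq, hM⟩ | hE := hE.loop_or_exitTo_of_clone hδ hv.1
        · obtain ⟨rfl, rfl⟩ := List.cons_eq_cons.1 heq
          exact ⟨q, _, .chain (.done le_rfl), .single hM⟩
        · have := hE.length_lt
          simp only [List.length_cons] at this
          omega
    · have hlt := hE.length_lt
      obtain ⟨⟩ := hC.eq_of_le (by simp only [List.length_cons] at hlt ⊢; omega)
      simp only [List.length_cons] at hlt
      omega

theorem RunAbove.split {m : ℕ} {c : RevConfig P B} {q : P} {z Y : RevStack B}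
    {w : List (Letter B)} (h : RunAbove bot δ m c (q, z ++ w :: Y)) (hv : ValidLinks c.2) :
    (w :: Y <:+ c.2 ∧ RunAbove bot δ (Y.length + 1) c (q, z ++ w :: Y)) ∨
    ∃ p₁ w₁ p, LevelOrigin bot δ m c p₁ w₁ Y ∧ ConcreteRun bot δ Y.length (p₁, w₁) (p, w) ∧
      FinalClimb bot δ p w Y q z := by
  induction h using RunAbove.head_induction_on with
  | refl =>
    rcases z with _ | ⟨v, z⟩
    · exact .inr ⟨q, w, q, .chain (.done le_rfl), .refl, .stay⟩
    · exact .inl ⟨List.suffix_append _ _, .refl (by simp)⟩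
  | head c c₁ hc hs hg ih =>
    obtain ⟨hsuf, hg⟩ | ⟨p₁, w₁, p, hO, hM, hF⟩ := ih (hs.validLinks hv)
    · by_cases hlt : Y.length + 1 < c.2.length
      · exact .inl ⟨hs.suffix hg.1 hsuf, .head hlt hs hg⟩
      obtain ⟨q₀, _ | ⟨v, s⟩⟩ := c
      · cases hs
      obtain ⟨p₀, x⟩ := c₁
      have hg_lt := hg.1
      simp only [List.length_cons] at hlt hg_lt
      obtain ⟨w', rfl, -⟩ | ⟨rfl, a, u, rfl, hδ⟩ | hE := hs.level_or_clone_or_exit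
      · exact absurd hg_lt hlt
      · obtain ⟨rfl, rfl⟩ : w = a :: u ∧ Y = s := by
          refine List.cons_eq_cons.1 (((List.suffix_cons_iff.1 hsuf).resolve_left fun h => ?_)
            |>.eq_of_length ?_)
          · exact hg_lt.ne (congrArg List.length h)
          · simp only [List.length_cons] at hg_lt ⊢; omega
        exact .inr ⟨q₀, _, q₀, .chain (.done le_rfl), .refl, .climb hδ hg⟩
      · exact absurd (hg_lt.trans hE.length_lt) hlt
    · obtain ⟨p₀, w₀, hO, hM₀⟩ := hO.prepend hv hc hs
      exact .inr ⟨p₀, w₀, p, hO, hM₀.trans hM, hF⟩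

end RevRun

section Loop

variable {P B : Type} {bot : B} {δ : P → B → Op B → P → Prop} {n : ℕ}

/-- The letters that can be pushed on the topmost word of a stack of width `n + 1`. -/
def IsFresh (n : ℕ) (a : Letter B) : Prop := ∃ x, a = Sum.inl x ∨ a = Sum.inr (x, n)

theorem IsFresh.eq_of_tagFor_eq {a b : Letter B} (ha : IsFresh n a)
    (h : tagFor n a = tagFor n b) : a = b := by
  obtain ⟨x, rfl | rfl⟩ := ha <;> rcases b with b | ⟨b, k⟩ <;> simp_all [tagFor]

/-- The words reachable from `v` on level `n + 1`. On those that are tagged like a suffix of `v`,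
the links can be recovered from the tags (`FreshOver.eq_of_map_tagFor_eq`). -/
inductive FreshOver (n : ℕ) (v : List (Letter B)) : List (Letter B) → Prop
  | suffix {w} : w <:+ v → FreshOver n v w
  | cons {a w} : IsFresh n a → FreshOver n v w → FreshOver n v (a :: w)

theorem FreshOver.tail {v w : List (Letter B)} {a : Letter B} (h : FreshOver n v (a :: w)) :
    FreshOver n v w := by
  cases h with
  | suffix h => exact .suffix ((List.suffix_cons _ _).trans h)
  | cons _ h => exact h

theorem FreshOver.eq_of_map_tagFor_eq {v w t : List (Letter B)} (h : FreshOver n v w)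
    (ht : t <:+ v) (he : w.map (tagFor n) = t.map (tagFor n)) : w = t := by
  induction h generalizing t with
  | suffix hw =>
    have hlen := by simpa using congrArg List.length he
    exact (List.suffix_of_suffix_length_le hw ht hlen.le).eq_of_length hlen
  | cons ha _ ih =>
    obtain ⟨b, t, rfl, hb, he⟩ := List.map_eq_cons_iff.1 he.symm
    rw [ha.eq_of_tagFor_eq hb.symm, ih ((List.suffix_cons _ _).trans ht) he.symm]

theorem ConcreteStep.abstractStep {c c' : P × List (Letter B)} (h : ConcreteStep bot δ n c c') :
    AbstractStep bot δ (c.1, c.2.map (tagFor n)) (c'.1, c'.2.map (tagFor n)) := by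
  cases h with
  | push1 hx hδ => exact .push1 hx hδ
  | push2 hx hδ =>
    simp only [List.map_cons, tagFor, decide_true]
    exact .push2 hx hδ
  | pop1 hw hδ => exact .pop1 (List.map_eq_nil_iff.not.2 hw) hδ
  | collapse1 hw ha hδ => exact .collapse1 (List.map_eq_nil_iff.not.2 hw) ha hδ
  | loop hδ hR => exact .loop hδ (by rwa [List.map_id, ← List.map_cons])

theorem AbstractStep.exists_concreteStep {q q' : P} {v w : List (Letter B)}
    {W : List (TaggedLetter B)} (h : AbstractStep bot δ (q, w.map (tagFor n)) (q', W))
    (hw : FreshOver n v w) :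
    ∃ w', W = w'.map (tagFor n) ∧ FreshOver n v w' ∧ ConcreteStep bot δ n (q, w) (q', w') := by
  rcases w with _ | ⟨a, w⟩
  · cases h
  rw [List.map_cons] at h
  cases h with
  | @push1 _ _ _ _ x hx hδ => exact ⟨_, rfl, .cons ⟨x, .inl rfl⟩ hw, .push1 hx hδ⟩
  | @push2 _ _ _ _ x hx hδ =>
    exact ⟨_, by simp [tagFor], .cons ⟨x, .inr rfl⟩ hw, .push2 hx hδ⟩
  | pop1 hne hδ => exact ⟨w, rfl, hw.tail, .pop1 (List.map_eq_nil_iff.not.1 hne) hδ⟩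
  | collapse1 hne ha hδ =>
    exact ⟨w, rfl, hw.tail, .collapse1 (List.map_eq_nil_iff.not.1 hne) ha hδ⟩
  | loop hδ hR => exact ⟨a :: w, rfl, hw, .loop hδ (by rwa [List.map_id, ← List.map_cons] at hR)⟩

theorem concreteRun_loop_iff {p q : P} {v : List (Letter B)} :
    ConcreteRun bot δ n (p, v) (q, v) ↔ AbstractLoop bot δ (v.map (tagFor n)) p q := by
  constructor
  · exact fun h => Relation.ReflTransGen.lift
      (fun c : P × List (Letter B) => (c.1, c.2.map (tagFor n)))
      (fun _ _ => ConcreteStep.abstractStep) _ _ h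
  · intro h
    have lift (c) (h : AbstractRun bot δ (p, v.map (tagFor n)) c) : ∃ w, c.2 = w.map (tagFor n) ∧
        FreshOver n v w ∧ ConcreteRun bot δ n (p, v) (c.1, w) := by
      induction h with
      | refl => exact ⟨v, rfl, .suffix (List.suffix_refl _), .refl⟩
      | @tail c d _ h ih =>
        obtain ⟨c₁, _⟩ := c
        obtain ⟨w, rfl, hw, hr⟩ := ih
        obtain ⟨w', hd, hw', hs⟩ := AbstractStep.exists_concreteStep h hw
        exact ⟨w', hd, hw', hr.tail hs⟩
    obtain ⟨w, he, hw, hr⟩ := lift _ h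
    rwa [hw.eq_of_map_tagFor_eq (List.suffix_refl _) he.symm] at hr

end Loop

section Suffix

variable {α : Type} {a b : α} {s t u : List α}

theorem eq_of_suffix_of_length_eq (hs : s <:+ u) (ht : t <:+ u) (hl : s.length = t.length) :
    s = t :=
  (List.suffix_of_suffix_length_le hs ht hl.le).eq_of_length hl

theorem eq_of_cons_suffix (ha : a :: s <:+ u) (hb : b :: s <:+ u) : a = b :=
  (List.cons.inj (eq_of_suffix_of_length_eq ha hb rfl)).1

theorem exists_cons_suffix (h : s <:+ u) (hl : s.length < u.length) : ∃ a, a :: s <:+ u := by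
  obtain ⟨t, rfl⟩ := h
  obtain rfl | ⟨t, a, rfl⟩ := List.eq_nil_or_concat t
  · exact absurd hl (lt_irrefl _)
  · exact ⟨a, t, by simp⟩

theorem not_cons_suffix (a : α) (s : List α) : ¬ a :: s <:+ s :=
  fun h => (Nat.lt_succ_self _).not_ge h.length_le

end Suffix

/-! ## Stacks as forests -/

section Forest

variable {B : Type}

/-- Labels of forest nodes: `none` marks the end of a word, and `some (σ, l)` is a letter with
symbol `σ` whose link is of level 2 iff `l = true`. -/
abbrev NodeLabel (B : Type) := Option (B × Bool)

/-- The encoding of stacks. A node `node (some x) C r` is a maximal block of words which share their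
next letter `x`: the words of the block continue as in `C`, and `r` encodes the words after the
block. A node `node none nil r` is a word that ends here, followed by the words of `r`. -/
abbrev Forest (B : Type) := BinaryTree (NodeLabel B)

/-- The letter of a node whose first word is pushed on a stack of width `n`. -/
def letterAt (x : B × Bool) (n : ℕ) : Letter B := if x.2 then Sum.inr (x.1, n) else Sum.inl x.1

/-- Pushes the words of a forest on `s`, as extensions of the common suffix `v`. -/
def decode : Forest B → List (Letter B) → RevStack B → RevStack B
  | .nil, _, s => s
  | .node none _ r, v, s => decode r v (v :: s)
  | .node (some x) C r, v, s => decode r v (decode C (letterAt x s.length :: v) s)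

/-- The label of the root. -/
def rootLabel {α : Type} : BinaryTree α → Option α
  | .nil => none
  | .node a _ _ => some a

/-- Blocks are nonempty, ends of words have no left child, and two adjacent blocks do not start with
the same letter of level 1. (With level 2 the letters of adjacent blocks differ in their links.) -/
def IsCanonical : Forest B → Prop
  | .nil => True
  | .node none l r => l = .nil ∧ IsCanonical r
  | .node (some x) C r =>
    C ≠ .nil ∧ IsCanonical C ∧ IsCanonical r ∧ (x.2 = false → rootLabel r ≠ some (some x))

/-- Pushes the word `v` if `e` holds. Inside a block the words are decoded on top of a stack with
or without a pending word `v`, according to `e`. -/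
def pushIf (e : Bool) (v : List (Letter B)) (s : RevStack B) : RevStack B := if e then v :: s else s

@[simp] theorem pushIf_true (v : List (Letter B)) (s : RevStack B) : pushIf true v s = v :: s := rfl

@[simp] theorem pushIf_false (v : List (Letter B)) (s : RevStack B) : pushIf false v s = s := rfl

theorem length_pushIf (e : Bool) (v : List (Letter B)) (s : RevStack B) :
    (pushIf e v s).length = s.length + if e then 1 else 0 := by
  cases e <;> simp

/-- `Z` arises from `s` by pushing words with suffix `v`. -/
def Extends (v : List (Letter B)) (s Z : RevStack B) : Prop := ∃ z, Z = z ++ s ∧ ∀ w ∈ z, v <:+ w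

namespace Extends

variable {u v w : List (Letter B)} {s Y Z : RevStack B}

theorem refl (v : List (Letter B)) (s : RevStack B) : Extends v s s := ⟨[], rfl, by simp⟩

theorem suffix (h : Extends v s Z) : s <:+ Z := by
  obtain ⟨z, rfl, -⟩ := h
  exact List.suffix_append _ _

theorem cons (h : Extends v s Z) (hw : v <:+ w) : Extends v s (w :: Z) := by
  obtain ⟨z, rfl, h⟩ := h
  exact ⟨w :: z, rfl, List.forall_mem_cons.2 ⟨hw, h⟩⟩

theorem trans (h : Extends v s Y) (h' : Extends v Y Z) : Extends v s Z := by
  obtain ⟨z, rfl, h⟩ := h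
  obtain ⟨z', rfl, h'⟩ := h'
  exact ⟨z' ++ z, (List.append_assoc _ _ _).symm, List.forall_mem_append.2 ⟨h', h⟩⟩

theorem weaken (h : Extends v s Z) (hu : u <:+ v) : Extends u s Z := by
  obtain ⟨z, rfl, h⟩ := h
  exact ⟨z, rfl, fun w hw => hu.trans (h w hw)⟩

theorem pushIf (h : Extends v s Z) (hw : v <:+ w) (e : Bool) : Extends v s (pushIf e w Z) := by
  cases e
  · exact h
  · exact h.cons hw

theorem suffix_of_cons_suffix (h : Extends v s Z) {T : RevStack B} (hT : w :: T <:+ Z)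
    (hl : s.length ≤ T.length) : v <:+ w := by
  obtain ⟨z, rfl, h⟩ := h
  obtain ⟨t, ht⟩ := List.suffix_of_suffix_length_le (List.suffix_append z s)
    hT (hl.trans (Nat.le_succ _))
  rcases t with _ | ⟨a, t⟩
  · rw [List.nil_append] at ht
    exact absurd (ht ▸ hl) (Nat.lt_succ_self _).not_ge
  · obtain ⟨rfl, -⟩ := List.cons_eq_cons.1 ht
    rw [← ht, List.suffix_append_self_iff] at hT
    exact h a (hT.subset List.mem_cons_self)

end Extends

theorem decode_extends (F : Forest B) (v : List (Letter B)) (s : RevStack B) :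
    Extends v s (decode F v s) := by
  induction F generalizing v s with
  | nil => exact .refl _ _
  | node a C r ihC ihr =>
    rcases a with _ | x
    · exact ((Extends.refl v s).cons (List.suffix_refl _)).trans (ihr _ _)
    · exact ((ihC _ _).weaken (List.suffix_cons _ _)).trans (ihr _ _)

theorem suffix_decode (F : Forest B) (v : List (Letter B)) (s : RevStack B) : s <:+ decode F v s :=
  (decode_extends F v s).suffix

theorem suffix_pushIf_decode (F : Forest B) (e : Bool) (v : List (Letter B)) (s : RevStack B) :
    s <:+ pushIf e v (decode F v s) :=
  ((decode_extends F v s).pushIf (List.suffix_refl _) e).suffix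

theorem length_le_length_decode (F : Forest B) (v : List (Letter B)) (s : RevStack B) :
    s.length ≤ (decode F v s).length :=
  (suffix_decode F v s).length_le

theorem length_lt_length_decode {F : Forest B} (hF : IsCanonical F) (hn : F ≠ .nil)
    (v : List (Letter B)) (s : RevStack B) : s.length < (decode F v s).length := by
  induction F generalizing v s with
  | nil => exact absurd rfl hn
  | node a C r ihC =>
    rcases a with _ | x
    · exact (Nat.lt_succ_self _).trans_le (length_le_length_decode r v (v :: s))
    · exact (ihC hF.2.1 hF.1 _ s).trans_le (length_le_length_decode r v _)

theorem LinksLE.letterAt {n : ℕ} {v : List (Letter B)} (h : LinksLE n v) (x : B × Bool) :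
    LinksLE n (letterAt x n :: v) := by
  rcases x with ⟨x, _ | _⟩
  · exact h.cons_inl
  · exact h.cons_inr le_rfl

theorem ValidLinks.decode {v : List (Letter B)} {s : RevStack B} (hs : ValidLinks s)
    (hv : LinksLE s.length v) (F : Forest B) : ValidLinks (decode F v s) := by
  induction F generalizing v s with
  | nil => exact hs
  | node a C r ihC ihr =>
    rcases a with _ | x
    · exact ihr ⟨hv, hs⟩ (hv.mono (Nat.le_succ _))
    · exact ihr (ihC hs (hv.letterAt x)) (hv.mono (length_le_length_decode _ _ _))

theorem ValidLinks.pushIf {v : List (Letter B)} {s : RevStack B} (hs : ValidLinks s)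
    (hv : LinksLE s.length v) (e : Bool) : ValidLinks (pushIf e v s) := by
  cases e
  · exact hs
  · exact ⟨hv, hs⟩

/-! ### Canonical forests are determined by their stacks -/

theorem letterAt_inj {x y : B × Bool} {n : ℕ} (h : letterAt x n = letterAt y n) : x = y := by
  rcases x with ⟨x, _ | _⟩ <;> rcases y with ⟨y, _ | _⟩ <;> simp_all [letterAt]

theorem eq_of_letterAt_eq {x y : B × Bool} {n m : ℕ} (hnm : n ≠ m)
    (h : letterAt x n = letterAt y m) : x = y ∧ x.2 = false := by
  rcases x with ⟨x, _ | _⟩ <;> rcases y with ⟨y, _ | _⟩ <;> simp_all [letterAt]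

/-- What the root label of `F` says about the first word `w` that `F` pushes on a stack of width `n`
below the pending word `v`. -/
def FirstWord (F : Forest B) (v : List (Letter B)) (n : ℕ) (w : List (Letter B)) : Prop :=
  match rootLabel F with
  | some (some x) => letterAt x n :: v <:+ w
  | _ => w = v

theorem firstWord_of_cons_suffix {F : Forest B} (hF : IsCanonical F) {e : Bool}
    {v w : List (Letter B)} {s : RevStack B} (h : w :: s <:+ pushIf e v (decode F v s)) :
    FirstWord F v s.length w := by
  rcases F with _ | ⟨_ | x, C, r⟩
  · cases e
    · exact absurd h (not_cons_suffix _ _)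
    · exact (List.cons.inj (h.eq_of_length rfl)).1
  · exact eq_of_cons_suffix h (suffix_pushIf_decode r e v (v :: s))
  · have hlt := length_lt_length_decode hF.2.1 hF.1 (letterAt x s.length :: v) s
    obtain ⟨w', hw'⟩ := exists_cons_suffix (suffix_decode C (letterAt x s.length :: v) s) hlt
    obtain rfl := eq_of_cons_suffix h (hw'.trans (suffix_pushIf_decode r e v _))
    exact (decode_extends C _ s).suffix_of_cons_suffix hw' le_rfl

theorem FirstWord.exists_eq_node {F : Forest B} {v w : List (Letter B)} {n : ℕ}
    (h : FirstWord F v n w) {x : B × Bool} (hx : letterAt x n :: v <:+ w) :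
    ∃ C r, F = .node (some x) C r := by
  rcases F with _ | ⟨_ | y, C, r⟩
  · cases h
    exact absurd hx (not_cons_suffix _ _)
  · cases h
    exact absurd hx (not_cons_suffix _ _)
  · exact ⟨C, r, by rw [letterAt_inj (eq_of_cons_suffix hx h)]⟩

/-- Blocks are maximal. -/
theorem not_suffix_of_after_block {x : B × Bool} {C r : Forest B}
    (hF : IsCanonical (.node (some x) C r)) {e : Bool} {v w : List (Letter B)} {s : RevStack B}
    (h : w :: decode C (letterAt x s.length :: v) s <:+
      pushIf e v (decode (.node (some x) C r) v s)) :
    ¬ letterAt x s.length :: v <:+ w := by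
  intro hx
  have hw := firstWord_of_cons_suffix hF.2.2.1 h
  have hlt := length_lt_length_decode hF.2.1 hF.1 (letterAt x s.length :: v) s
  unfold FirstWord at hw
  split at hw
  · next y hy =>
    obtain ⟨rfl, hlevel⟩ := eq_of_letterAt_eq hlt.ne (eq_of_cons_suffix hx hw)
    exact hF.2.2.2 hlevel hy
  · subst hw
    exact not_cons_suffix _ _ hx

theorem length_decode_block_le {x : B × Bool} {C r C' r' : Forest B}
    (hF : IsCanonical (.node (some x) C r)) {v : List (Letter B)} {s : RevStack B}
    (h : decode (.node (some x) C r) v s = decode (.node (some x) C' r') v s) :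
    (decode C' (letterAt x s.length :: v) s).length ≤
      (decode C (letterAt x s.length :: v) s).length := by
  have hC : decode C (letterAt x s.length :: v) s <:+ decode (.node (some x) C r) v s :=
    suffix_decode r v _
  have hC' : decode C' (letterAt x s.length :: v) s <:+ decode (.node (some x) C r) v s :=
    h ▸ suffix_decode r' v _
  by_contra! hlt
  obtain ⟨w, hw⟩ := exists_cons_suffix (List.suffix_of_suffix_length_le hC hC' hlt.le) hlt
  exact not_suffix_of_after_block (e := false) hF (hw.trans hC')
    ((decode_extends C' _ s).suffix_of_cons_suffix hw (length_le_length_decode C _ s))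

theorem decode_injective {F F' : Forest B} {v : List (Letter B)} {s : RevStack B}
    (hF : IsCanonical F) (hF' : IsCanonical F') (h : decode F v s = decode F' v s) : F = F' := by
  induction F generalizing F' v s with
  | nil =>
    by_contra hn
    exact (length_lt_length_decode hF' (Ne.symm hn) v s).ne (congrArg List.length h)
  | node a C r ihC ihr =>
    have hlt := length_lt_length_decode hF nofun v s
    obtain ⟨w, hw⟩ := exists_cons_suffix (suffix_decode _ v s) hlt
    have hfirst := firstWord_of_cons_suffix (e := false) hF hw
    have hfirst' := firstWord_of_cons_suffix (e := false) hF' (h ▸ hw)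
    rcases a with _ | x
    · obtain rfl : w = v := hfirst
      rcases F' with _ | ⟨_ | x', C', r'⟩
      · exact absurd (congrArg List.length h) hlt.ne'
      · rw [ihr hF.2 hF'.2 h, hF.1, hF'.1]
      · exact absurd hfirst' (not_cons_suffix _ _)
    · obtain ⟨C', r', rfl⟩ := hfirst'.exists_eq_node hfirst
      have hC := eq_of_suffix_of_length_eq (h ▸ suffix_decode r v _) (suffix_decode r' v _)
        ((length_decode_block_le hF' h.symm).antisymm (length_decode_block_le hF h))
      obtain rfl := ihC hF.2.1 hF'.2.1 hC
      rw [ihr hF.2.2.1 hF'.2.2.1 h]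

end Forest

/-! ## Runs between forests -/

section Transfer

variable {P B : Type} (bot : B) (δ : P → B → Op B → P → Prop)

/-- The operation `op` leads from `p` to `p'` on a word of type `τ`. -/
def WordType.Enables (τ : WordType P B) (op : Op B) (p p' : P) : Prop :=
  ∃ a, τ.marked.topSymbol = some a ∧ δ p a op p'

/-- The letter `x` can be pushed on a word of type `τ`. -/
def WordType.EnablesPush (τ : WordType P B) (x : B × Bool) (p p' : P) : Prop :=
  x.1 ≠ bot ∧ τ.Enables δ (if x.2 then .push2 x.1 else .push1 x.1) p p'

/-- The topmost letter `x` can be removed without changing the width. -/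
def CanPop (x : B × Bool) (p p' : P) : Prop :=
  δ p x.1 .pop1 p' ∨ (x.2 = false ∧ δ p x.1 .collapse p')

/-- The letter of a forest node as a tagged letter. -/
def tagged (x : B × Bool) (b : Bool) : TaggedLetter B := (x.1, if x.2 then some b else none)

/-- `Descent bot δ F e b τ q q'`: an exit chain from the stack `pushIf e v (decode F v s)` to a
nonempty suffix `y` of `s`, where `b` tells whether `y = s` and `τ` is the type of `v` with the
links to `y` marked. See `descentCorrect`. -/
def Descent : Forest B → Bool → Bool → WordType P B → P → P → Prop
  | .nil, e, b, τ, q, q' => if e then τ.marked.exit b q q' else b = true ∧ q = q'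
  | .node none _ r, e, b, τ, q, q' =>
    Descent r e false τ q q' ∨ ∃ p, Descent r e true τ.unmark q p ∧ τ.marked.exit b p q'
  | .node (some x) C r, e, b, τ, q, q' =>
    Descent r e false τ q q' ∨
      ∃ p, Descent r e true τ.unmark q p ∧ Descent C false b (τ.cons bot δ (tagged x b)) p q'

/-- How a run proceeds after arriving in a block of words with next letter `x`: it ends inside the
last block, or it leaves the block by removing `x`. -/
def ThroughBlock (x : B × Bool) (last : Prop) (inside : Bool → P → P → Prop)
    (after : P → P → Prop) (p q : P) : Prop :=
  (last ∧ inside false p q) ∨ ∃ p₁ p₂, inside true p p₁ ∧ CanPop δ x p₁ p₂ ∧ after p₂ q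

/-- `Ascent bot δ F e τ p q`: a run from `v :: s` to `pushIf e v (decode F v s)` on which `s` stays
untouched, where `τ` is the type of `v`. See `ascentCorrect`. -/
def Ascent : Forest B → Bool → WordType P B → P → P → Prop
  | .nil, e, τ, p, q => e = true ∧ τ.marked.loop p q
  | .node none _ r, e, τ, p, q =>
    (r = .nil ∧ e = false ∧ τ.marked.loop p q) ∨
      ∃ p₁ p₂, τ.marked.loop p p₁ ∧ τ.Enables δ .clone2 p₁ p₂ ∧ Ascent r e τ.unmark p₂ q
  | .node (some x) C r, e, τ, p, q =>
    ∃ p₁ p₂, τ.marked.loop p p₁ ∧ τ.EnablesPush bot δ x p₁ p₂ ∧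
      ThroughBlock δ x (r = .nil ∧ e = false)
        (fun e' => Ascent C e' (τ.cons bot δ (tagged x true))) (Ascent r e τ.unmark) p₂ q

/-- `Transfer bot δ F F' e e' τ q q'`: a run from `pushIf e v (decode F v s)` to
`pushIf e' v (decode F' v s)` on which `s` stays untouched, where `τ` is the type of `v`.
See `transferCorrect`. -/
def Transfer : Forest B → Forest B → Bool → Bool → WordType P B → P → P → Prop
  | .nil, F', e, e', τ, q, q' => e = true ∧ Ascent bot δ F' e' τ q q'
  | .node none _ r, F', e, e', τ, q, q' =>
    (∃ p, Descent bot δ r e true τ.unmark q p ∧ Ascent bot δ F' e' τ p q') ∨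
      ∃ l' r', F' = .node none l' r' ∧ Transfer r r' e e' τ.unmark q q'
  | .node (some x) C r, F', e, e', τ, q, q' =>
    (∃ p, Descent bot δ r e true τ.unmark q p ∧
      ((∃ p₁ p₂, Transfer C .nil false true (τ.cons bot δ (tagged x true)) p p₁ ∧
          CanPop δ x p₁ p₂ ∧ Ascent bot δ F' e' τ p₂ q') ∨
        ∃ C' r', F' = .node (some x) C' r' ∧
          ThroughBlock δ x (r' = .nil ∧ e' = false)
            (fun f => Transfer C C' false f (τ.cons bot δ (tagged x true)))
            (Ascent bot δ r' e' τ.unmark) p q')) ∨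
    ∃ C' r', F' = .node (some x) C' r' ∧
      ((C' = C ∧ Transfer r r' e e' τ.unmark q q') ∨
      (x.2 = false ∧ ∃ p₁ p₂, Transfer r .nil e true τ.unmark q p₁ ∧
        τ.unmark.EnablesPush bot δ x p₁ p₂ ∧
        ThroughBlock δ x (r' = .nil ∧ e' = false)
          (fun f => Transfer C C' true f (τ.cons bot δ (tagged x true)))
          (Ascent bot δ r' e' τ.unmark) p₂ q'))

variable {bot δ}

/-! ### Tags and types of words -/

theorem unmark_tagged (x : B × Bool) : unmark (tagged x false) = tagged x false := by
  rcases x with ⟨x, _ | _⟩ <;> rfl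

theorem tagFor_letterAt (x : B × Bool) (n k : ℕ) :
    tagFor k (letterAt x n) = tagged x (decide (n = k)) := by
  rcases x with ⟨x, _ | _⟩ <;> rfl

theorem LinksLE.wordType_map_tagFor {n k : ℕ} {w : List (Letter B)} (h : LinksLE n w) (hk : n < k)
    (l : ℕ) :
    wordType bot δ (w.map (tagFor k)) = (wordType bot δ (w.map (tagFor l))).unmark := by
  rw [h.map_tagFor (l := l) hk, wordType_unmarkWord]

theorem wordType_cons_letterAt (x : B × Bool) (n k : ℕ) (v : List (Letter B)) :
    wordType bot δ ((letterAt x n :: v).map (tagFor k)) =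
      (wordType bot δ (v.map (tagFor k))).cons bot δ (tagged x (decide (n = k))) := by
  rw [List.map_cons, tagFor_letterAt, WordType.cons_wordType]

theorem wordType_enables_iff {n : ℕ} {v : List (Letter B)} {op : Op B} {p p' : P} :
    (wordType bot δ (v.map (tagFor n))).Enables δ op p p' ↔
      ∃ a u, v = a :: u ∧ δ p (symOf a) op p' := by
  rcases v with _ | ⟨a, u⟩
  · exact ⟨nofun, nofun⟩
  · constructor
    · rintro ⟨_, ⟨⟩, hδ⟩
      exact ⟨a, u, rfl, tagFor_fst n a ▸ hδ⟩
    · rintro ⟨_, _, ⟨⟩, hδ⟩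
      exact ⟨_, rfl, (tagFor_fst n a).symm ▸ hδ⟩

theorem concreteStep_push_iff {n k : ℕ} {x : B × Bool} (hx : k = n ∨ x.2 = false)
    {v : List (Letter B)} {p p' : P} :
    ConcreteStep bot δ n (p, v) (p', letterAt x k :: v) ↔
      (wordType bot δ (v.map (tagFor n))).EnablesPush bot δ x p p' := by
  rw [WordType.EnablesPush, wordType_enables_iff]
  constructor
  · intro h
    rcases x with ⟨x, _ | _⟩
    · change ConcreteStep bot δ n (p, v) (p', Sum.inl x :: v) at h
      cases h with
      | push1 hne hδ => exact ⟨hne, _, _, rfl, tagFor_fst n _ ▸ hδ⟩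
    · change ConcreteStep bot δ n (p, v) (p', Sum.inr (x, k) :: v) at h
      cases h with
      | push2 hne hδ => exact ⟨hne, _, _, rfl, tagFor_fst n _ ▸ hδ⟩
  · rintro ⟨hne, a, u, rfl, hδ⟩
    rw [← tagFor_fst n] at hδ
    rcases x with ⟨x, _ | _⟩
    · exact .push1 hne hδ
    · obtain rfl := hx.resolve_right nofun
      exact .push2 hne hδ

theorem concreteStep_pop_iff {n k : ℕ} {x : B × Bool} {v : List (Letter B)} {p p' : P}
    (hv : v ≠ []) : ConcreteStep bot δ n (p, letterAt x k :: v) (p', v) ↔ CanPop δ x p p' := by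
  constructor
  · intro h
    generalize ha : letterAt x k = a at h
    cases h with
    | pop1 _ hδ =>
      rw [← ha, tagFor_letterAt] at hδ
      exact .inl hδ
    | collapse1 _ htag hδ =>
      rw [← ha, tagFor_letterAt] at hδ htag
      exact .inr ⟨by simpa [tagged] using htag, hδ⟩
  · rintro (hδ | ⟨hx, hδ⟩)
    · exact .pop1 hv (by rwa [tagFor_letterAt])
    · exact .collapse1 hv (by rw [tagFor_letterAt]; simp [tagged, hx]) (by rwa [tagFor_letterAt])

/-! ### Descents -/

theorem ExitChain.ne_nil {m : ℕ} {c c' : RevConfig P B} (h : ExitChain bot δ m c c')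
    (hc : c.2 ≠ []) : c'.2 ≠ [] := by
  induction h with
  | done => exact hc
  | step _ hE _ ih => exact ih (by cases hE; assumption)

theorem exitChain_one_iff {w : List (Letter B)} {s y : RevStack B} {q q' : P} (hy : y <:+ s)
    (hne : y ≠ []) : ExitChain bot δ s.length (q, w :: s) (q', y) ↔
      Exit bot δ (decide (y.length = s.length)) (w.map (tagFor y.length)) q q' := by
  constructor
  · intro h
    cases h with
    | done h => exact absurd h (Nat.lt_succ_self _).not_ge
    | step _ hE hC =>
      obtain ⟨ht, htne, hE⟩ := hE
      cases hC.eq_of_le ht.length_le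
      exact hE
  · exact fun hE => .step (Nat.lt_succ_self _) (.intro hy hne hE) (.done hy.length_le)

theorem not_descent_false_unmarkWord (F : Forest B) (e : Bool) (w : List (TaggedLetter B))
    (q q' : P) : ¬ Descent bot δ F e false (wordType bot δ (unmarkWord w)) q q' := by
  induction F generalizing e w q q' with
  | nil =>
    cases e
    · exact fun h => Bool.false_ne_true h.1
    · exact Exit.not_false_unmarkWord
  | node a C r ihC ihr =>
    rcases a with _ | x
    · rintro (h | ⟨p, -, h⟩)
      exacts [ihr _ _ _ _ h, Exit.not_false_unmarkWord h]
    · rintro (h | ⟨p, -, h⟩)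
      · exact ihr _ _ _ _ h
      · rw [WordType.cons_wordType, ← unmark_tagged] at h
        exact ihC _ (tagged x false :: w) _ _ h

variable (bot δ) in
/-- `Descent` describes the exit chains that start in decodings of `F`. -/
def DescentCorrect (F : Forest B) : Prop :=
  ∀ ⦃e : Bool⦄ ⦃v : List (Letter B)⦄ ⦃s y : RevStack B⦄ ⦃q q' : P⦄, y <:+ s → y ≠ [] →
    LinksLE s.length v →
    (Descent bot δ F e (decide (y.length = s.length)) (wordType bot δ (v.map (tagFor y.length)))
        q q' ↔
      ExitChain bot δ s.length (q, pushIf e v (decode F v s)) (q', y))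

namespace DescentCorrect

variable {F : Forest B} {e : Bool} {v : List (Letter B)} {n : ℕ} {S y : RevStack B} {q p : P}

theorem unmark_iff (hF : DescentCorrect bot δ F) (hl : LinksLE n v) (hn : n < S.length) (k : ℕ) :
    Descent bot δ F e true (wordType bot δ (v.map (tagFor k))).unmark q p ↔
      ExitChain bot δ S.length (q, pushIf e v (decode F v S)) (p, S) := by
  rw [← hF (List.suffix_refl _) (List.ne_nil_of_length_pos (Nat.zero_lt_of_lt hn))
    (hl.mono hn.le), decide_eq_true rfl, hl.wordType_map_tagFor hn k]

/-- A substack strictly between `n` and `S` is not reached: no link of `v` points to it. -/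
theorem eq_of_exitChain (hF : DescentCorrect bot δ F) (hl : LinksLE n v) (hn : n < S.length)
    (hy : n < y.length)
    (h : ExitChain bot δ S.length (q, pushIf e v (decode F v S)) (p, y)) : y = S := by
  have hys := List.suffix_of_suffix_length_le h.suffix (suffix_pushIf_decode F e v S) h.length_le
  by_contra hne
  have hlen : y.length ≠ S.length := fun h => hne (hys.eq_of_length h)
  rw [← hF hys (List.ne_nil_of_length_pos (Nat.zero_lt_of_lt hy)) (hl.mono hn.le),
    decide_eq_false hlen, hl.map_tagFor (l := 0) hy] at h
  exact not_descent_false_unmarkWord _ _ _ _ _ h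

theorem exitChain_iff {s : RevStack B} {q' : P} (hF : DescentCorrect bot δ F) (hs : s <:+ S)
    (hlt : s.length < S.length) (hy : y <:+ s) (hne : y ≠ []) (hl : LinksLE s.length v) :
    ExitChain bot δ s.length (q, pushIf e v (decode F v S)) (q', y) ↔
      Descent bot δ F e false (wordType bot δ (v.map (tagFor y.length))) q q' ∨
      ∃ p, Descent bot δ F e true (wordType bot δ (v.map (tagFor y.length))).unmark q p ∧
        ExitChain bot δ s.length (p, S) (q', y) := by
  have hFy : Descent bot δ F e false (wordType bot δ (v.map (tagFor y.length))) q q' ↔ _ :=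
    decide_eq_false (hy.length_le.trans_lt hlt).ne ▸ hF (hy.trans hs) hne (hl.mono hlt.le)
  rw [ExitChain.iff_exists hlt.le, hFy]
  simp only [hF.unmark_iff hl hlt]
  constructor
  · rintro ⟨⟨p, y₁⟩, h₁, h₂⟩
    by_cases hle : y₁.length ≤ s.length
    · exact .inl (h₂.eq_of_le hle ▸ h₁)
    · obtain rfl := hF.eq_of_exitChain hl hlt (not_le.1 hle) h₁
      exact .inr ⟨p, h₁, h₂⟩
  · rintro (h | ⟨p, h₁, h₂⟩)
    · exact ⟨(q', y), h, .done hy.length_le⟩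
    · exact ⟨(p, S), h₁, h₂⟩

end DescentCorrect

theorem descentCorrect {F : Forest B} (hF : IsCanonical F) : DescentCorrect bot δ F := by
  intro e v s y q q' hy hne hl
  induction F generalizing e v s y q q' with
  | nil =>
    cases e
    · simp only [Descent, pushIf_false, decode, Bool.false_eq_true, if_false, decide_eq_true_eq]
      constructor
      · rintro ⟨hlen, rfl⟩
        obtain rfl := hy.eq_of_length hlen
        exact .done le_rfl
      · intro h
        cases h.eq_of_le le_rfl
        exact ⟨rfl, rfl⟩
    · exact (exitChain_one_iff hy hne).symm
  | node a C r ihC ihr =>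
    rcases a with _ | x
    · have hr : DescentCorrect bot δ r := fun _ _ _ _ _ _ hy hne hl => ihr hF.2 hy hne hl
      rw [decode, hr.exitChain_iff (List.suffix_cons v s) (Nat.lt_succ_self _) hy hne hl]
      simp only [exitChain_one_iff hy hne]
      rfl
    · have hr : DescentCorrect bot δ r := fun _ _ _ _ _ _ hy hne hl => ihr hF.2.2.1 hy hne hl
      rw [decode, hr.exitChain_iff (suffix_decode C _ s) (length_lt_length_decode hF.2.1 hF.1 _ s)
        hy hne hl]
      have hC (p) := ihC hF.2.1 (e := false) (q := p) (q' := q') hy hne (hl.letterAt x)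
      simp only [wordType_cons_letterAt, pushIf_false, eq_comm (a := s.length)] at hC
      simp only [← hC]
      rfl

end Transfer

section Correctness

variable {P B : Type} {bot : B} {δ : P → B → Op B → P → Prop}

/-! ### Runs that enter or leave a block -/

/-- The possible origins of a word `w` on top of `Y` in a run from `X` on which the width stays
above `m`: the stack `w :: Y` is uncovered, or `w` is a clone of the topmost word of `Y`. -/
def LevelSource (m : ℕ) (X Y : RevStack B) (w : List (Letter B)) : Prop :=
  w :: Y <:+ X ∨ (m < Y.length ∧ ∃ Y', Y = w :: Y')

theorem LevelSource.suffix_of_extends {s X Y : RevStack B} {u w : List (Letter B)}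
    (h : LevelSource s.length X Y w) (hX : Extends u s X) (hY : Extends u s Y) : u <:+ w := by
  rcases h with h | ⟨hlt, Y', rfl⟩
  · exact hX.suffix_of_cons_suffix h hY.suffix.length_le
  · exact hY.suffix_of_cons_suffix (List.suffix_refl _) (Nat.le_of_lt_succ hlt)

section Blocks

variable {m : ℕ} {c d : RevConfig P B} {Y : RevStack B} {v w : List (Letter B)} {a : Letter B}

theorem RunAbove.exists_levelSource (hm : m ≤ Y.length) (hv : ValidLinks c.2) (hd : w :: Y <:+ d.2)
    (hc : ¬ w :: Y <:+ c.2) (h : RunAbove bot δ m c d) :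
    ∃ p₀ w₀ p, LevelSource m c.2 Y w₀ ∧ RunAbove bot δ m c (p₀, w₀ :: Y) ∧
      ConcreteRun bot δ Y.length (p₀, w₀) (p, w) ∧ RunAbove bot δ Y.length (p, w :: Y) d := by
  obtain ⟨q, Z⟩ := d
  obtain ⟨z, rfl⟩ := hd
  obtain ⟨h', -⟩ | ⟨p₀, w₀, p, hO, hR, hF⟩ := h.split hv
  · exact absurd h' hc
  · suffices h' : LevelSource m c.2 Y w₀ ∧ RunAbove bot δ m c (p₀, w₀ :: Y) from
      ⟨p₀, w₀, p, h'.1, h'.2, hR, hF.runAbove⟩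
    cases hO with
    | chain hC => exact ⟨.inl hC.suffix, hC.runAbove hv (Nat.lt_succ_of_le hm)⟩
    | clone h₀ hδ =>
      have hlt := h₀.lt_length_right
      exact ⟨.inr ⟨hlt, _, rfl⟩, h₀.trans (.single hlt (.clone hδ) (Nat.lt_succ_of_lt hlt))⟩

theorem RunAbove.split_at_step {p₀ p₁ p₂ p : P} {w₀ u u' : List (Letter B)} (hm : m ≤ Y.length)
    (hv : ValidLinks c.2) (h₀ : RunAbove bot δ m c (p₀, w₀ :: Y))
    (hR : ConcreteRun bot δ Y.length (p₀, w₀) (p₁, u))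
    (hstep : ConcreteStep bot δ Y.length (p₁, u) (p₂, u'))
    (hR' : ConcreteRun bot δ Y.length (p₂, u') (p, w)) (h : RunAbove bot δ Y.length (p, w :: Y) d) :
    RunAbove bot δ m c (p₁, u :: Y) ∧ RunAbove bot δ Y.length (p₂, u' :: Y) d := by
  have h₁ := h₀.trans ((hR.runAbove (h₀.validLinks hv)).mono hm)
  have h₂ := hstep.runAbove (h₁.validLinks hv).1
  exact ⟨h₁, (hR'.runAbove (h₂.validLinks (h₁.validLinks hv))).trans h⟩

theorem RunAbove.exists_leave (hm : m ≤ Y.length) (hv : ValidLinks c.2) (hd : w :: Y <:+ d.2)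
    (hw : ¬ a :: v <:+ w) (hc : ∀ w₀, LevelSource m c.2 Y w₀ → a :: v <:+ w₀)
    (h : RunAbove bot δ m c d) :
    ∃ p₁ p₂, RunAbove bot δ m c (p₁, (a :: v) :: Y) ∧
      ConcreteStep bot δ Y.length (p₁, a :: v) (p₂, v) ∧
      RunAbove bot δ Y.length (p₂, v :: Y) d := by
  obtain ⟨p₀, w₀, p, hsrc, h₀, hR, h'⟩ :=
    h.exists_levelSource hm hv hd fun hs => hw (hc _ (.inl hs))
  obtain ⟨p₁, p₂, hR₁, hstep, hR₂⟩ := LevelRun.exists_leave hR (hc _ hsrc) hw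
  obtain ⟨h₁, h₂⟩ := h₀.split_at_step hm hv hR₁ hstep hR₂ h'
  exact ⟨p₁, p₂, h₁, hstep, h₂⟩

theorem RunAbove.exists_enter (hm : m ≤ Y.length) (hv : ValidLinks c.2) (hd : w :: Y <:+ d.2)
    (hw : a :: v <:+ w) (hc : ∀ w₀, LevelSource m c.2 Y w₀ → ¬ a :: v <:+ w₀)
    (h : RunAbove bot δ m c d) :
    ∃ p₁ p₂, RunAbove bot δ m c (p₁, v :: Y) ∧
      ConcreteStep bot δ Y.length (p₁, v) (p₂, a :: v) ∧
      RunAbove bot δ Y.length (p₂, (a :: v) :: Y) d := by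
  obtain ⟨p₀, w₀, p, hsrc, h₀, hR, h'⟩ :=
    h.exists_levelSource hm hv hd fun hs => hc _ (.inl hs) hw
  obtain ⟨p₁, p₂, hR₁, hstep, hR₂⟩ := LevelRun.exists_enter hR (hc _ hsrc) hw
  obtain ⟨h₁, h₂⟩ := h₀.split_at_step hm hv hR₁ hstep hR₂ h'
  exact ⟨p₁, p₂, h₁, hstep, h₂⟩

theorem RunAbove.trans_pop {p₁ p₂ : P} {x : B × Bool} {k : ℕ} (hm : m ≤ Y.length)
    (hv : ValidLinks c.2) (hvn : v ≠ []) (h₁ : RunAbove bot δ m c (p₁, (letterAt x k :: v) :: Y))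
    (hpop : CanPop δ x p₁ p₂) (h₂ : RunAbove bot δ Y.length (p₂, v :: Y) d) :
    RunAbove bot δ m c d :=
  h₁.trans (((((concreteStep_pop_iff hvn).2 hpop).runAbove (h₁.validLinks hv).1).trans h₂).mono hm)

end Blocks

theorem runAbove_iff_finalClimb {q q' : P} {s z : RevStack B} {v : List (Letter B)}
    (hv : ValidLinks (v :: s)) :
    RunAbove bot δ s.length (q, v :: s) (q', z ++ v :: s) ↔
      ∃ p, (wordType bot δ (v.map (tagFor s.length))).marked.loop q p ∧
        FinalClimb bot δ p v s q' z := by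
  constructor
  · intro h
    obtain ⟨-, h⟩ | ⟨p₀, w₀, p, hO, hR, hF⟩ := h.split hv
    · exact absurd h.1 (lt_irrefl _)
    · cases hO with
      | chain hC =>
        cases hC.eq_of_le le_rfl
        exact ⟨p, concreteRun_loop_iff.1 hR, hF⟩
      | clone h => exact absurd h.lt_length_right (lt_irrefl _)
  · rintro ⟨p, h, hF⟩
    exact ((concreteRun_loop_iff.2 h).runAbove hv).trans hF.runAbove

theorem runAbove_loop_iff {q q' : P} {s : RevStack B} {v : List (Letter B)}
    (hv : ValidLinks (v :: s)) :
    RunAbove bot δ s.length (q, v :: s) (q', v :: s) ↔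
      (wordType bot δ (v.map (tagFor s.length))).marked.loop q q' := by
  refine (runAbove_iff_finalClimb (z := []) hv).trans ⟨?_, fun h => ⟨q', h, .stay⟩⟩
  rintro ⟨p, h, hF⟩
  cases hF with
  | stay => exact h
  | climb _ h => exact absurd h.lt_length_right (lt_irrefl _)

/-! ### Ascents -/

/-- The word `v` can be extended on top of `s`: it is nonempty, and no link of the stack `v :: s`
points above the place where its letter was pushed. -/
structure ValidBase (v : List (Letter B)) (s : RevStack B) : Prop where
  ne_nil : v ≠ []
  linksLE : LinksLE s.length v
  validLinks : ValidLinks s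

namespace ValidBase

variable {v : List (Letter B)} {s : RevStack B}

theorem letterAt (h : ValidBase v s) (x : B × Bool) : ValidBase (letterAt x s.length :: v) s :=
  ⟨List.cons_ne_nil _ _, h.linksLE.letterAt x, h.validLinks⟩

theorem validLinks_cons (h : ValidBase v s) : ValidLinks (v :: s) := ⟨h.linksLE, h.validLinks⟩

theorem cons_self (h : ValidBase v s) : ValidBase v (v :: s) :=
  ⟨h.ne_nil, h.linksLE.mono (Nat.le_succ _), h.validLinks_cons⟩

theorem block (h : ValidBase v s) (x : B × Bool) (C : Forest B) :
    ValidBase v (decode C (CPG.letterAt x s.length :: v) s) :=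
  ⟨h.ne_nil, h.linksLE.mono (length_le_length_decode _ _ _),
    h.validLinks.decode (h.linksLE.letterAt x) C⟩

theorem pushIf_decode (h : ValidBase v s) (e : Bool) (F : Forest B) :
    ValidLinks (pushIf e v (decode F v s)) :=
  (h.validLinks.decode h.linksLE F).pushIf (h.linksLE.mono (length_le_length_decode _ _ _)) e

end ValidBase

theorem eq_nil_of_length_pushIf_decode_le {F : Forest B} (hF : IsCanonical F) {e : Bool}
    {v : List (Letter B)} {s : RevStack B}
    (h : (pushIf e v (decode F v s)).length ≤ s.length) : F = .nil ∧ e = false := by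
  rw [length_pushIf] at h
  constructor
  · by_contra hn
    exact ((length_lt_length_decode hF hn v s).trans_le ((Nat.le_add_right _ _).trans h)).false
  · cases e
    · rfl
    · exact absurd ((length_le_length_decode F v s).trans_lt (Nat.lt_of_succ_le h)) (lt_irrefl _)

variable (bot δ) in
/-- `Ascent` describes the runs from `v :: s` to the decodings of `F`. -/
def AscentCorrect (F : Forest B) : Prop :=
  ∀ ⦃e : Bool⦄ ⦃v : List (Letter B)⦄ ⦃s : RevStack B⦄ ⦃p q : P⦄, ValidBase v s →
    (Ascent bot δ F e (wordType bot δ (v.map (tagFor s.length))) p q ↔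
      RunAbove bot δ s.length (p, v :: s) (q, pushIf e v (decode F v s)))

theorem AscentCorrect.unmark_iff {F : Forest B} (hF : AscentCorrect bot δ F) {e : Bool}
    {v : List (Letter B)} {s S : RevStack B} {p q : P} (hs : ValidBase v s) (hS : ValidBase v S)
    (hlt : s.length < S.length) :
    Ascent bot δ F e (wordType bot δ (v.map (tagFor s.length))).unmark p q ↔
      RunAbove bot δ S.length (p, v :: S) (q, pushIf e v (decode F v S)) := by
  rw [← hF hS, hs.linksLE.wordType_map_tagFor hlt]

/-- Blocks are maximal, so a run from within a block to a stack beyond it removes the letter `x`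
on top of the last word of the block. -/
theorem throughBlock_iff {x : B × Bool} {C r : Forest B} (hcan : IsCanonical (.node (some x) C r))
    (hr : AscentCorrect bot δ r) {v : List (Letter B)} {s X : RevStack B} (hs : ValidBase v s)
    (hX : Extends (letterAt x s.length :: v) s X) (hv : ValidLinks X) {e : Bool} {p q : P}
    {inside : Bool → P → P → Prop}
    (hin : ∀ f p', inside f p p' ↔ RunAbove bot δ s.length (p, X)
      (p', pushIf f (letterAt x s.length :: v) (decode C (letterAt x s.length :: v) s))) :
    ThroughBlock δ x (r = .nil ∧ e = false) inside
        (Ascent bot δ r e (wordType bot δ (v.map (tagFor s.length))).unmark) p q ↔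
      RunAbove bot δ s.length (p, X) (q, pushIf e v (decode (.node (some x) C r) v s)) := by
  have hlt := length_lt_length_decode hcan.2.1 hcan.1 (letterAt x s.length :: v) s
  simp only [ThroughBlock, hin, hr.unmark_iff hs (hs.block x C) hlt]
  constructor
  · rintro (⟨⟨rfl, rfl⟩, h⟩ | ⟨p₁, p₂, h₁, hpop, h₂⟩)
    · exact h
    · exact h₁.trans_pop hlt.le hv hs.ne_nil hpop h₂
  · intro h
    by_cases hlast : r = .nil ∧ e = false
    · obtain ⟨rfl, rfl⟩ := hlast
      exact .inl ⟨⟨rfl, rfl⟩, h⟩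
    · obtain ⟨w, hw⟩ := exists_cons_suffix (suffix_pushIf_decode r e v _)
        (not_le.1 fun hle => hlast (eq_nil_of_length_pushIf_decode_le hcan.2.2.1 hle))
      obtain ⟨p₁, p₂, h₁, hstep, h₂⟩ := h.exists_leave hlt.le hv hw
        (not_suffix_of_after_block hcan hw) fun _ hsrc => hsrc.suffix_of_extends hX
          (decode_extends C _ s)
      exact .inr ⟨p₁, p₂, h₁, (concreteStep_pop_iff hs.ne_nil).1 hstep, h₂⟩

theorem ascentCorrect_nil : AscentCorrect bot δ .nil := by
  intro e v s p q hs
  cases e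
  · refine iff_of_false (fun h => Bool.false_ne_true h.1) fun h => ?_
    exact absurd h.lt_length_right (lt_irrefl _)
  · exact (and_iff_right rfl).trans (runAbove_loop_iff hs.validLinks_cons).symm

theorem AscentCorrect.node_none {r : Forest B} (hcan : IsCanonical r)
    (hr : AscentCorrect bot δ r) : AscentCorrect bot δ (.node none .nil r) := by
  intro e v s p q hs
  obtain ⟨z, hz⟩ := suffix_pushIf_decode r e v (v :: s)
  simp only [Ascent, hr.unmark_iff hs hs.cons_self (Nat.lt_succ_self _)]
  rw [decode, ← hz, runAbove_iff_finalClimb hs.validLinks_cons]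
  constructor
  · rintro (⟨rfl, rfl, h⟩ | ⟨p₁, p₂, hloop, hclone, h⟩)
    · obtain rfl : z = [] := List.append_left_eq_self.1 hz
      exact ⟨q, h, .stay⟩
    · obtain ⟨a, u, rfl, hδ⟩ := wordType_enables_iff.1 hclone
      exact ⟨p₁, hloop, .climb hδ h⟩
  · rintro ⟨p₁, hloop, hclimb⟩
    cases hclimb with
    | stay =>
      obtain ⟨hr, he⟩ := eq_nil_of_length_pushIf_decode_le hcan (congrArg List.length hz).ge
      exact .inl ⟨hr, he, hloop⟩
    | climb hδ h => exact .inr ⟨p₁, _, hloop, wordType_enables_iff.2 ⟨_, _, rfl, hδ⟩, h⟩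

theorem wordType_cons_letterAt_self (x : B × Bool) (n : ℕ) (v : List (Letter B)) :
    wordType bot δ ((letterAt x n :: v).map (tagFor n)) =
      (wordType bot δ (v.map (tagFor n))).cons bot δ (tagged x true) := by
  rw [wordType_cons_letterAt, decide_eq_true rfl]

theorem AscentCorrect.node_some {x : B × Bool} {C r : Forest B}
    (hcan : IsCanonical (.node (some x) C r)) (hC : AscentCorrect bot δ C)
    (hr : AscentCorrect bot δ r) : AscentCorrect bot δ (.node (some x) C r) := by
  intro e v s p q hs
  have hblock (p : P) := throughBlock_iff (bot := bot) (δ := δ) (e := e) (p := p) (q := q) hcan hr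
    hs ((Extends.refl _ s).cons (List.suffix_refl _)) (hs.letterAt x).validLinks_cons
    fun f p' => (wordType_cons_letterAt_self x s.length v) ▸ hC (hs.letterAt x)
  simp only [Ascent, hblock, ← concreteStep_push_iff (.inl rfl),
    ← runAbove_loop_iff hs.validLinks_cons]
  constructor
  · rintro ⟨p₁, p₂, hloop, hpush, h⟩
    exact (hloop.trans (hpush.runAbove hs.linksLE)).trans h
  · intro h
    have hlt := length_lt_length_decode hcan.2.1 hcan.1 (letterAt x s.length :: v) s
    obtain ⟨w, hw⟩ := exists_cons_suffix (suffix_decode C (letterAt x s.length :: v) s) hlt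
    refine h.exists_enter le_rfl hs.validLinks_cons (hw.trans (suffix_pushIf_decode r e v _))
      ((decode_extends C _ s).suffix_of_cons_suffix hw le_rfl) ?_
    rintro w₀ (hw₀ | ⟨hlt, -⟩)
    · obtain rfl := eq_of_cons_suffix hw₀ (List.suffix_refl (v :: s))
      exact not_cons_suffix _ _
    · exact absurd hlt (lt_irrefl _)

theorem ascentCorrect {F : Forest B} (hF : IsCanonical F) : AscentCorrect bot δ F := by
  induction F with
  | nil => exact ascentCorrect_nil
  | node a C r ihC ihr =>
    rcases a with _ | x
    · obtain ⟨rfl, hr⟩ := hF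
      exact .node_none hr (ihr hr)
    · exact .node_some hF (ihC hF.2.1) (ihr hF.2.2.1)

/-! ### Transfers -/

theorem RunAbove.suffix_right {c c' : RevConfig P B} {t : RevStack B}
    (h : RunAbove bot δ t.length c c') (ht : t <:+ c.2) : t <:+ c'.2 := by
  have hlen : (c'.2.drop (c'.2.length - t.length)).length = t.length := by
    rw [List.length_drop, Nat.sub_sub_self h.lt_length_right.le]
  have hsuf := List.drop_suffix (c'.2.length - t.length) c'.2
  have hsuf' := RunAbove.suffix (t := c'.2.drop (c'.2.length - t.length)) (by rwa [hlen]) hsuf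
  rwa [← eq_of_suffix_of_length_eq hsuf' ht hlen]

theorem DescentCorrect.runAbove_iff {F : Forest B} (hF : DescentCorrect bot δ F) {e : Bool}
    {v : List (Letter B)} {S : RevStack B} {n : ℕ} (hl : LinksLE n v) (hn : n < S.length) {q : P}
    (hv : ValidLinks (pushIf e v (decode F v S))) {c' : RevConfig P B} (k : ℕ) :
    RunAbove bot δ n (q, pushIf e v (decode F v S)) c' ↔
      RunAbove bot δ S.length (q, pushIf e v (decode F v S)) c' ∨
      ∃ p, Descent bot δ F e true (wordType bot δ (v.map (tagFor k))).unmark q p ∧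
        RunAbove bot δ n (p, S) c' := by
  rw [RunAbove.iff_or_exists_exitChain hn.le hv]
  simp only [hF.unmark_iff hl hn]
  refine or_congr_right ⟨?_, fun ⟨p, h₁, h₂⟩ => ⟨(p, S), h₁, h₂⟩⟩
  rintro ⟨⟨p, y⟩, h₁, h₂⟩
  obtain rfl := hF.eq_of_exitChain hl hn h₂.1 h₁
  exact ⟨p, h₁, h₂⟩

variable (bot δ) in
/-- `Transfer` describes the runs from decodings of `F` to decodings of other forests. -/
def TransferCorrect (F : Forest B) : Prop :=
  ∀ ⦃F' : Forest B⦄, IsCanonical F' →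
    ∀ ⦃e e' : Bool⦄ ⦃v : List (Letter B)⦄ ⦃s : RevStack B⦄ ⦃q q' : P⦄, ValidBase v s →
    (Transfer bot δ F F' e e' (wordType bot δ (v.map (tagFor s.length))) q q' ↔
      RunAbove bot δ s.length (q, pushIf e v (decode F v s)) (q', pushIf e' v (decode F' v s)))

theorem TransferCorrect.unmark_iff {F F' : Forest B} (hF : TransferCorrect bot δ F)
    (hF' : IsCanonical F') {e e' : Bool} {v : List (Letter B)} {s S : RevStack B} {q q' : P}
    (hs : ValidBase v s) (hS : ValidBase v S) (hlt : s.length < S.length) :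
    Transfer bot δ F F' e e' (wordType bot δ (v.map (tagFor s.length))).unmark q q' ↔
      RunAbove bot δ S.length (q, pushIf e v (decode F v S))
        (q', pushIf e' v (decode F' v S)) := by
  rw [← hF hF' hS, hs.linksLE.wordType_map_tagFor hlt]

theorem transferCorrect_nil : TransferCorrect bot δ .nil := by
  intro F' hF' e e' v s q q' hs
  cases e
  · exact iff_of_false (fun h => Bool.false_ne_true h.1) fun h => lt_irrefl _ h.1
  · exact (and_iff_right rfl).trans (ascentCorrect hF' hs)

section Node

variable {F' C r : Forest B} {x : B × Bool} {e e' : Bool} {v : List (Letter B)} {s : RevStack B}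
  {p q q' : P}

theorem exists_eq_node_none_of_runAbove (hF' : IsCanonical F')
    (h : RunAbove bot δ (v :: s).length (q, pushIf e v (decode r v (v :: s)))
      (q', pushIf e' v (decode F' v s))) : ∃ r', F' = .node none .nil r' := by
  have hlt : s.length + 1 < (pushIf e' v (decode F' v s)).length := h.lt_length_right
  obtain ⟨w, hw⟩ := exists_cons_suffix (suffix_pushIf_decode F' e' v s)
    ((Nat.lt_succ_self _).trans hlt)
  obtain rfl := eq_of_cons_suffix (h.suffix (t := w :: s) hw) (suffix_pushIf_decode r e v (v :: s))
  have hfirst := firstWord_of_cons_suffix hF' hw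
  rcases F' with _ | ⟨_ | x, C', r'⟩
  · cases e' <;> simp [decode] at hlt
  · exact ⟨r', by rw [hF'.1]⟩
  · exact absurd hfirst (not_cons_suffix _ _)

theorem TransferCorrect.node_none (hcan : IsCanonical r) (hr : TransferCorrect bot δ r) :
    TransferCorrect bot δ (.node none .nil r) := by
  intro F' hF' e e' v s q q' hs
  rw [decode, (descentCorrect hcan).runAbove_iff hs.linksLE (Nat.lt_succ_self _)
    (hs.cons_self.pushIf_decode e r) s.length]
  simp only [Transfer, ascentCorrect hF' hs]
  rw [or_comm]
  refine or_congr_left ⟨?_, fun h => ?_⟩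
  · rintro ⟨l', r', rfl, h⟩
    exact (hr.unmark_iff hF'.2 hs hs.cons_self (Nat.lt_succ_self _)).1 h
  · obtain ⟨r', rfl⟩ := exists_eq_node_none_of_runAbove hF' h
    exact ⟨.nil, r', rfl, (hr.unmark_iff hF'.2 hs hs.cons_self (Nat.lt_succ_self _)).2 h⟩

theorem TransferCorrect.throughBlock_iff {C' r' : Forest B} {f : Bool}
    (hC : TransferCorrect bot δ C) (hcan' : IsCanonical (.node (some x) C' r'))
    (hs : ValidBase v s) :
    ThroughBlock δ x (r' = .nil ∧ e' = false)
        (fun g => Transfer bot δ C C' f g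
          ((wordType bot δ (v.map (tagFor s.length))).cons bot δ (tagged x true)))
        (Ascent bot δ r' e' (wordType bot δ (v.map (tagFor s.length))).unmark) p q' ↔
      RunAbove bot δ s.length
        (p, pushIf f (letterAt x s.length :: v) (decode C (letterAt x s.length :: v) s))
        (q', pushIf e' v (decode (.node (some x) C' r') v s)) :=
  CPG.throughBlock_iff hcan' (ascentCorrect hcan'.2.2.1) hs
    ((decode_extends C _ s).pushIf (List.suffix_refl _) f) ((hs.letterAt x).pushIf_decode f C)
    fun _ _ => (wordType_cons_letterAt_self x s.length v) ▸ hC hcan'.2.1 (hs.letterAt x)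

theorem TransferCorrect.runAbove_block_iff (hC : TransferCorrect bot δ C) (hF' : IsCanonical F')
    (hs : ValidBase v s) :
    ((∃ p₁ p₂, Transfer bot δ C .nil false true
          ((wordType bot δ (v.map (tagFor s.length))).cons bot δ (tagged x true)) p p₁ ∧
          CanPop δ x p₁ p₂ ∧ Ascent bot δ F' e' (wordType bot δ (v.map (tagFor s.length))) p₂ q') ∨
        ∃ C' r', F' = .node (some x) C' r' ∧
          ThroughBlock δ x (r' = .nil ∧ e' = false)
            (fun g => Transfer bot δ C C' false g
              ((wordType bot δ (v.map (tagFor s.length))).cons bot δ (tagged x true)))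
            (Ascent bot δ r' e' (wordType bot δ (v.map (tagFor s.length))).unmark) p q') ↔
      RunAbove bot δ s.length (p, decode C (letterAt x s.length :: v) s)
        (q', pushIf e' v (decode F' v s)) := by
  have hleave (p₁ : P) := hC (F' := .nil) trivial (e := false) (e' := true) (q := p) (q' := p₁)
    (hs.letterAt x)
  rw [wordType_cons_letterAt_self] at hleave
  simp only [hleave, ascentCorrect hF' hs]
  have hblock := hs.block x C
  constructor
  · rintro (⟨p₁, p₂, h₁, hpop, h₂⟩ | ⟨C', r', rfl, h⟩)
    · exact h₁.trans_pop le_rfl hblock.validLinks hs.ne_nil hpop h₂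
    · exact (hC.throughBlock_iff hF' hs).1 h
  · intro h
    obtain ⟨w, hw⟩ := exists_cons_suffix (suffix_pushIf_decode F' e' v s) h.lt_length_right
    by_cases hx : letterAt x s.length :: v <:+ w
    · obtain ⟨C', r', rfl⟩ := (firstWord_of_cons_suffix hF' hw).exists_eq_node hx
      exact .inr ⟨C', r', rfl, (hC.throughBlock_iff hF' hs).2 h⟩
    · obtain ⟨p₁, p₂, h₁, hstep, h₂⟩ := h.exists_leave le_rfl hblock.validLinks hw hx
        fun _ hsrc => hsrc.suffix_of_extends (decode_extends C _ s) (.refl _ _)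
      exact .inl ⟨p₁, p₂, h₁, (concreteStep_pop_iff hs.ne_nil).1 hstep, h₂⟩

theorem snd_eq_false_of_concreteStep {n k : ℕ} (hk : k ≠ n)
    (h : ConcreteStep bot δ n (p, v) (q, letterAt x k :: v)) : x.2 = false := by
  rcases x with ⟨x, _ | _⟩
  · rfl
  · change ConcreteStep bot δ n (p, v) (q, Sum.inr (x, k) :: v) at h
    cases h with
    | push2 => exact absurd rfl hk

/-- A run above the first block of the source preserves this block, so the target starts with the
same block or with a proper extension of it; an extension is only possible for a letter of
level 1, since links of level 2 tell the width at which the block was started. -/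
theorem exists_eq_node_some_of_runAbove (hcan : IsCanonical (.node (some x) C r))
    (hF' : IsCanonical F') (hs : ValidBase v s)
    (h : RunAbove bot δ (decode C (letterAt x s.length :: v) s).length
      (q, pushIf e v (decode (.node (some x) C r) v s)) (q', pushIf e' v (decode F' v s))) :
    ∃ C' r', F' = .node (some x) C' r' ∧
      (C' = C ∨ x.2 = false ∧ ∃ p₁ p₂,
        RunAbove bot δ (decode C (letterAt x s.length :: v) s).length
          (q, pushIf e v (decode (.node (some x) C r) v s))
          (p₁, v :: decode C (letterAt x s.length :: v) s) ∧
        ConcreteStep bot δ (decode C (letterAt x s.length :: v) s).length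
          (p₁, v) (p₂, letterAt x s.length :: v) ∧
        RunAbove bot δ (decode C (letterAt x s.length :: v) s).length
          (p₂, (letterAt x s.length :: v) :: decode C (letterAt x s.length :: v) s)
          (q', pushIf e' v (decode F' v s))) := by
  have hlt := length_lt_length_decode hcan.2.1 hcan.1 (letterAt x s.length :: v) s
  have hblock : decode C (letterAt x s.length :: v) s <:+ pushIf e' v (decode F' v s) :=
    h.suffix_right (suffix_pushIf_decode r e v _)
  obtain ⟨w, hw⟩ := exists_cons_suffix (suffix_decode C (letterAt x s.length :: v) s) hlt
  obtain ⟨C', r', rfl⟩ := (firstWord_of_cons_suffix hF' (hw.trans hblock)).exists_eq_node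
    ((decode_extends C _ s).suffix_of_cons_suffix hw le_rfl)
  refine ⟨C', r', rfl, ?_⟩
  have hblock' : decode C' (letterAt x s.length :: v) s <:+
    pushIf e' v (decode (.node (some x) C' r') v s) := suffix_pushIf_decode r' e' v _
  rcases lt_trichotomy (decode C (letterAt x s.length :: v) s).length
    (decode C' (letterAt x s.length :: v) s).length with hlen | hlen | hlen
  · obtain ⟨w', hw'⟩ :=
      exists_cons_suffix (List.suffix_of_suffix_length_le hblock hblock' hlen.le) hlen
    obtain ⟨p₁, p₂, h₁, hstep, h₂⟩ := h.exists_enter le_rfl (hs.pushIf_decode e _)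
      (hw'.trans hblock') ((decode_extends C' _ s).suffix_of_cons_suffix hw' hlt.le) <| by
        rintro w₀ (hw₀ | ⟨hlt, -⟩)
        · exact not_suffix_of_after_block hcan hw₀
        · exact absurd hlt (lt_irrefl _)
    exact .inr ⟨snd_eq_false_of_concreteStep hlt.ne hstep, p₁, p₂, h₁, hstep, h₂⟩
  · have := eq_of_suffix_of_length_eq hblock hblock' hlen
    exact .inl (decode_injective hF'.2.1 hcan.2.1 this.symm)
  · obtain ⟨w', hw'⟩ :=
      exists_cons_suffix (List.suffix_of_suffix_length_le hblock' hblock hlen.le) hlen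
    exact absurd ((decode_extends C _ s).suffix_of_cons_suffix hw' (length_le_length_decode C' _ s))
      (not_suffix_of_after_block hF' (hw'.trans hblock))

theorem TransferCorrect.node_some (hcan : IsCanonical (.node (some x) C r))
    (hC : TransferCorrect bot δ C) (hr : TransferCorrect bot δ r) :
    TransferCorrect bot δ (.node (some x) C r) := by
  intro F' hF' e e' v s q q' hs
  have hlt := length_lt_length_decode hcan.2.1 hcan.1 (letterAt x s.length :: v) s
  have hblock := hs.block x C
  have hsplit (c' : RevConfig P B) := (descentCorrect (bot := bot) (δ := δ) hcan.2.2.1).runAbove_iff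
    (c' := c') (q := q) hs.linksLE hlt (hblock.pushIf_decode e r) s.length
  have htransfer {r'} (hr' : IsCanonical r') (f : Bool) (p : P) :=
    hr.unmark_iff (e := e) (e' := f) (q := q) (q' := p) hr' hs hblock hlt
  have hpush (p₁ p₂ : P) (hx : x.2 = false) :=
    concreteStep_push_iff (bot := bot) (δ := δ)
      (n := (decode C (letterAt x s.length :: v) s).length) (k := s.length) (v := v)
      (p := p₁) (p' := p₂) (.inr hx)
  simp only [hs.linksLE.wordType_map_tagFor hlt s.length] at hpush
  simp only [Transfer, hC.runAbove_block_iff hF' hs]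
  rw [or_comm]
  constructor
  · rintro (⟨C', r', rfl, ⟨rfl, h⟩ | ⟨hx, p₁, p₂, h₁, h₂, h₃⟩⟩ | h)
    · exact (hsplit _).2 (.inl ((htransfer hF'.2.2.1 _ _).1 h))
    · have hrun := ((htransfer (r' := .nil) trivial true p₁).1 h₁).trans
        (((hpush p₁ p₂ hx).2 h₂).runAbove hblock.linksLE)
      exact (hrun.mono hlt.le).trans ((hC.throughBlock_iff hF' hs).1 h₃)
    · exact (hsplit _).2 (.inr h)
  · intro h
    refine ((hsplit _).1 h).imp_left fun h => ?_
    obtain ⟨C', r', rfl, rfl | ⟨hx, p₁, p₂, h₁, hstep, h₂⟩⟩ :=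
      exists_eq_node_some_of_runAbove hcan hF' hs h
    · exact ⟨C', r', rfl, .inl ⟨rfl, (htransfer hF'.2.2.1 _ _).2 h⟩⟩
    · exact ⟨C', r', rfl, .inr ⟨hx, p₁, p₂, (htransfer (r' := .nil) trivial true p₁).2 h₁,
        (hpush p₁ p₂ hx).1 hstep, (hC.throughBlock_iff hF' hs).2 (h₂.mono hlt.le)⟩⟩

end Node

theorem transferCorrect {F : Forest B} (hF : IsCanonical F) : TransferCorrect bot δ F := by
  induction F with
  | nil => exact transferCorrect_nil
  | node a C r ihC ihr =>
    rcases a with _ | x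
    · obtain ⟨rfl, hr⟩ := hF
      exact .node_none hr (ihr hr)
    · exact .node_some hF (ihC hF.2.1) (ihr hF.2.2.1)

end Correctness

/-! ## Reachable stacks as forests -/

section ReachableStacks

variable {P B : Type} {bot : B} {δ : P → B → Op B → P → Prop}

/-- The property of the word `w` standing on the stack `s` that every level-2 letter of `w` was
either pushed onto `w` itself or copied from the word below. -/
def LinksInherited (w : List (Letter B)) (s : RevStack B) : Prop :=
  ∀ σ k t, Sum.inr (σ, k) :: t <:+ w →
    k = s.length ∨ ∃ u s', s = u :: s' ∧ Sum.inr (σ, k) :: t <:+ u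

/-- An invariant of the stacks reachable from the initial stack. It is strong enough for the stack
to be the decoding of a forest. -/
def IsWellFormed (bot : B) : RevStack B → Prop
  | [] => True
  | w :: s => [Sum.inl bot] <:+ w ∧ LinksInherited w s ∧ IsWellFormed bot s

theorem IsWellFormed.of_suffix {s t : RevStack B} (h : IsWellFormed bot s) (ht : t <:+ s) :
    IsWellFormed bot t := by
  induction s with
  | nil => exact List.suffix_nil.1 ht ▸ h
  | cons w s ih =>
    rcases List.suffix_cons_iff.1 ht with rfl | ht
    · exact h
    · exact ih h.2.2 ht

theorem IsWellFormed.pop_letter {a : Letter B} {w : List (Letter B)} {s : RevStack B}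
    (h : IsWellFormed bot ((a :: w) :: s)) (hw : w ≠ []) : IsWellFormed bot (w :: s) := by
  refine ⟨?_, fun σ k t ht => h.2.1 σ k t (ht.trans (List.suffix_cons _ _)), h.2.2⟩
  refine (List.suffix_cons_iff.1 h.1).resolve_left fun hbot => ?_
  exact hw (List.cons.inj hbot).2.symm

theorem IsWellFormed.push_letter {a : Letter B} {w : List (Letter B)} {s : RevStack B}
    (h : IsWellFormed bot (w :: s)) (ha : ∀ σ k, a = Sum.inr (σ, k) → k = s.length) :
    IsWellFormed bot ((a :: w) :: s) := by
  refine ⟨h.1.trans (List.suffix_cons _ _), fun σ k t ht => ?_, h.2.2⟩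
  rcases List.suffix_cons_iff.1 ht with heq | ht
  · exact .inl (ha σ k (List.cons.inj heq).1.symm)
  · exact h.2.1 σ k t ht

theorem RevStep.isWellFormed {c c' : RevConfig P B} (h : RevStep bot δ c c')
    (hc : IsWellFormed bot c.2) : IsWellFormed bot c'.2 := by
  cases h with
  | clone _ => exact ⟨hc.1, fun σ k t ht => .inr ⟨_, _, rfl, ht⟩, hc⟩
  | push1 _ _ => exact hc.push_letter fun σ k h => absurd h Sum.inl_ne_inr
  | push2 _ _ => exact hc.push_letter fun σ k h => (Prod.mk.inj (Sum.inr.inj h)).2.symm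
  | pop2 _ _ => exact hc.2.2
  | pop1 hw _ => exact hc.pop_letter hw
  | collapse1 hw _ => exact hc.pop_letter hw
  | collapse2 _ ht _ => exact hc.2.2.of_suffix ht

/-- `LinksInherited`, restricted to the letters of `w` above `v` and to inheritance from words that
stand on at least `m` others. -/
def LinksInheritedAbove (v w : List (Letter B)) (m : ℕ) (s : RevStack B) : Prop :=
  ∀ σ k t, Sum.inr (σ, k) :: t <:+ w → v <:+ t →
    k = s.length ∨ ∃ u s', s = u :: s' ∧ m ≤ s'.length ∧ Sum.inr (σ, k) :: t <:+ u

/-- `F'` is a canonical forest whose stack is that of `F` with the word `w` pushed on top. -/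
structure IsInsertion (F F' : Forest B) (v : List (Letter B)) (s : RevStack B)
    (w : List (Letter B)) : Prop where
  isCanonical : IsCanonical F'
  ne_nil : F' ≠ .nil
  decode_eq : decode F' v s = w :: decode F v s

theorem exists_isInsertion_nil_append {s : RevStack B} (u v : List (Letter B))
    (hu : ∀ σ k, Sum.inr (σ, k) ∈ u → k = s.length) :
    ∃ F, IsInsertion .nil F v s (u ++ v) := by
  induction u using List.reverseRecOn generalizing v with
  | nil => exact ⟨.node none .nil .nil, ⟨rfl, trivial⟩, by simp, rfl⟩
  | append_singleton u a ih =>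
    obtain ⟨C, hC⟩ := ih (a :: v) fun σ k hk => hu σ k (List.mem_append_left _ hk)
    obtain ⟨x, rfl⟩ : ∃ x, a = letterAt x s.length := by
      rcases a with a | ⟨a, k⟩
      · exact ⟨(a, false), rfl⟩
      · obtain rfl := hu a k (by simp)
        exact ⟨(a, true), rfl⟩
    refine ⟨.node (some x) C .nil, ⟨hC.ne_nil, hC.isCanonical, trivial, by simp [rootLabel]⟩,
      by simp, ?_⟩
    simp [decode, hC.decode_eq]

/-- The induction statement of `exists_isInsertion`. -/
def Insertable (F : Forest B) : Prop :=
  ∀ ⦃v : List (Letter B)⦄ ⦃s : RevStack B⦄ ⦃w : List (Letter B)⦄, IsCanonical F → v <:+ w →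
    LinksInheritedAbove v w s.length (decode F v s) → ∃ F', IsInsertion F F' v s w

theorem insertable_nil : Insertable (.nil : Forest B) := by
  rintro v s w - ⟨u, rfl⟩ hw
  refine exists_isInsertion_nil_append u v fun σ k hk => ?_
  obtain ⟨u₁, u₂, rfl⟩ := List.append_of_mem hk
  refine (hw σ k (u₂ ++ v) ⟨u₁, by simp⟩ (List.suffix_append _ _)).resolve_right ?_
  rintro ⟨u', s', rfl, hs', -⟩
  simp at hs'

theorem Insertable.node_none {l r : Forest B} (hr : Insertable r) :
    Insertable (.node none l r) := by
  intro v s w hF hvw hw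
  obtain ⟨r', hr'⟩ := hr (s := v :: s) hF.2 hvw fun σ k t ht hvt => by
    refine (hw σ k t ht hvt).imp_right fun ⟨u, s', hs', hlen, hu⟩ => ⟨u, s', hs', ?_, hu⟩
    refine hlen.lt_of_ne fun hlen => ?_
    -- Otherwise the inherited letter would lie in the word `v`, hence strictly above itself.
    have hsuffix : v :: s <:+ u :: s' := hs' ▸ suffix_decode r v (v :: s)
    obtain ⟨rfl, -⟩ := List.cons.inj (hsuffix.eq_of_length (by simp [hlen]))
    exact not_cons_suffix _ _ (hu.trans hvt)
  exact ⟨.node none l r', ⟨hF.1, hr'.isCanonical⟩, by simp, hr'.decode_eq⟩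

theorem Insertable.node_some_of_suffix {x : B × Bool} {C : Forest B} (hC : Insertable C)
    {v w : List (Letter B)} {s : RevStack B} (hF : IsCanonical (.node (some x) C .nil))
    (hx : letterAt x s.length :: v <:+ w)
    (hw : LinksInheritedAbove v w s.length (decode (.node (some x) C .nil) v s)) :
    ∃ F', IsInsertion (.node (some x) C .nil) F' v s w := by
  obtain ⟨C', hC'⟩ := hC hF.2.1 hx fun σ k t ht hvt =>
    hw σ k t ht ((List.suffix_cons _ _).trans hvt)
  exact ⟨.node (some x) C' .nil, ⟨hC'.ne_nil, hC'.isCanonical, trivial, by simp [rootLabel]⟩,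
    by simp, hC'.decode_eq⟩

theorem IsInsertion.node_some {x : B × Bool} {C r r' : Forest B} {v w : List (Letter B)}
    {s : RevStack B} (hF : IsCanonical (.node (some x) C r))
    (hr' : IsInsertion r r' v (decode C (letterAt x s.length :: v) s) w)
    (hx : x.2 = false → rootLabel r' ≠ some (some x)) :
    IsInsertion (.node (some x) C r) (.node (some x) C r') v s w :=
  ⟨⟨hF.1, hF.2.1, hr'.isCanonical, hx⟩, by simp, hr'.decode_eq⟩

theorem exists_isInsertion_node_some_of_not_suffix {x : B × Bool} {C : Forest B}
    {v w : List (Letter B)} {s : RevStack B} (hF : IsCanonical (.node (some x) C .nil))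
    (hvw : v <:+ w) (hx : ¬ letterAt x s.length :: v <:+ w)
    (hw : LinksInheritedAbove v w s.length (decode (.node (some x) C .nil) v s)) :
    ∃ F', IsInsertion (.node (some x) C .nil) F' v s w := by
  obtain ⟨r', hr'⟩ := insertable_nil (s := decode C (letterAt x s.length :: v) s)
      trivial hvw fun σ k t ht hvt => by
    refine (hw σ k t ht hvt).imp_right fun ⟨u, s', hs', hlen, hu⟩ => (hx ?_).elim
    simp only [decode] at hs'
    have hxu : letterAt x s.length :: v <:+ u :=
      (decode_extends C _ s).suffix_of_cons_suffix (T := s') (by rw [hs']) hlen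
    exact (List.suffix_of_suffix_length_le hxu hu (by simpa using hvt.length_le)).trans ht
  refine ⟨_, hr'.node_some hF fun hx₂ hroot => hx ?_⟩
  have hfirst : FirstWord r' v _ w := firstWord_of_cons_suffix (e := false) hr'.isCanonical
    (by rw [pushIf_false, hr'.decode_eq, decode])
  simpa [FirstWord, hroot, letterAt, hx₂] using hfirst

theorem rootLabel_of_decode_suffix {F F' : Forest B} (hF : IsCanonical F) (hn : F ≠ .nil)
    (hF' : IsCanonical F') {v : List (Letter B)} {s : RevStack B}
    (h : decode F v s <:+ decode F' v s) {x : B × Bool} (hx : rootLabel F' = some (some x)) :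
    rootLabel F = some (some x) := by
  obtain ⟨w, hw⟩ := exists_cons_suffix (suffix_decode F v s) (length_lt_length_decode hF hn v s)
  have hfirst : FirstWord F v s.length w := firstWord_of_cons_suffix (e := false) hF hw
  have hfirst' : FirstWord F' v s.length w :=
    firstWord_of_cons_suffix (e := false) hF' (hw.trans h)
  simp only [FirstWord, hx] at hfirst'
  obtain ⟨C, r, rfl⟩ := hfirst.exists_eq_node hfirst'
  rfl

theorem Insertable.node_some {x : B × Bool} {C r : Forest B} (hC : Insertable C)
    (hr : Insertable r) : Insertable (.node (some x) C r) := by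
  intro v s w hF hvw hw
  by_cases hn : r = .nil
  · subst hn
    by_cases hx : letterAt x s.length :: v <:+ w
    · exact hC.node_some_of_suffix hF hx hw
    · exact exists_isInsertion_node_some_of_not_suffix hF hvw hx hw
  · obtain ⟨r', hr'⟩ := hr (s := decode C (letterAt x s.length :: v) s) hF.2.2.1 hvw
        fun σ k t ht hvt => by
      refine (hw σ k t ht hvt).imp_right fun ⟨u, s', hs', _, hu⟩ => ⟨u, s', hs', ?_, hu⟩
      have hlt := length_lt_length_decode hF.2.2.1 hn v (decode C (letterAt x s.length :: v) s)
      simp only [decode] at hs'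
      rw [hs', List.length_cons] at hlt
      exact Nat.lt_succ_iff.1 hlt
    refine ⟨_, hr'.node_some hF fun hx hroot => hF.2.2.2 hx ?_⟩
    have hsuffix := hr'.decode_eq ▸ List.suffix_cons w _
    exact rootLabel_of_decode_suffix hF.2.2.1 hn hr'.isCanonical hsuffix hroot

theorem exists_isInsertion (F : Forest B) : Insertable F := by
  induction F with
  | nil => exact insertable_nil
  | node a C r hC hr =>
    rcases a with _ | x
    · exact hr.node_none
    · exact hC.node_some hr

theorem IsWellFormed.exists_decode_eq {s : RevStack B} (h : IsWellFormed bot s) :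
    ∃ F, IsCanonical F ∧ decode F [Sum.inl bot] [] = s := by
  induction s with
  | nil => exact ⟨.nil, trivial, rfl⟩
  | cons w s ih =>
    obtain ⟨F, hF, rfl⟩ := ih h.2.2
    obtain ⟨F', hF'⟩ := exists_isInsertion F hF h.1 fun σ k t ht _ =>
      (h.2.1 σ k t ht).imp_right fun ⟨u, s', hs', hu⟩ => ⟨u, s', hs', by simp, hu⟩
    exact ⟨F', hF'.isCanonical, hF'.decode_eq⟩

end ReachableStacks

/-! ## Deterministic tree automata -/

section TreeAutomata

variable {α β V : Type}

theorem optionPTree_induction {M : Option (PTree α) → Prop} (none : M none)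
    (node : ∀ a l r, M l → M r → M (some (.node a l r))) : ∀ t, M t
  | .none => none
  | some (.node a l r) =>
    node a l r (optionPTree_induction none node l) (optionPTree_induction none node r)

/-- The binary tree of a possibly empty tree. -/
def toBinaryTree : Option (PTree α) → BinaryTree α
  | none => .nil
  | some (.node a l r) => .node a (toBinaryTree l) (toBinaryTree r)

/-- The inverse of `toBinaryTree`. -/
def ofBinaryTree : BinaryTree α → Option (PTree α)
  | .nil => none
  | .node a l r => some (.node a (ofBinaryTree l) (ofBinaryTree r))

theorem toBinaryTree_ofBinaryTree (t : BinaryTree α) : toBinaryTree (ofBinaryTree t) = t := by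
  induction t with
  | nil => simp only [ofBinaryTree, toBinaryTree]
  | node a l r hl hr => simp only [ofBinaryTree, toBinaryTree, hl, hr]

theorem ofBinaryTree_toBinaryTree (t : Option (PTree α)) :
    ofBinaryTree (toBinaryTree t) = t := by
  induction t using optionPTree_induction with
  | none => simp only [toBinaryTree, ofBinaryTree]
  | node a l r hl hr => simp only [toBinaryTree, ofBinaryTree, hl, hr]

theorem toBinaryTree_injective : Function.Injective (toBinaryTree (α := α)) :=
  Function.LeftInverse.injective ofBinaryTree_toBinaryTree

theorem exists_toBinaryTree_eq_node (a : α) (l r : BinaryTree α) :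
    ∃ t, toBinaryTree (some t) = .node a l r :=
  ⟨.node a (ofBinaryTree l) (ofBinaryTree r), toBinaryTree_ofBinaryTree (.node a l r)⟩

/-- The subtree at an address, empty if the address lies outside the tree. -/
def subtree : BinaryTree α → List Bool → BinaryTree α
  | t, [] => t
  | .nil, _ :: _ => .nil
  | .node _ l r, b :: d => subtree (bif b then r else l) d

theorem subtree_nil (d : List Bool) : subtree (.nil : BinaryTree α) d = .nil := by
  cases d <;> rfl

theorem subtree_append (t : BinaryTree α) (d d' : List Bool) :
    subtree t (d ++ d') = subtree (subtree t d) d' := by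
  induction d generalizing t with
  | nil => simp only [List.nil_append, subtree]
  | cons b d ih =>
    cases t with
    | nil => simp only [subtree_nil]
    | node a l r => exact ih _

theorem labelAt_eq_rootLabel_subtree (t : PTree α) (d : List Bool) :
    t.labelAt d = rootLabel (subtree (toBinaryTree (some t)) d) := by
  induction d generalizing t with
  | nil =>
    obtain ⟨a, l, r⟩ := t
    simp [PTree.labelAt, toBinaryTree, subtree, rootLabel]
  | cons b d ih =>
    obtain ⟨a, l, r⟩ := t
    rcases b with _ | _
    · rcases l with _ | l <;>
        simp [PTree.labelAt, toBinaryTree, subtree, subtree_nil, rootLabel, ih]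
    · rcases r with _ | r <;>
        simp [PTree.labelAt, toBinaryTree, subtree, subtree_nil, rootLabel, ih]

/-- Evaluation of a tree from the leaves to the root. -/
def foldTree (v : V) (step : α → V → V → V) : BinaryTree α → V
  | .nil => v
  | .node a l r => step a (foldTree v step l) (foldTree v step r)

theorem eq_foldTree {v : V} {step : α → V → V → V} {t : BinaryTree α} {ρ : List Bool → V}
    (hnone : ∀ d, rootLabel (subtree t d) = none → ρ d = v)
    (hsome : ∀ d a, rootLabel (subtree t d) = some a →
      ρ d = step a (ρ (d ++ [false])) (ρ (d ++ [true]))) : ρ [] = foldTree v step t := by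
  induction t generalizing ρ with
  | nil => exact hnone [] rfl
  | node a l r hl hr =>
    rw [hsome [] a rfl, foldTree]
    congr 1
    · exact hl (ρ := fun d => ρ (false :: d)) (fun d => hnone (false :: d))
        fun d => hsome (false :: d)
    · exact hr (ρ := fun d => ρ (true :: d)) (fun d => hnone (true :: d))
        fun d => hsome (true :: d)

/-- The deterministic bottom-up automaton that evaluates a tree and accepts the values in `S`. -/
def foldAut [Finite V] (v : V) (step : α → V → V → V) (S : Set V) : TreeAut α where
  St := V
  fin := inferInstance
  qI := v
  F := S
  Δ := {x | x.1 = step x.2.1 x.2.2.1 x.2.2.2}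

theorem foldAut_accepts_iff [Finite V] {v : V} {step : α → V → V → V} {S : Set V}
    {t : PTree α} :
    (foldAut v step S).Accepts t ↔ foldTree v step (toBinaryTree (some t)) ∈ S := by
  simp only [TreeAut.Accepts, labelAt_eq_rootLabel_subtree]
  constructor
  · rintro ⟨ρ, hnone, hsome, hS⟩
    exact eq_foldTree hnone hsome ▸ hS
  · intro hS
    let T := toBinaryTree (some t)
    refine ⟨fun d => foldTree v step (subtree T d), fun d hd => ?_, fun d a hd => ?_, hS⟩
    · change foldTree v step (subtree T d) = v
      change rootLabel (subtree T d) = none at hd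
      cases hsub : subtree T d with
      | nil => rfl
      | node b l r => simp [hsub, rootLabel] at hd
    · change foldTree v step (subtree T d) =
        step a (foldTree v step (subtree T (d ++ [false])))
          (foldTree v step (subtree T (d ++ [true])))
      change rootLabel (subtree T d) = some a at hd
      rw [subtree_append, subtree_append]
      cases hsub : subtree T d with
      | nil => simp [hsub, rootLabel] at hd
      | node b l r =>
        obtain rfl : b = a := by simpa [hsub, rootLabel] using hd
        rfl

/-- The value of `g` on a tree is determined by the root label and the values on the two
subtrees. -/
def IsCompositional (g : BinaryTree α → V) : Prop :=
  ∀ a l r l' r', g l = g l' → g r = g r' → g (.node a l r) = g (.node a l' r')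

theorem IsCompositional.exists_foldTree_eq {g : BinaryTree α → V} (hg : IsCompositional g) :
    ∃ step, ∀ t, foldTree (g .nil) step t = g t := by
  let rep : V → BinaryTree α := Function.invFun g
  have hrep (t : BinaryTree α) : g (rep (g t)) = g t := Function.invFun_eq ⟨t, rfl⟩
  refine ⟨fun a v v' => g (.node a (rep v) (rep v')), fun t => ?_⟩
  induction t with
  | nil => rfl
  | node a l r hl hr =>
    simp only [foldTree, hl, hr]
    exact hg _ _ _ _ _ (hrep l) (hrep r)

theorem IsCompositional.exists_treeAut [Finite V] {g : BinaryTree α → V}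
    (hg : IsCompositional g) (S : Set V) :
    ∃ M : TreeAut α, ∀ t, M.Accepts t ↔ g (toBinaryTree (some t)) ∈ S := by
  obtain ⟨step, hstep⟩ := hg.exists_foldTree_eq
  exact ⟨foldAut (g .nil) step S, fun t => by rw [foldAut_accepts_iff, hstep]⟩

/-! ### Convolutions -/

/-- The tree with root label `x` and subtrees `l` and `r`, empty if there is no label. -/
def nodeOrNil : Option α → BinaryTree α → BinaryTree α → BinaryTree α
  | none, _, _ => .nil
  | some a, l, r => .node a l r

theorem map_nodeOrNil (f : α → β) (x : Option α) (l r : BinaryTree α) :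
    (nodeOrNil x l r).map f = nodeOrNil (x.map f) (l.map f) (r.map f) := by
  cases x <;> rfl

/-- Relabelling of a tree that cuts it off at the nodes without a new label. -/
def filterMapTree (f : α → Option β) : BinaryTree α → BinaryTree β
  | .nil => .nil
  | .node a l r => nodeOrNil (f a) (filterMapTree f l) (filterMapTree f r)

theorem filterMapTree_map_some {f : α → β} {g : β → Option α} (hg : ∀ a, g (f a) = some a)
    (t : BinaryTree α) : filterMapTree g (t.map f) = t := by
  induction t with
  | nil => rfl
  | node a l r hl hr => simp only [BinaryTree.map, filterMapTree, hg, hl, hr, nodeOrNil]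

theorem filterMapTree_map_none {γ : Type} {f : α → β} {g : β → Option γ}
    (hg : ∀ a, g (f a) = none) (t : BinaryTree α) : filterMapTree g (t.map f) = .nil := by
  cases t with
  | nil => rfl
  | node a l r => simp only [BinaryTree.map, filterMapTree, hg, nodeOrNil]

theorem toBinaryTree_map (f : α → β) (t : Option (PTree α)) :
    toBinaryTree (t.map (PTree.map f)) = (toBinaryTree t).map f := by
  induction t using optionPTree_induction with
  | none => simp only [Option.map_none, toBinaryTree, BinaryTree.map]
  | node a l r hl hr =>
    have hmap : PTree.map f (.node a l r) = .node (f a) (l.map (.map f)) (r.map (.map f)) := by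
      rcases l with _ | l <;> rcases r with _ | r <;> rfl
    simp only [Option.map_some, hmap, toBinaryTree, BinaryTree.map, hl, hr]

/-- The convolution of possibly empty trees. -/
def convOption : Option (PTree α) → Option (PTree β) → Option (PTree (Option α × Option β))
  | none, none => none
  | some t, none => some (t.map fun a => (some a, none))
  | none, some u => some (u.map fun b => (none, some b))
  | some t, some u => some (.conv t u)

theorem convOption_node (a : α) (b : β) (l r : Option (PTree α)) (l' r' : Option (PTree β)) :
    convOption (some (.node a l r)) (some (.node b l' r')) =
      some (.node (some a, some b) (convOption l l') (convOption r r')) := by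
  rcases l with _ | l <;> rcases r with _ | r <;> rcases l' with _ | l' <;>
    rcases r' with _ | r' <;> simp only [PTree.conv, convOption]

theorem convOption_none (t : Option (PTree α)) :
    convOption t (none : Option (PTree β)) = t.map (.map fun a => (some a, none)) := by
  cases t <;> rfl

theorem none_convOption (u : Option (PTree β)) :
    convOption (none : Option (PTree α)) u = u.map (.map fun b => (none, some b)) := by
  cases u <;> rfl

theorem filterMapTree_fst_convOption (t : Option (PTree α)) (u : Option (PTree β)) :
    filterMapTree Prod.fst (toBinaryTree (convOption t u)) = toBinaryTree t := by
  induction t using optionPTree_induction generalizing u with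
  | none =>
    rw [none_convOption, toBinaryTree_map, filterMapTree_map_none fun _ => rfl, toBinaryTree]
  | node a l r hl hr =>
    rcases u with _ | ⟨b, l', r'⟩
    · rw [convOption_none, toBinaryTree_map]
      exact filterMapTree_map_some (f := fun a => (some a, none)) (g := Prod.fst) (fun _ => rfl) _
    · simp only [convOption_node, toBinaryTree, filterMapTree, hl, hr, nodeOrNil]

theorem filterMapTree_snd_convOption (t : Option (PTree α)) (u : Option (PTree β)) :
    filterMapTree Prod.snd (toBinaryTree (convOption t u)) = toBinaryTree u := by
  induction u using optionPTree_induction generalizing t with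
  | none =>
    rw [convOption_none, toBinaryTree_map, filterMapTree_map_none fun _ => rfl, toBinaryTree]
  | node b l' r' hl hr =>
    rcases t with _ | ⟨a, l, r⟩
    · rw [none_convOption, toBinaryTree_map]
      exact filterMapTree_map_some (f := fun b => (none, some b)) (g := Prod.snd) (fun _ => rfl) _
    · simp only [convOption_node, toBinaryTree, filterMapTree, hl, hr, nodeOrNil]

/-- The value of `g` on a pair of trees, one of which may have ended already, is determined by the
two root labels and the values on the two pairs of subtrees. -/
def IsCompositional₂ (g : BinaryTree α → BinaryTree β → V) : Prop :=
  ∀ x y l₁ l₂ r₁ r₂ l₁' l₂' r₁' r₂', g l₁ l₂ = g l₁' l₂' → g r₁ r₂ = g r₁' r₂' →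
    g (nodeOrNil x l₁ r₁) (nodeOrNil y l₂ r₂) = g (nodeOrNil x l₁' r₁') (nodeOrNil y l₂' r₂')

theorem IsCompositional₂.exists_treeAut [Finite V] {g : BinaryTree α → BinaryTree β → V}
    (hg : IsCompositional₂ g) (S : Set V) :
    ∃ M : TreeAut (Option α × Option β), ∀ t u, M.Accepts (.conv t u) ↔
      g (toBinaryTree (some t)) (toBinaryTree (some u)) ∈ S := by
  have hcomp : IsCompositional fun T : BinaryTree (Option α × Option β) =>
      g (filterMapTree Prod.fst T) (filterMapTree Prod.snd T) :=
    fun a l r l' r' hl hr => hg _ _ _ _ _ _ _ _ _ _ hl hr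
  obtain ⟨M, hM⟩ := hcomp.exists_treeAut S
  refine ⟨M, fun t u => ?_⟩
  rw [hM, show some (PTree.conv t u) = convOption (some t) (some u) from rfl,
    filterMapTree_fst_convOption, filterMapTree_snd_convOption]

end TreeAutomata

section Root

variable {α β V : Type} [Finite V]

theorem IsCompositional.exists_treeAut_node [Finite α] {g : BinaryTree α → V}
    (hg : IsCompositional g) (S : Set (α × V × V)) :
    ∃ M : TreeAut α, ∀ t a l r, toBinaryTree (some t) = .node a l r →
      (M.Accepts t ↔ (a, g l, g r) ∈ S) := by
  let atRoot : BinaryTree α → Option (α × V × V)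
    | .node a l r => some (a, g l, g r)
    | .nil => none
  have hcomp : IsCompositional fun T => (g T, atRoot T) := by
    intro a l r l' r' hl hr
    simp only [Prod.mk.injEq] at hl hr
    simp only [atRoot, hl.1, hr.1, hg a l r l' r' hl.1 hr.1]
  obtain ⟨M, hM⟩ := hcomp.exists_treeAut {x | ∃ v ∈ S, x.2 = some v}
  exact ⟨M, fun t a l r ht => by simp [hM, ht, atRoot]⟩

theorem IsCompositional₂.exists_treeAut_node [Finite α] [Finite β]
    {g : BinaryTree α → BinaryTree β → V} (hg : IsCompositional₂ g) (S : Set (α × β × V)) :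
    ∃ M : TreeAut (Option α × Option β), ∀ t u a b l l' r r',
      toBinaryTree (some t) = .node a l r → toBinaryTree (some u) = .node b l' r' →
      (M.Accepts (.conv t u) ↔ (a, b, g l l') ∈ S) := by
  let atRoot : BinaryTree α → BinaryTree β → Option (α × β × V)
    | .node a l _, .node b l' _ => some (a, b, g l l')
    | _, _ => none
  have hcomp : IsCompositional₂ fun T U => (g T U, atRoot T U) := by
    intro x y l₁ l₂ r₁ r₂ l₁' l₂' r₁' r₂' hl hr
    simp only [Prod.mk.injEq] at hl hr ⊢
    refine ⟨hg _ _ _ _ _ _ _ _ _ _ hl.1 hr.1, ?_⟩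
    cases x <;> cases y <;> simp only [nodeOrNil, atRoot, hl.1]
  obtain ⟨M, hM⟩ := hcomp.exists_treeAut {x | ∃ v ∈ S, x.2 = some v}
  exact ⟨M, fun t u a b l l' r r' ht hu => by simp [hM, ht, hu, atRoot]⟩

end Root

/-! ## Automata on encoded configurations -/

section Summary

variable {P B C : Type} (bot : B) (δ : P → B → Op B → P → Prop)

/-- What an automaton that decides `Transfer` has to know about a pair of forests. -/
structure PairSummary (P B : Type) where
  transfer : Bool → Bool → WordType P B → P → P → Prop
  transferNil : Bool → Bool → WordType P B → P → P → Prop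
  ascent : Bool → WordType P B → P → P → Prop
  descent : Bool → Bool → WordType P B → P → P → Prop
  areEqual : Prop
  isNil : Prop

instance [Finite P] [Finite B] : Finite (PairSummary P B) :=
  have : Finite (P → P → Prop) := inferInstance
  have : Finite (Bool → WordType P B → P → P → Prop) := inferInstance
  .of_injective (fun x => (x.transfer, x.transferNil, x.ascent, x.descent, x.areEqual, x.isNil))
    fun x y h => by cases x; cases y; simpa using h

/-- The summary of a pair of forests. -/
def pairSummary (F F' : Forest B) : PairSummary P B where
  transfer := Transfer bot δ F F'
  transferNil := Transfer bot δ F .nil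
  ascent := Ascent bot δ F'
  descent := Descent bot δ F
  areEqual := F' = F
  isNil := F' = .nil

variable {bot δ}

theorem ascent_node_congr (a : NodeLabel B) {l l' r r' : Forest B}
    (hl : Ascent bot δ l = Ascent bot δ l') (hr : Ascent bot δ r = Ascent bot δ r')
    (hnil : (r = .nil) = (r' = .nil)) :
    Ascent bot δ (.node a l r) = Ascent bot δ (.node a l' r') := by
  funext e τ p q
  rcases a with _ | x <;> simp only [Ascent, hl, hr, hnil]

theorem descent_node_congr (a : NodeLabel B) {l l' r r' : Forest B}
    (hl : Descent bot δ l = Descent bot δ l') (hr : Descent bot δ r = Descent bot δ r') :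
    Descent bot δ (.node a l r) = Descent bot δ (.node a l' r') := by
  funext e b τ q q'
  rcases a with _ | x <;> simp only [Descent, hl, hr]

theorem transfer_nil_left_congr {F F' : Forest B} (h : Ascent bot δ F = Ascent bot δ F') :
    Transfer bot δ .nil F = Transfer bot δ .nil F' := by
  funext e e' τ q q'
  simp only [Transfer, h]

theorem transfer_node_nil_congr (a : NodeLabel B) {l l' r r' : Forest B}
    (hl : Transfer bot δ l .nil = Transfer bot δ l' .nil)
    (hr : Descent bot δ r = Descent bot δ r') :
    Transfer bot δ (.node a l r) .nil = Transfer bot δ (.node a l' r') .nil := by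
  funext e e' τ q q'
  rcases a with _ | x <;>
    simp only [Transfer, hl, hr, reduceCtorEq, false_and, exists_false, or_false]

theorem transfer_node_node_congr (a b : NodeLabel B) {l₁ l₂ r₁ r₂ l₁' l₂' r₁' r₂' : Forest B}
    (hl : pairSummary bot δ l₁ l₂ = pairSummary bot δ l₁' l₂')
    (hr : pairSummary bot δ r₁ r₂ = pairSummary bot δ r₁' r₂') :
    Transfer bot δ (.node a l₁ r₁) (.node b l₂ r₂) =
      Transfer bot δ (.node a l₁' r₁') (.node b l₂' r₂') := by
  simp only [pairSummary, PairSummary.mk.injEq] at hl hr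
  obtain ⟨hlt, hln, hla, -, hle, -⟩ := hl
  obtain ⟨hrt, hrn, hra, hrd, -, hr0⟩ := hr
  have hasc := ascent_node_congr b hla hra hr0
  funext e e' τ q q'
  rcases a with _ | x <;> rcases b with _ | y <;>
    simp [Transfer, hlt, hln, hle, hrt, hrn, hra, hrd, hr0, hasc]

theorem isCompositional₂_pairSummary : IsCompositional₂ (pairSummary bot δ) := by
  intro x y l₁ l₂ r₁ r₂ l₁' l₂' r₁' r₂' hl hr
  have hl' := hl
  have hr' := hr
  simp only [pairSummary, PairSummary.mk.injEq] at hl' hr'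
  obtain ⟨-, hln, hla, hld, hle, -⟩ := hl'
  obtain ⟨-, -, hra, hrd, hre, hr0⟩ := hr'
  rcases x with _ | a <;> rcases y with _ | b
  · rfl
  · have hasc := ascent_node_congr b hla hra hr0
    simp only [pairSummary, nodeOrNil, transfer_nil_left_congr hasc, hasc, reduceCtorEq]
  · simp only [pairSummary, nodeOrNil, transfer_node_nil_congr a hln hrd,
      descent_node_congr a hld hrd, reduceCtorEq]
  · simp only [pairSummary, nodeOrNil, transfer_node_nil_congr a hln hrd,
      ascent_node_congr b hla hra hr0, descent_node_congr a hld hrd,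
      transfer_node_node_congr a b hl hr, BinaryTree.node.injEq, reduceCtorEq, hle, hre]

/-- The label of a forest node; a state label becomes the junk value `none`. -/
def forgetState : C ⊕ NodeLabel B → NodeLabel B := Sum.elim (fun _ => none) id

/-- The forest that results from forgetting the state labels. -/
def toForest (T : BinaryTree (C ⊕ NodeLabel B)) : Forest B := T.map forgetState

/-- A forest as a tree over the larger alphabet. -/
def ofForest (F : Forest B) : BinaryTree (C ⊕ NodeLabel B) := F.map Sum.inr

/-- The tree encoding of the configuration with state `q` whose stack is encoded by `F`. -/
def configTree (q : C) (F : Forest B) : BinaryTree (C ⊕ NodeLabel B) :=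
  .node (Sum.inl q) (ofForest F) .nil

theorem toForest_ofForest (F : Forest B) : toForest (C := C) (ofForest F) = F := by
  rw [toForest, ofForest, ← BinaryTree.comp_map]
  exact BinaryTree.id_map F

theorem toForest_eq_nil_iff {T : BinaryTree (C ⊕ NodeLabel B)} : toForest T = .nil ↔ T = .nil := by
  cases T <;> simp [toForest, BinaryTree.map]

theorem toForest_node (a : C ⊕ NodeLabel B) (l r : BinaryTree (C ⊕ NodeLabel B)) :
    toForest (.node a l r) = .node (forgetState a) (toForest l) (toForest r) := rfl

theorem toForest_nodeOrNil (x : Option (C ⊕ NodeLabel B)) (l r : BinaryTree (C ⊕ NodeLabel B)) :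
    toForest (nodeOrNil x l r) = nodeOrNil (x.map forgetState) (toForest l) (toForest r) :=
  map_nodeOrNil forgetState x l r

theorem configTree_injective {q q' : C} {F F' : Forest B} (h : configTree q F = configTree q' F') :
    q = q' ∧ F = F' := by
  simp only [configTree, BinaryTree.node.injEq, Sum.inl.injEq, and_true] at h
  exact ⟨h.1, by rw [← toForest_ofForest (C := C) F, h.2, toForest_ofForest]⟩

theorem exists_treeAut_transfer [Finite P] [Finite B] [Finite C]
    (W : C → C → (Bool → Bool → WordType P B → P → P → Prop) → Prop) :
    ∃ M : TreeAut (Option (C ⊕ NodeLabel B) × Option (C ⊕ NodeLabel B)), ∀ t u q F q' F',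
      toBinaryTree (some t) = configTree q F → toBinaryTree (some u) = configTree q' F' →
      (M.Accepts (.conv t u) ↔ W q q' (Transfer bot δ F F')) := by
  have hcomp : IsCompositional₂ fun T T' : BinaryTree (C ⊕ NodeLabel B) =>
      pairSummary bot δ (toForest T) (toForest T') := by
    intro x y l₁ l₂ r₁ r₂ l₁' l₂' r₁' r₂' hl hr
    simp only [toForest_nodeOrNil]
    exact isCompositional₂_pairSummary _ _ _ _ _ _ _ _ _ _ hl hr
  obtain ⟨M, hM⟩ := hcomp.exists_treeAut_node
    {x | ∃ q q', x.1 = Sum.inl q ∧ x.2.1 = Sum.inl q' ∧ W q q' x.2.2.transfer}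
  refine ⟨M, fun t u q F q' F' ht hu => ?_⟩
  rw [hM t u _ _ _ _ _ _ ht hu]
  simp [toForest_ofForest, pairSummary]

/-- What an automaton that recognizes encodings of configurations has to know about a subtree. -/
structure TreeSummary (P B : Type) where
  isForest : Prop
  isNil : Prop
  rootLabel : Option (NodeLabel B)
  isCanonical : Prop
  ascent : Bool → WordType P B → P → P → Prop

instance [Finite P] [Finite B] : Finite (TreeSummary P B) :=
  have : Finite (P → P → Prop) := inferInstance
  have : Finite (Bool → WordType P B → P → P → Prop) := inferInstance
  .of_injective (fun x => (x.isForest, x.isNil, x.rootLabel, x.isCanonical, x.ascent))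
    fun x y h => by cases x; cases y; simpa using h

variable (bot δ) in
/-- The summary of a tree. -/
def treeSummary (T : BinaryTree (C ⊕ NodeLabel B)) : TreeSummary P B where
  isForest := ofForest (toForest T) = T
  isNil := T = .nil
  rootLabel := rootLabel (toForest T)
  isCanonical := IsCanonical (toForest T)
  ascent := Ascent bot δ (toForest T)

theorem isCanonical_node_congr (a : NodeLabel B) {l l' r r' : Forest B}
    (hl : IsCanonical l = IsCanonical l') (hr : IsCanonical r = IsCanonical r')
    (hnil : (l = .nil) = (l' = .nil)) (hroot : rootLabel r = rootLabel r') :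
    IsCanonical (.node a l r) = IsCanonical (.node a l' r') := by
  rcases a with _ | x <;> simp only [IsCanonical, hl, hr, hnil, hroot, ne_eq]

theorem isCompositional_treeSummary :
    IsCompositional (treeSummary bot δ : BinaryTree (C ⊕ NodeLabel B) → TreeSummary P B) := by
  intro a l r l' r' hl hr
  simp only [treeSummary, TreeSummary.mk.injEq, ← toForest_eq_nil_iff (C := C)] at hl hr
  obtain ⟨hlf, hl0, -, hlc, hla⟩ := hl
  obtain ⟨hrf, hr0, hrl, hrc, hra⟩ := hr
  simp only [treeSummary, toForest_node, isCanonical_node_congr _ hlc hrc hl0 hrl,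
    ascent_node_congr _ hla hra hr0, rootLabel, reduceCtorEq]
  simp only [ofForest, BinaryTree.map, BinaryTree.node.injEq] at hlf hrf ⊢
  simp only [hlf, hrf]

theorem exists_treeAut_ascent [Finite P] [Finite B] [Finite C]
    (W : C → (Bool → WordType P B → P → P → Prop) → Prop) :
    ∃ M : TreeAut (C ⊕ NodeLabel B), ∀ t, M.Accepts t ↔ ∃ q F,
      toBinaryTree (some t) = configTree q F ∧ IsCanonical F ∧ F ≠ .nil ∧
        W q (Ascent bot δ F) := by
  obtain ⟨M, hM⟩ := (isCompositional_treeSummary (bot := bot) (δ := δ)).exists_treeAut_node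
    {x : (C ⊕ NodeLabel B) × _ | ∃ q, x.1 = Sum.inl q ∧ x.2.1.isForest ∧ x.2.1.isCanonical ∧
      ¬ x.2.1.isNil ∧ W q x.2.1.ascent ∧ x.2.2.isNil}
  refine ⟨M, fun t => ?_⟩
  obtain ⟨a, l, r⟩ := t
  rw [hM _ a (toBinaryTree l) (toBinaryTree r) (by rw [toBinaryTree]), toBinaryTree]
  constructor
  · rintro ⟨q, ha, hl, hcan, hnil, hW, hr⟩
    refine ⟨q, toForest (toBinaryTree l), ?_, hcan, toForest_eq_nil_iff.not.2 hnil, hW⟩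
    rw [configTree, show a = Sum.inl q from ha, show toBinaryTree r = .nil from hr, hl]
  · rintro ⟨q, F, ht, hcan, hnil, hW⟩
    obtain ⟨ha, hl, hr⟩ := (BinaryTree.node.injEq ..).mp ht
    simp only [Set.mem_ofPred_eq, treeSummary, hl, toForest_ofForest]
    exact ⟨q, ha, trivial, hcan, toForest_eq_nil_iff.not.1 (by rwa [toForest_ofForest]), hW, hr⟩

end Summary

/-! ## Runs of the system on reversed stacks -/

section SystemRuns

variable {P B K X : Type}

/-- Passes between stacks, whose topmost word and letters come last, and reversed stacks. -/
def reverseStack (s : List (List (Letter B))) : List (List (Letter B)) :=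
  (s.map List.reverse).reverse

theorem reverseStack_reverseStack (s : RevStack B) : reverseStack (reverseStack s) = s := by
  simp [reverseStack, List.map_reverse]

theorem reverseStack_injective : Function.Injective (reverseStack (B := B)) :=
  Function.LeftInverse.injective reverseStack_reverseStack

theorem reverseStack_cons (w : List (Letter B)) (s : RevStack B) :
    reverseStack (w :: s) = reverseStack s ++ [w.reverse] := by
  simp [reverseStack]

theorem length_reverseStack (s : RevStack B) : (reverseStack s).length = s.length := by
  simp [reverseStack]

theorem reverseStack_bottom2 (bot : B) : reverseStack (bottom2 bot) = [[Sum.inl bot]] := by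
  simp [reverseStack, bottom2]

theorem symS_reverseStack (a : Letter B) (w : List (Letter B)) (s : RevStack B) :
    symS (reverseStack ((a :: w) :: s)) = some (symOf a) := by
  simp [reverseStack_cons, symS, top1]

theorem exists_of_symS_reverseStack {s : RevStack B} {x : B}
    (h : symS (reverseStack s) = some x) : ∃ a w t, s = (a :: w) :: t ∧ symOf a = x := by
  rcases s with _ | ⟨_ | ⟨a, w⟩, t⟩
  · simp [reverseStack, symS, top1] at h
  · simp [reverseStack, symS, top1] at h
  · exact ⟨a, w, t, rfl, Option.some.inj ((symS_reverseStack a w t).symm.trans h)⟩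

theorem clone2_reverseStack (w : List (Letter B)) (s : RevStack B) :
    clone2 (reverseStack (w :: s)) = some (reverseStack (w :: w :: s)) := by
  simp [reverseStack_cons, clone2, top2]

theorem pop2_reverseStack (w : List (Letter B)) {s t : RevStack B} :
    pop2 (reverseStack (w :: s)) = some (reverseStack t) ↔ s ≠ [] ∧ s = t := by
  simp [reverseStack_cons, pop2, length_reverseStack, List.length_pos_iff,
    reverseStack_injective.eq_iff]

theorem pop1_reverseStack (a : Letter B) (w : List (Letter B)) {s t : RevStack B} :
    pop1 (reverseStack ((a :: w) :: s)) = some (reverseStack t) ↔ w ≠ [] ∧ w :: s = t := by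
  rw [← reverseStack_injective.eq_iff]
  simp [reverseStack_cons, pop1, List.length_pos_iff]

theorem collapse_reverseStack_inl (x : B) (w : List (Letter B)) {s t : RevStack B} :
    collapse (reverseStack ((Sum.inl x :: w) :: s)) = some (reverseStack t) ↔
      w ≠ [] ∧ w :: s = t := by
  rw [← pop1_reverseStack (Sum.inl x)]
  simp [reverseStack_cons, collapse, top1]

theorem take_reverseStack (s : RevStack B) (k : ℕ) :
    (reverseStack s).take k = reverseStack (s.drop (s.length - k)) := by
  simp [reverseStack, List.map_drop, List.take_reverse]

theorem collapse_reverseStack_inr (x : B) {k : ℕ} (w : List (Letter B)) {s t : RevStack B}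
    (hk : k ≤ s.length) :
    collapse (reverseStack ((Sum.inr (x, k) :: w) :: s)) = some (reverseStack t) ↔
      t ≠ [] ∧ t <:+ s ∧ t.length = k := by
  have hs : (reverseStack ((Sum.inr (x, k) :: w) :: s)).take k =
      reverseStack (s.drop (s.length - k)) := by
    rw [reverseStack_cons, List.take_append_of_le_length (by rwa [length_reverseStack]),
      take_reverseStack]
  have hcollapse : collapse (reverseStack ((Sum.inr (x, k) :: w) :: s)) =
      if 0 < k then some (reverseStack (s.drop (s.length - k))) else none := by
    rw [← hs]
    simp [reverseStack_cons, collapse, top1]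
  rw [hcollapse, Option.ite_none_right_eq_some, Option.some.injEq, reverseStack_injective.eq_iff]
  constructor
  · rintro ⟨hpos, rfl⟩
    have hlen : (s.drop (s.length - k)).length = k := by
      rw [List.length_drop]
      omega
    exact ⟨List.length_pos_iff.1 (by rwa [hlen]), List.drop_suffix _ _, hlen⟩
  · rintro ⟨ht, hts, rfl⟩
    exact ⟨List.length_pos_iff.2 ht, (List.suffix_iff_eq_drop.1 hts).symm⟩

theorem RevStep.length_pos {bot : B} {δ : P → B → Op B → P → Prop} {c c' : RevConfig P B}
    (h : RevStep bot δ c c') : 0 < c'.2.length := by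
  cases h with
  | pop2 hs => exact List.length_pos_iff.2 hs
  | collapse2 ht => exact List.length_pos_iff.2 ht
  | _ => exact Nat.succ_pos _

variable [DecidableEq B]

theorem push1_reverseStack (bot x : B) (w : List (Letter B)) {s t : RevStack B} :
    push1 bot x (reverseStack (w :: s)) = some (reverseStack t) ↔
      x ≠ bot ∧ (Sum.inl x :: w) :: s = t := by
  rw [← reverseStack_injective.eq_iff]
  simp [reverseStack_cons, push1, top2]

theorem push2_reverseStack (bot x : B) (w : List (Letter B)) {s t : RevStack B} :
    push2 bot x (reverseStack (w :: s)) = some (reverseStack t) ↔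
      x ≠ bot ∧ (Sum.inr (x, s.length) :: w) :: s = t := by
  rw [← reverseStack_injective.eq_iff]
  simp [reverseStack_cons, push2, top2, length_reverseStack]

/-- The unlabelled transitions of the product of a pushdown system with a finite automaton that
reads its labels. -/
def productTransitions (S : CPS P B K) (M : DFA K X) (c : P × X) (a : B) (op : Op B)
    (c' : P × X) : Prop :=
  ∃ γ, (c.1, a, γ, c'.1, op) ∈ S.Δ ∧ c'.2 = M.step c.2 γ

variable {S : CPS P B K} {M : DFA K X}

theorem RevStep.of_applyOp {bot : B} {δ : P → B → Op B → P → Prop} {q q' : P} {a : Letter B}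
    {w : List (Letter B)} {s t : RevStack B} {op : Op B} (hδ : δ q (symOf a) op q')
    (hv : ValidLinks ((a :: w) :: s))
    (h : applyOp bot op (reverseStack ((a :: w) :: s)) = some (reverseStack t)) :
    RevStep bot δ (q, (a :: w) :: s) (q', t) := by
  cases op with
  | clone2 =>
    obtain rfl := reverseStack_injective (Option.some.inj ((clone2_reverseStack _ _).symm.trans h))
    exact .clone hδ
  | pop1 =>
    obtain ⟨hw, rfl⟩ := (pop1_reverseStack _ _).1 h
    exact .pop1 hw hδ
  | pop2 =>
    obtain ⟨hs, rfl⟩ := (pop2_reverseStack _).1 h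
    exact .pop2 hs hδ
  | push1 x =>
    obtain ⟨hx, rfl⟩ := (push1_reverseStack _ _ _).1 h
    exact .push1 hx hδ
  | push2 x =>
    obtain ⟨hx, rfl⟩ := (push2_reverseStack _ _ _).1 h
    exact .push2 hx hδ
  | collapse =>
    rcases a with a | ⟨a, k⟩
    · obtain ⟨hw, rfl⟩ := (collapse_reverseStack_inl _ _).1 h
      exact .collapse1 hw hδ
    · have hk : k ≤ s.length := hv.1 a k List.mem_cons_self
      obtain ⟨ht, hts, rfl⟩ := (collapse_reverseStack_inr _ _ hk).1 h
      exact .collapse2 ht hts hδ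

theorem RevStep.exists_applyOp {bot : B} {δ : P → B → Op B → P → Prop} {c c' : RevConfig P B}
    (h : RevStep bot δ c c') : ∃ x op, symS (reverseStack c.2) = some x ∧ δ c.1 x op c'.1 ∧
      applyOp bot op (reverseStack c.2) = some (reverseStack c'.2) := by
  cases h with
  | clone hδ => exact ⟨_, _, symS_reverseStack _ _ _, hδ, clone2_reverseStack _ _⟩
  | push1 hx hδ =>
    exact ⟨_, _, symS_reverseStack _ _ _, hδ, (push1_reverseStack _ _ _).2 ⟨hx, rfl⟩⟩
  | push2 hx hδ =>
    exact ⟨_, _, symS_reverseStack _ _ _, hδ, (push2_reverseStack _ _ _).2 ⟨hx, rfl⟩⟩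
  | pop2 hs hδ => exact ⟨_, _, symS_reverseStack _ _ _, hδ, (pop2_reverseStack _).2 ⟨hs, rfl⟩⟩
  | pop1 hw hδ => exact ⟨_, _, symS_reverseStack _ _ _, hδ, (pop1_reverseStack _ _).2 ⟨hw, rfl⟩⟩
  | collapse1 hw hδ =>
    exact ⟨_, _, symS_reverseStack _ _ _, hδ, (collapse_reverseStack_inl _ _).2 ⟨hw, rfl⟩⟩
  | collapse2 ht hts hδ =>
    exact ⟨_, _, symS_reverseStack _ _ _, hδ,
      (collapse_reverseStack_inr _ _ hts.length_le).2 ⟨ht, hts, rfl⟩⟩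

theorem Trans.revStep {γ : K} {q q' : P} {s t : RevStack B}
    (h : Trans S γ (q, reverseStack s) (q', reverseStack t)) (d : X) (hv : ValidLinks s) :
    RevStep S.bot (productTransitions S M) ((q, d), s) ((q', M.step d γ), t) := by
  obtain ⟨op, x, hx, hΔ, hop⟩ := h
  obtain ⟨a, w, s, rfl, rfl⟩ := exists_of_symS_reverseStack hx
  exact .of_applyOp ⟨γ, hΔ, rfl⟩ hv hop

theorem RevStep.exists_trans {c c' : RevConfig (P × X) B}
    (h : RevStep S.bot (productTransitions S M) c c') :
    ∃ γ, Trans S γ (c.1.1, reverseStack c.2) (c'.1.1, reverseStack c'.2) ∧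
      c'.1.2 = M.step c.1.2 γ := by
  obtain ⟨x, op, hx, ⟨γ, hΔ, hM⟩, hop⟩ := h.exists_applyOp
  exact ⟨γ, ⟨op, x, hx, hΔ, hop⟩, hM⟩

/-- `LabelledPath S w c c'`: there is a run from `c` to `c'` with label word `w`. -/
def LabelledPath (S : CPS P B K) : List K → P × Stack2 B → P × Stack2 B → Prop
  | [], c, c' => c = c'
  | γ :: w, c, c' => ∃ c₁, Trans S γ c c₁ ∧ LabelledPath S w c₁ c'

theorem labelledPath_of_transOp (n : ℕ) (cfg : ℕ → P × Stack2 B) (lab : ℕ → K) (op : ℕ → Op B)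
    (h : ∀ i, i < n → TransOp S (lab i) (op i) (cfg i) (cfg (i + 1))) :
    LabelledPath S (List.ofFn fun i : Fin n => lab i) (cfg 0) (cfg n) := by
  induction n generalizing cfg lab op with
  | zero => exact rfl
  | succ n ih =>
    rw [List.ofFn_succ]
    exact ⟨cfg 1, ⟨op 0, h 0 n.succ_pos⟩, ih (fun i => cfg (i + 1)) (fun i => lab (i + 1))
      (fun i => op (i + 1)) fun i hi => h (i + 1) (Nat.succ_lt_succ hi)⟩

/-- The run extending `ρ` by a first transition. -/
def consRun (ρ : Run S) (c : P × Stack2 B) (γ : K) (op : Op B) (h : TransOp S γ op c (ρ.cfg 0)) :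
    Run S where
  len := ρ.len + 1
  cfg i := i.casesOn c ρ.cfg
  lab i := i.casesOn γ ρ.lab
  op i := i.casesOn op ρ.op
  ok
    | 0, _ => h
    | i + 1, hi => ρ.ok i (Nat.lt_of_succ_lt_succ hi)

theorem labels_consRun (ρ : Run S) (c : P × Stack2 B) (γ : K) (op : Op B)
    (h : TransOp S γ op c (ρ.cfg 0)) : (consRun ρ c γ op h).labels = γ :: ρ.labels :=
  List.ofFn_succ

-- A run of length `0` still carries junk labels, so there has to be one.
theorem LabelledPath.exists_run [Nonempty K] {w : List K} {c c' : P × Stack2 B}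
    (h : LabelledPath S w c c') : ∃ ρ : Run S, ρ.cfg 0 = c ∧ ρ.cfg ρ.len = c' ∧ ρ.labels = w := by
  induction w generalizing c with
  | nil =>
    obtain rfl := h
    exact ⟨⟨0, fun _ => c, fun _ => Classical.arbitrary K, fun _ => .pop1, by simp⟩, rfl, rfl, rfl⟩
  | cons γ w ih =>
    obtain ⟨_, ⟨op, hop⟩, h⟩ := h
    obtain ⟨ρ, rfl, hlast, rfl⟩ := ih h
    exact ⟨consRun ρ c γ op hop, rfl, hlast, labels_consRun ρ c γ op hop⟩

theorem reachL_iff_exists_labelledPath [Nonempty K] {L : Language K} {c c' : P × Stack2 B} :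
    ReachL S L c c' ↔ ∃ w ∈ L, LabelledPath S w c c' := by
  constructor
  · rintro ⟨ρ, rfl, rfl, h⟩
    exact ⟨_, h, labelledPath_of_transOp ρ.len ρ.cfg ρ.lab ρ.op ρ.ok⟩
  · rintro ⟨w, hw, h⟩
    obtain ⟨ρ, hfst, hlast, rfl⟩ := h.exists_run
    exact ⟨ρ, hfst, hlast, hw⟩

theorem LabelledPath.runAbove {w : List K} {q q' : P} {s t : RevStack B}
    (h : LabelledPath S w (q, reverseStack s) (q', reverseStack t)) (d : X) (hv : ValidLinks s)
    (hs : s ≠ []) :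
    RunAbove S.bot (productTransitions S M) 0 ((q, d), s) ((q', M.evalFrom d w), t) := by
  induction w generalizing q s d with
  | nil =>
    obtain ⟨rfl, hst⟩ := Prod.mk.inj h
    obtain rfl := reverseStack_injective hst
    exact .refl (List.length_pos_iff.2 hs)
  | cons γ w ih =>
    obtain ⟨⟨q₁, s₁⟩, hstep, h⟩ := h
    rw [← reverseStack_reverseStack s₁] at hstep h
    have hstep := hstep.revStep (M := M) d hv
    exact .head (List.length_pos_iff.2 hs) hstep
      (ih h _ (hstep.validLinks hv) (List.length_pos_iff.1 hstep.length_pos))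

theorem RunAbove.exists_labelledPath {m : ℕ} {c c' : RevConfig (P × X) B}
    (h : RunAbove S.bot (productTransitions S M) m c c') :
    ∃ w, LabelledPath S w (c.1.1, reverseStack c.2) (c'.1.1, reverseStack c'.2) ∧
      c'.1.2 = M.evalFrom c.1.2 w := by
  induction h using RunAbove.head_induction_on with
  | refl => exact ⟨[], rfl, rfl⟩
  | head _ _ _ hs _ ih =>
    obtain ⟨γ, hγ, hM⟩ := hs.exists_trans
    obtain ⟨w, hw, hMw⟩ := ih
    exact ⟨γ :: w, ⟨_, hγ, hw⟩, by rw [hMw, hM, DFA.evalFrom_cons]⟩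

theorem reachL_accepts_iff [Nonempty K] {q q' : P} {s t : RevStack B} (hv : ValidLinks s)
    (hs : s ≠ []) :
    ReachL S M.accepts (q, reverseStack s) (q', reverseStack t) ↔ ∃ d ∈ M.accept,
      RunAbove S.bot (productTransitions S M) 0 ((q, M.start), s) ((q', d), t) := by
  rw [reachL_iff_exists_labelledPath]
  constructor
  · rintro ⟨_, hw, h⟩
    exact ⟨_, hw, h.runAbove M.start hv hs⟩
  · rintro ⟨d, hd, h⟩
    obtain ⟨w, hw, rfl⟩ := h.exists_labelledPath
    exact ⟨w, hd, hw⟩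

end SystemRuns

/-! ## The languages of the contraction -/

section Languages

variable {K : Type}

theorem isRegular_of_leftQuotient_mem {s : Set (Language K)} (hs : s.Finite)
    (hquot : ∀ L ∈ s, ∀ x, L.leftQuotient [x] ∈ s) {L : Language K} (hL : L ∈ s) :
    L.IsRegular := by
  refine Language.isRegular_iff_finite_range_leftQuotient.2 (hs.subset ?_)
  rintro _ ⟨w, rfl⟩
  induction w generalizing L with
  | nil => exact hL
  | cons x _ ih => exact ih (hquot L hL x)

theorem mem_epsStar {e : K} {w : List K} : w ∈ epsStar e ↔ ∀ x ∈ w, x = e := by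
  rw [epsStar, Language.mem_kstar]
  constructor
  · rintro ⟨L, rfl, h⟩ x hx
    obtain ⟨y, hy, hx⟩ := List.mem_flatten.1 hx
    obtain rfl : y = [e] := h y hy
    exact List.mem_singleton.1 hx
  · intro h
    refine ⟨w.map fun x => [x], by simp [← List.flatMap_def], fun y hy => ?_⟩
    obtain ⟨x, hx, rfl⟩ := List.mem_map.1 hy
    rw [h x hx]
    rfl

theorem mem_epsStar_mul {e : K} {L : Language K} {w : List K} :
    w ∈ epsStar e * L ↔ ∃ u, (∀ x ∈ u, x = e) ∧ ∃ v ∈ L, u ++ v = w := by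
  simp only [Language.mem_mul, mem_epsStar]

theorem cons_mem_edgeLang {e g x : K} {w : List K} :
    x :: w ∈ edgeLang e g ↔ x = g ∧ w = [] ∨ x = e ∧ w ∈ edgeLang e g := by
  simp only [edgeLang, mem_epsStar_mul]
  constructor
  · rintro ⟨u, hu, v, hv, h⟩
    rcases u with _ | ⟨y, u⟩
    · obtain ⟨rfl, rfl⟩ := List.cons.inj (h.symm.trans (show v = [g] from hv))
      exact Or.inl ⟨rfl, rfl⟩
    · obtain ⟨rfl, rfl⟩ := List.cons.inj h
      have hu := List.forall_mem_cons.1 hu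
      exact Or.inr ⟨hu.1, u, hu.2, v, hv, rfl⟩
  · rintro (⟨rfl, rfl⟩ | ⟨rfl, u, hu, v, hv, rfl⟩)
    · exact ⟨[], by simp, [x], rfl, rfl⟩
    · exact ⟨x :: u, List.forall_mem_cons.2 ⟨rfl, hu⟩, v, hv, rfl⟩

open Classical in
theorem leftQuotient_edgeLang (e g x : K) : (edgeLang e g).leftQuotient [x] =
    (if x = g then 1 else 0) + (if x = e then edgeLang e g else 0) := by
  ext w
  rw [Language.mem_leftQuotient, List.singleton_append, cons_mem_edgeLang, Language.mem_add]
  split_ifs <;> simp_all [Language.mem_one, Language.notMem_zero]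

theorem isRegular_edgeLang (e g : K) : (edgeLang e g).IsRegular := by
  have hone (x : K) : Language.leftQuotient 1 [x] = 0 := by
    ext w
    simp [Language.mem_leftQuotient, Language.mem_one, Language.notMem_zero]
  have hadd (L : Language K) (x : K) :
      (1 + L).leftQuotient [x] = Language.leftQuotient 1 [x] + L.leftQuotient [x] := rfl
  let s : Set (Language K) := {0, 1, edgeLang e g, 1 + edgeLang e g}
  have hedge (x : K) : (edgeLang e g).leftQuotient [x] ∈ s := by
    rw [leftQuotient_edgeLang]
    split_ifs <;> simp [s]
  refine isRegular_of_leftQuotient_mem (s := s) (Set.toFinite _) ?_ (by simp [s])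
  rintro L (rfl | rfl | rfl | rfl) x
  · exact Or.inl rfl
  · exact Or.inl (hone x)
  · exact hedge x
  · rw [hadd, hone, zero_add]
    exact hedge x

theorem append_mem_domLang {e : K} {u v : List K} (hu : u ∈ epsStar e * nonEpsLang e)
    (hv : v ∈ domLang e) : u ++ v ∈ domLang e :=
  (mul_kstar_le_kstar : _ * domLang e ≤ domLang e) (Language.append_mem_mul hu hv)

theorem cons_mem_domLang_of_ne {e x : K} {w : List K} (hx : x ≠ e) (hw : w ∈ domLang e) :
    x :: w ∈ domLang e :=
  append_mem_domLang (mem_epsStar_mul.2 ⟨[], by simp, [x], ⟨x, hx, rfl⟩, rfl⟩) hw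

theorem cons_mem_domLang_of_ne_nil {e : K} {w : List K} (hw : w ∈ domLang e) (hn : w ≠ []) :
    e :: w ∈ domLang e := by
  rw [domLang, ← Language.one_add_self_mul_kstar_eq_kstar] at hw
  obtain ⟨_, hu, v, hv, rfl⟩ := Language.mem_mul.1 (hw.resolve_left hn)
  obtain ⟨u, he, x, hx, rfl⟩ := mem_epsStar_mul.1 hu
  exact append_mem_domLang
    (mem_epsStar_mul.2 ⟨e :: u, List.forall_mem_cons.2 ⟨rfl, he⟩, x, hx, rfl⟩) hv

theorem mem_domLang {e : K} {w : List K} : w ∈ domLang e ↔ ∀ x ∈ w.getLast?, x ≠ e := by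
  have le : domLang e ≤ ({w | ∀ x ∈ w.getLast?, x ≠ e} : Language K) := by
    refine kstar_le_of_mul_le_left ?_ ?_
    · rintro _ rfl
      simp
    · rintro _ ⟨u, -, _, ⟨v, -, _, ⟨y, hy, rfl⟩, rfl⟩, rfl⟩
      simp [hy]
  refine ⟨fun h => le h, fun h => ?_⟩
  induction w with
  | nil => exact Language.nil_mem_kstar _
  | cons x w ih =>
    have hw : w ∈ domLang e := ih <| by
      cases w with
      | nil => simp
      | cons y w => rwa [List.getLast?_cons_cons] at h
    by_cases hx : x = e
    · subst hx
      refine cons_mem_domLang_of_ne_nil hw ?_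
      rintro rfl
      simp at h
    · exact cons_mem_domLang_of_ne hx hw

theorem isRegular_domLang (e : K) : (domLang e).IsRegular := by
  classical
  let M : DFA K Bool := ⟨fun _ x => decide (x ≠ e), true, {true}⟩
  refine ⟨Bool, inferInstance, M, Language.ext fun w => ?_⟩
  rw [mem_domLang, DFA.mem_accepts]
  rcases List.eq_nil_or_concat' w with rfl | ⟨w, x, rfl⟩
  · simp [M]
  · simp [M, DFA.eval_append_singleton]

end Languages

/-! ## Tree-automaticity -/

section Main

variable {P B K X : Type}

/-- The stack encoded by a forest, in the order of `Stack2`. All its words extend the bottom word,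
so the forest describes only what lies above `⊥`. -/
def forestStack (bot : B) (F : Forest B) : Stack2 B := reverseStack (decode F [Sum.inl bot] [])

theorem forestStack_injOn (bot : B) : Set.InjOn (forestStack bot) {F | IsCanonical F} :=
  fun _ hF _ hF' h => decode_injective hF hF' (reverseStack_injective h)

theorem validBase_bottom (bot : B) : ValidBase [Sum.inl bot] [] :=
  ⟨List.cons_ne_nil _ _, fun x k h => by simp at h, trivial⟩

theorem isWellFormed_bottom (bot : B) : IsWellFormed bot [[Sum.inl bot]] :=
  ⟨List.suffix_refl _, fun _ _ _ h => absurd (h.subset List.mem_cons_self) (by simp), trivial⟩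

theorem bottom2_eq_reverseStack (bot : B) : bottom2 bot = reverseStack [[Sum.inl bot]] := by
  rw [← reverseStack_bottom2, reverseStack_reverseStack]

theorem RunAbove.isWellFormed {bot : B} {δ : P → B → Op B → P → Prop} {m : ℕ}
    {c c' : RevConfig P B} (h : RunAbove bot δ m c c') (hc : IsWellFormed bot c.2) :
    IsWellFormed bot c'.2 := by
  obtain ⟨-, h⟩ := h
  induction h with
  | refl => exact hc
  | tail _ h ih => exact h.1.isWellFormed ih

variable [DecidableEq B]

/-- The type of the bottom word with respect to the product of `S` and `M`. -/
def bottomType (S : CPS P B K) (M : DFA K X) : WordType (P × X) B :=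
  wordType S.bot (productTransitions S M) ([Sum.inl S.bot].map (tagFor 0))

variable [Nonempty K]

theorem reachL_forestStack_iff (S : CPS P B K) (M : DFA K X) {F F' : Forest B}
    (hF : IsCanonical F) (hn : F ≠ .nil) (hF' : IsCanonical F') (q q' : P) :
    ReachL S M.accepts (q, forestStack S.bot F) (q', forestStack S.bot F') ↔
      ∃ d ∈ M.accept, Transfer S.bot (productTransitions S M) F F' false false (bottomType S M)
        (q, M.start) (q', d) := by
  have hbot := validBase_bottom S.bot
  have hne : decode F [Sum.inl S.bot] [] ≠ [] :=
    List.length_pos_iff.1 (length_lt_length_decode hF hn _ [])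
  rw [forestStack, forestStack, reachL_accepts_iff (hbot.validLinks.decode hbot.linksLE F) hne]
  exact exists_congr fun d => and_congr_right fun _ =>
    (transferCorrect hF hF' (e := false) (e' := false) hbot).symm

theorem reachL_bottom2_iff (S : CPS P B K) (M : DFA K X) {F : Forest B} (hF : IsCanonical F)
    (q q' : P) :
    ReachL S M.accepts (q, bottom2 S.bot) (q', forestStack S.bot F) ↔
      ∃ d ∈ M.accept, Ascent S.bot (productTransitions S M) F false (bottomType S M)
        (q, M.start) (q', d) := by
  have hbot := validBase_bottom S.bot
  rw [bottom2_eq_reverseStack, forestStack,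
    reachL_accepts_iff hbot.validLinks_cons (List.cons_ne_nil _ _)]
  exact exists_congr fun d => and_congr_right fun _ => (ascentCorrect hF (e := false) hbot).symm

theorem exists_forestStack_of_reachL {S : CPS P B K} {L : Language K} (hL : L.IsRegular) {q q' : P}
    {s : Stack2 B} (h : ReachL S L (q, bottom2 S.bot) (q', s)) :
    ∃ F, IsCanonical F ∧ F ≠ .nil ∧ forestStack S.bot F = s := by
  obtain ⟨X, _, M, rfl⟩ := hL
  rw [bottom2_eq_reverseStack, ← reverseStack_reverseStack s,
    reachL_accepts_iff (validBase_bottom S.bot).validLinks_cons (List.cons_ne_nil _ _)] at h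
  obtain ⟨d, -, h⟩ := h
  obtain ⟨F, hF, hs⟩ := (h.isWellFormed (isWellFormed_bottom S.bot)).exists_decode_eq
  refine ⟨F, hF, ?_, by rw [forestStack, hs, reverseStack_reverseStack]⟩
  rintro rfl
  exact h.lt_length_right.ne (congrArg List.length hs)

variable [Finite P] [Finite B]

theorem exists_treeAut_reachL (S : CPS P B K) {L : Language K} (hL : L.IsRegular) :
    ∃ M : TreeAut (Option (P ⊕ NodeLabel B) × Option (P ⊕ NodeLabel B)), ∀ t u q F q' F',
      toBinaryTree (some t) = configTree q F → toBinaryTree (some u) = configTree q' F' →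
      IsCanonical F → F ≠ .nil → IsCanonical F' →
      (M.Accepts (.conv t u) ↔
        ReachL S L (q, forestStack S.bot F) (q', forestStack S.bot F')) := by
  obtain ⟨X, _, M, rfl⟩ := hL
  obtain ⟨N, hN⟩ := exists_treeAut_transfer (bot := S.bot) (δ := productTransitions S M)
    fun q q' R => ∃ d ∈ M.accept, R false false (bottomType S M) (q, M.start) (q', d)
  refine ⟨N, fun t u q F q' F' ht hu hF hn hF' => ?_⟩
  rw [hN t u q F q' F' ht hu, reachL_forestStack_iff S M hF hn hF']

theorem exists_treeAut_reachL_bottom2 (S : CPS P B K) (q₀ : P) {L : Language K}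
    (hL : L.IsRegular) :
    ∃ M : TreeAut (P ⊕ NodeLabel B), ∀ t, M.Accepts t ↔ ∃ q F,
      toBinaryTree (some t) = configTree q F ∧ IsCanonical F ∧ F ≠ .nil ∧
        ReachL S L (q₀, bottom2 S.bot) (q, forestStack S.bot F) := by
  obtain ⟨X, _, M, rfl⟩ := hL
  obtain ⟨N, hN⟩ := exists_treeAut_ascent (bot := S.bot) (δ := productTransitions S M)
    fun q U => ∃ d ∈ M.accept, U false (bottomType S M) (q₀, M.start) (q, d)
  refine ⟨N, fun t => (hN t).trans (exists_congr fun q => exists_congr fun F => ?_)⟩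
  exact and_congr_right fun _ => and_congr_right fun hF => and_congr_right fun _ =>
    (reachL_bottom2_iff S M hF q₀ q).symm

theorem isTreeAutomatic_reachL {I : Type} (S : CPS P B K) (q₀ : P) {D : Language K}
    (hD : D.IsRegular) {E : I → Language K} (hE : ∀ i, (E i).IsRegular) :
    IsTreeAutomatic (B := {c : P × Stack2 B // ReachL S D (q₀, bottom2 S.bot) c})
      fun i c c' => ReachL S (E i) c.1 c'.1 := by
  obtain ⟨N, hN⟩ := exists_treeAut_reachL_bottom2 S q₀ hD
  choose M hM using fun i => exists_treeAut_reachL S (hE i)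
  choose q F htree hcan hne hreach using fun t : {t // N.Accepts t} => (hN t).1 t.2
  refine ⟨P ⊕ NodeLabel B, inferInstance, N, M, fun t => ⟨(q t, forestStack S.bot (F t)), hreach t⟩,
    ⟨fun t u h => ?_, fun ⟨⟨p, s⟩, hc⟩ => ?_⟩, fun i t u =>
      hM i t u _ _ _ _ (htree t) (htree u) (hcan t) (hne t) (hcan u)⟩
  · obtain ⟨hq, hs⟩ := Prod.mk.inj (Subtype.mk.inj h)
    have hF : F t = F u := forestStack_injOn S.bot (hcan t) (hcan u) hs
    have htu : toBinaryTree (some t.1) = toBinaryTree (some u.1) := by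
      rw [htree, htree, hq, hF]
    exact Subtype.ext (Option.some.inj (toBinaryTree_injective htu))
  · obtain ⟨F', hcan', hne', rfl⟩ := exists_forestStack_of_reachL hD hc
    obtain ⟨t, ht⟩ := exists_toBinaryTree_eq_node (Sum.inl p) (ofForest F') .nil
    let t' : {t // N.Accepts t} := ⟨t, (hN t).2 ⟨p, F', ht, hcan', hne', hc⟩⟩
    obtain ⟨hq, hF⟩ := configTree_injective ((htree t').symm.trans ht)
    exact ⟨t', Subtype.ext (Prod.ext hq (congrArg (forestStack S.bot) hF))⟩

end Main

theorem epsContraction_with_regular_reachability_isTreeAutomatic_general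
    {Q A Γ ι : Type} [Finite Q] [Finite A] [DecidableEq A] (S : CPS Q A Γ) (eps : Γ)
    (L : ι → Language Γ) (hL : ∀ i, (L i).IsRegular) :
    IsTreeAutomatic
      (B := {c : Q × Stack2 A // c ∈ EpsDomain S eps})
      (fun i c₁ c₂ =>
        ReachL S (Sum.elim (fun γ : {γ : Γ // γ ≠ eps} => edgeLang eps γ) L i) c₁.1 c₂.1) :=
  have : Nonempty Γ := ⟨eps⟩
  isTreeAutomatic_reachL S S.q0 (isRegular_domLang eps)
    (Sum.rec (fun γ => isRegular_edgeLang eps γ) hL)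

/-- For a level-2 collapsible pushdown system `S` with `ε ∈ Γ` and
regular languages `L₁,…,L_n`, the expansion of the ε-contraction `G/ε` of the
configuration graph of `S` by the relations `Reach_{L₁},…,Reach_{L_n}` is tree-automatic. -/
theorem epsContraction_with_regular_reachability_isTreeAutomatic
    {Q A Γ : Type} [Fintype Q] [Fintype A] [Fintype Γ] [DecidableEq A]
    (S : CPS Q A Γ) (eps : Γ) (n : ℕ) (L : Fin n → Language Γ)
    (hL : ∀ i, (L i).IsRegular) :
    IsTreeAutomatic
      (B := {c : Q × Stack2 A // c ∈ EpsDomain S eps})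
      (I := {γ : Γ // γ ≠ eps} ⊕ Fin n)
      (fun i c₁ c₂ =>
        match i with
        | Sum.inl γ => ReachL S (edgeLang eps γ.1) c₁.1 c₂.1
        | Sum.inr j => ReachL S (L j) c₁.1 c₂.1) := by
  convert epsContraction_with_regular_reachability_isTreeAutomatic_general S eps L hL with i
  cases i <;> rfl

end CPG
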